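/- arXiv:2203.06625 — 3 statements merged into one kernel-verified Lean document; each statement's English description precedes it below -/
import Mathlib

section
/- Let q be a prime power, n and k integers with 1 < k < n−1, and suppose q ≥ 3 or k ≥ 3. Then every injective map f : C(n,k)_q → G_k(V) such that f(X) and f(Y) are adjacent whenever X, Y ∈ C(n,k)_q are adjacent extends to an automorphism of the Grassmann graph Γ_k(V), and this extension is unique: there is exactly one bijection g : G_k(V) → G_k(V) with (g(X), g(Y) adjacent ⇔ X, Y adjacent) and g(X) = f(X) for all X ∈ C(n,k)_q. -/
/-!
Common definitions: `V = F^n`, coordinate hyperplanes, Grassmannians `G_k(V)`,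
non-degenerate linear `[n,k]_q` codes `C(n,k)_q`, adjacency, stars, tops,
and (maximal) cliques of the graph `Γ(n,k)_q` of non-degenerate codes.
-/

/-- The `i`-th coordinate hyperplane `C_i ⊂ F^n`: the kernel of the `i`-th
coordinate functional. -/
def coordHyp (F : Type*) [Field F] (n : ℕ) (i : Fin n) : Submodule F (Fin n → F) :=
  LinearMap.ker (LinearMap.proj i : (Fin n → F) →ₗ[F] F)

/-- The Grassmannian `G_k(V)`: the set of `k`-dimensional subspaces of `F^n`. -/
def grass (F : Type*) [Field F] (n k : ℕ) : Set (Submodule F (Fin n → F)) :=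
  {X | Module.finrank F ↥X = k}

/-- `C(n,k)_q`: the set of non-degenerate linear `[n,k]` codes, i.e. `k`-dimensional
subspaces of `F^n` not contained in any coordinate hyperplane. -/
def ndCodes (F : Type*) [Field F] (n k : ℕ) : Set (Submodule F (Fin n → F)) :=
  {X | Module.finrank F ↥X = k ∧ ∀ i : Fin n, ¬ X ≤ coordHyp F n i}

/-- Adjacency of `k`-dimensional subspaces: the intersection is `(k-1)`-dimensional. -/
def adjSub (F : Type*) [Field F] (n k : ℕ) (X Y : Submodule F (Fin n → F)) : Prop :=
  Module.finrank F ↥(X ⊓ Y) = k - 1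

/-- The star `S(X) ⊂ G_k(V)` of a `(k-1)`-dimensional subspace `X`: all `k`-dimensional
subspaces containing `X`. -/
def starOf (F : Type*) [Field F] (n k : ℕ) (X : Submodule F (Fin n → F)) :
    Set (Submodule F (Fin n → F)) :=
  {Y | Module.finrank F ↥Y = k ∧ X ≤ Y}

/-- The top `T(Y) ⊂ G_k(V)` of a `(k+1)`-dimensional subspace `Y`: all `k`-dimensional
subspaces of `Y`. -/
def topOf (F : Type*) [Field F] (n k : ℕ) (Y : Submodule F (Fin n → F)) :
    Set (Submodule F (Fin n → F)) :=
  {Z | Module.finrank F ↥Z = k ∧ Z ≤ Y}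

/-- `S^c(X) = S(X) ∩ C(n,k)_q`. -/
def scOf (F : Type*) [Field F] (n k : ℕ) (X : Submodule F (Fin n → F)) :
    Set (Submodule F (Fin n → F)) :=
  starOf F n k X ∩ ndCodes F n k

/-- `T^c(Y) = T(Y) ∩ C(n,k)_q`. -/
def tcOf (F : Type*) [Field F] (n k : ℕ) (Y : Submodule F (Fin n → F)) :
    Set (Submodule F (Fin n → F)) :=
  topOf F n k Y ∩ ndCodes F n k

/-- `c(X)`: the number of coordinate hyperplanes containing the subspace `X`. -/
noncomputable def numHyp (F : Type*) [Field F] (n : ℕ) (X : Submodule F (Fin n → F)) : ℕ :=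
  Set.ncard {i : Fin n | X ≤ coordHyp F n i}

/-- A clique of the graph `Γ(n,k)_q`: a set of non-degenerate `[n,k]` codes that are
pairwise adjacent. -/
def isClique (F : Type*) [Field F] (n k : ℕ) (S : Set (Submodule F (Fin n → F))) : Prop :=
  S ⊆ ndCodes F n k ∧ S.Pairwise (adjSub F n k)

/-- A maximal clique of `Γ(n,k)_q`: a clique not properly contained in another clique. -/
def isMaxClique (F : Type*) [Field F] (n k : ℕ) (S : Set (Submodule F (Fin n → F))) : Prop :=
  isClique F n k S ∧ ∀ T, isClique F n k T → S ⊆ T → T = S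

/-- `[m]_q = q^{m-1} + ⋯ + q + 1 = (q^m - 1)/(q - 1)`. -/
def gaussNum (q m : ℕ) : ℕ := ∑ i ∈ Finset.range m, q ^ i

/-!
Non-degenerate codes satisfy a version of Chow's theorem. A counting argument shows that `f` sends
the codes through a common non-degenerate hyperplane either into a star or, when `2k = n`, into a
top; composing with orthogonal complementation removes the second alternative. Intersecting images
then extends `f` to a monotone map on all non-degenerate subspaces of dimension at most `k`.

If `q ≥ 3`, this map determines images of points through the many vectors without zero coordinates,
and the fundamental theorem of projective geometry applies. If `q = 2`, there is only one such
vector, and the image of a vector `v` is instead found as a common point of the images of the lines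
through `v`; here `k ≥ 3` is needed. Either way `f` is induced by a lattice automorphism on enough
codes, and a code is determined by the codes adjacent to it. The same rigidity gives uniqueness.
-/

section

open Module Submodule
/-! ### Adjacent subspaces -/

section Adjacency

variable {F V : Type*} [DivisionRing F] [AddCommGroup V] [Module F V]
  {X Y A U : Submodule F V}

/-- Adjacency of subspaces as vertices of the Grassmann graph of their common dimension. The
positive form `dim (X ⊓ Y) + 1 = dim X` avoids truncated subtraction. -/
def IsAdjacent (X Y : Submodule F V) : Prop :=
  finrank F X = finrank F Y ∧ finrank F ↥(X ⊓ Y) + 1 = finrank F X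

namespace IsAdjacent

lemma symm (h : IsAdjacent X Y) : IsAdjacent Y X :=
  ⟨h.1.symm, by rw [inf_comm, h.2, h.1]⟩

lemma ne (h : IsAdjacent X Y) : X ≠ Y := by
  rintro rfl
  have := h.2
  rw [inf_idem] at this
  omega

end IsAdjacent

variable [FiniteDimensional F V]

lemma not_le_of_finrank_lt (h : finrank F X < finrank F Y) : ¬ Y ≤ X :=
  fun hYX => (finrank_mono hYX).not_gt h

lemma exists_mem_notMem_of_finrank_lt (h : finrank F X < finrank F Y) : ∃ v ∈ Y, v ∉ X :=
  SetLike.not_le_iff_exists.1 (not_le_of_finrank_lt h)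

lemma finrank_sup_span_singleton_le (X : Submodule F V) (v : V) :
    finrank F ↥(X ⊔ F ∙ v) ≤ finrank F X + 1 := by
  by_cases hv : v ∈ X
  · rw [sup_eq_left.2 ((span_singleton_le_iff_mem v X).2 hv)]
    omega
  · rw [finrank_sup_span_singleton hv]

lemma exists_le_le_finrank_eq (hXY : X ≤ Y) {m : ℕ} (hX : finrank F X ≤ m)
    (hY : m ≤ finrank F Y) : ∃ Z, X ≤ Z ∧ Z ≤ Y ∧ finrank F Z = m := by
  induction m, hX using Nat.le_induction with
  | base => exact ⟨X, le_rfl, hXY, rfl⟩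
  | succ m _ ih =>
    obtain ⟨Z, hXZ, hZY, hZ⟩ := ih (by omega)
    obtain ⟨v, hvY, hvZ⟩ := exists_mem_notMem_of_finrank_lt (X := Z) (Y := Y) (by omega)
    exact ⟨Z ⊔ F ∙ v, le_sup_of_le_left hXZ,
      sup_le hZY ((span_singleton_le_iff_mem v Y).2 hvY),
      by rw [finrank_sup_span_singleton hvZ, hZ]⟩

lemma exists_hyperplane_mem {x : V} (hx : x ∈ X) (hX : 2 ≤ finrank F X) :
    ∃ Z ≤ X, x ∈ Z ∧ finrank F Z + 1 = finrank F X := by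
  have hspan : finrank F ↥(F ∙ x) ≤ 1 := by
    have h := finrank_sup_span_singleton_le (⊥ : Submodule F V) x
    rwa [bot_sup_eq, finrank_bot] at h
  obtain ⟨Z, hxZ, hZX, hZ⟩ := exists_le_le_finrank_eq ((span_singleton_le_iff_mem x X).2 hx)
    (m := finrank F X - 1) (by omega) (by omega)
  exact ⟨Z, hZX, hxZ (mem_span_singleton_self x), by omega⟩

namespace IsAdjacent

lemma finrank_sup (h : IsAdjacent X Y) : finrank F ↥(X ⊔ Y) = finrank F X + 1 := by
  have := finrank_sup_add_finrank_inf_eq X Y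
  have := h.1
  have := h.2
  omega

lemma finrank_inf_lt (h : finrank F X = finrank F Y) (hne : X ≠ Y) :
    finrank F ↥(X ⊓ Y) < finrank F X :=
  finrank_lt_finrank_of_lt <| lt_of_le_of_ne inf_le_left fun hXY =>
    hne (eq_of_le_of_finrank_le (inf_eq_left.1 hXY) h.ge)

lemma of_le (h : finrank F X = finrank F Y) (hne : X ≠ Y) (hX : X ≤ U) (hY : Y ≤ U)
    (hU : finrank F U ≤ finrank F X + 1) : IsAdjacent X Y := by
  have := finrank_sup_add_finrank_inf_eq X Y
  have := finrank_mono (sup_le hX hY)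
  have := finrank_inf_lt h hne
  exact ⟨h, by omega⟩

lemma of_ge (h : finrank F X = finrank F Y) (hne : X ≠ Y) (hX : A ≤ X) (hY : A ≤ Y)
    (hA : finrank F X ≤ finrank F A + 1) : IsAdjacent X Y := by
  have := finrank_mono (le_inf hX hY)
  have := finrank_inf_lt h hne
  exact ⟨h, by omega⟩

lemma inf_eq (h : IsAdjacent X Y) (hX : A ≤ X) (hY : A ≤ Y)
    (hA : finrank F X ≤ finrank F A + 1) : X ⊓ Y = A :=
  (eq_of_le_of_finrank_le (le_inf hX hY) (by have := h.2; omega)).symm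

lemma sup_eq (h : IsAdjacent X Y) (hX : X ≤ U) (hY : Y ≤ U)
    (hU : finrank F U ≤ finrank F X + 1) : X ⊔ Y = U :=
  eq_of_le_of_finrank_le (sup_le hX hY) (by rw [h.finrank_sup]; omega)

end IsAdjacent

lemma sup_eq_of_hyperplanes (hX : X ≤ U) (hY : Y ≤ U) (hXU : finrank F X + 1 = finrank F U)
    (hXY : finrank F X = finrank F Y) (hne : X ≠ Y) : X ⊔ Y = U :=
  (IsAdjacent.of_le hXY hne hX hY hXU.ge).sup_eq hX hY hXU.ge

lemma IsAdjacent.inf_le_or_le_sup {X₁ X₂ X₃ : Submodule F V} (h₁₂ : IsAdjacent X₁ X₂)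
    (h₁₃ : IsAdjacent X₁ X₃) (h₂₃ : IsAdjacent X₂ X₃) : X₁ ⊓ X₂ ≤ X₃ ∨ X₃ ≤ X₁ ⊔ X₂ := by
  have := h₁₂.1
  have := h₁₂.2
  have := h₁₃.2
  have := h₂₃.1
  have := h₂₃.2
  by_cases hne : X₁ ⊓ X₃ = X₂ ⊓ X₃
  · left
    have hle : X₁ ⊓ X₃ ≤ X₁ ⊓ X₂ := le_inf inf_le_left (hne ▸ inf_le_left)
    rw [← eq_of_le_of_finrank_le hle (by omega)]
    exact inf_le_right
  · right
    rw [← sup_eq_of_hyperplanes (U := X₃) inf_le_right inf_le_right (by omega) (by omega) hne]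
    exact sup_le_sup inf_le_left inf_le_left

lemma le_or_le_of_pairwise_isAdjacent {C : Set (Submodule F V)} (hC : C.Pairwise IsAdjacent)
    {X₁ X₂ : Submodule F V} (h₁ : X₁ ∈ C) (h₂ : X₂ ∈ C) (hne : X₁ ≠ X₂) :
    (∀ X ∈ C, X₁ ⊓ X₂ ≤ X) ∨ ∀ X ∈ C, X ≤ X₁ ⊔ X₂ := by
  by_contra! ⟨⟨X₃, h₃, hX₃⟩, ⟨X₄, h₄, hX₄⟩⟩
  have a₁₂ := hC h₁ h₂ hne
  have a₁₃ := hC h₁ h₃ fun h => hX₃ (h ▸ inf_le_left)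
  have a₂₃ := hC h₂ h₃ fun h => hX₃ (h ▸ inf_le_right)
  have a₁₄ := hC h₁ h₄ fun h => hX₄ (h ▸ le_sup_left)
  have a₂₄ := hC h₂ h₄ fun h => hX₄ (h ▸ le_sup_right)
  have hX₃sup : X₃ ≤ X₁ ⊔ X₂ := (a₁₂.inf_le_or_le_sup a₁₃ a₂₃).resolve_left hX₃
  have hinfX₄ : X₁ ⊓ X₂ ≤ X₄ := (a₁₂.inf_le_or_le_sup a₁₄ a₂₄).resolve_right hX₄
  have a₃₄ := hC h₃ h₄ fun h => hX₄ (h ▸ hX₃sup)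
  have hinfX₄' : X₁ ⊓ X₃ ≤ X₄ := (a₁₃.inf_le_or_le_sup a₁₄ a₃₄).resolve_right fun h =>
    hX₄ (h.trans (sup_le le_sup_left hX₃sup))
  have hX₁ : X₁ ⊓ X₂ ⊔ X₁ ⊓ X₃ = X₁ :=
    sup_eq_of_hyperplanes inf_le_left inf_le_left a₁₂.2
      (by have := a₁₂.2; have := a₁₃.2; omega) fun h => hX₃ (h ▸ inf_le_right)
  exact a₁₄.ne (eq_of_le_of_finrank_le (hX₁ ▸ sup_le hinfX₄ hinfX₄') a₁₄.1.ge)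

end Adjacency

section OrderIso

variable {F V : Type*} [DivisionRing F] [AddCommGroup V] [Module F V] [FiniteDimensional F V]

lemma finrank_le_finrank_of_strictMono {φ : Submodule F V → Submodule F V} (hφ : StrictMono φ)
    (X : Submodule F V) : finrank F X ≤ finrank F (φ X) := by
  induction hm : finrank F X generalizing X with
  | zero => exact Nat.zero_le _
  | succ m ih =>
    obtain ⟨Z, -, hZX, hZ⟩ := exists_le_le_finrank_eq (bot_le : ⊥ ≤ X) (m := m)
      (by rw [finrank_bot]; omega) (by omega)
    have hlt : Z < X := lt_of_le_of_ne hZX (by rintro rfl; omega)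
    exact (ih Z hZ).trans_lt (finrank_lt_finrank_of_lt (hφ hlt))

lemma finrank_orderIso (G : Submodule F V ≃o Submodule F V) (X : Submodule F V) :
    finrank F (G X) = finrank F X := by
  apply le_antisymm
  · have h := finrank_le_finrank_of_strictMono G.symm.strictMono (G X)
    rwa [G.symm_apply_apply] at h
  · exact finrank_le_finrank_of_strictMono G.strictMono X

lemma isAdjacent_orderIso (G : Submodule F V ≃o Submodule F V) {X Y : Submodule F V} :
    IsAdjacent (G X) (G Y) ↔ IsAdjacent X Y := by
  rw [IsAdjacent, IsAdjacent, ← OrderIso.map_inf, finrank_orderIso, finrank_orderIso,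
    finrank_orderIso]

lemma orderIso_eq_of_span_singleton_le (G : Submodule F V ≃o Submodule F V) {X Y : Submodule F V}
    (hXY : finrank F X = finrank F Y) (h : ∀ x ∈ X, x ≠ 0 → G (F ∙ x) ≤ Y) : G X = Y := by
  refine eq_of_le_of_finrank_le (G.le_symm_apply.1 fun x hx => ?_)
    (by rw [finrank_orderIso, hXY])
  obtain rfl | hx0 := eq_or_ne x 0
  · exact zero_mem _
  · exact (span_singleton_le_iff_mem x _).1 (G.le_symm_apply.2 (h x hx hx0))

end OrderIso

section Counting

variable {F V : Type*} [Field F] [AddCommGroup V] [Module F V] {A B : Submodule F V}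

/-- The subspaces of `B` that contain `A` as a hyperplane, i.e. the points of the projective space
of `B ⧸ A`. -/
def covers (A B : Submodule F V) : Set (Submodule F V) :=
  {U | A ≤ U ∧ U ≤ B ∧ finrank F U = finrank F A + 1}

lemma ncard_points [Finite F] (C : Submodule F V) :
    {P : Submodule F V | P ≤ C ∧ finrank F P = 1}.ncard = gaussNum (Nat.card F) (finrank F C) := by
  have himage : {P : Submodule F V | P ≤ C ∧ finrank F P = 1}
      = map C.subtype '' {P | finrank F P = 1} := by
    ext P
    constructor
    · rintro ⟨hPC, hP⟩
      have hmap : map C.subtype (comap C.subtype P) = P := by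
        rwa [map_comap_subtype, inf_eq_right]
      exact ⟨comap C.subtype P, by rwa [Set.mem_ofPred_eq, ← finrank_map_subtype_eq, hmap], hmap⟩
    · rintro ⟨P, hP, rfl⟩
      exact ⟨map_subtype_le C P, by rwa [finrank_map_subtype_eq]⟩
  rw [himage, Set.ncard_image_of_injective _ (map_injective_of_injective C.injective_subtype),
    ← Nat.card_coe_set_eq]
  exact (Nat.card_congr (Projectivization.equivSubmodule F C)).symm.trans
    (Projectivization.card_of_finrank F C rfl)

variable [FiniteDimensional F V]

lemma ncard_covers [Finite F] (hAB : A ≤ B) :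
    (covers A B).ncard = gaussNum (Nat.card F) (finrank F B - finrank F A) := by
  obtain ⟨C, hAC, rfl⟩ := IsModularLattice.exists_disjoint_and_sup_eq hAB
  have finrank_sup_of_le {P : Submodule F V} (hP : P ≤ C) :
      finrank F ↥(A ⊔ P) = finrank F A + finrank F P := by
    have h := finrank_sup_add_finrank_inf_eq A P
    rwa [(hAC.mono_right hP).eq_bot, finrank_bot, add_zero] at h
  have sup_inf_of_le {P : Submodule F V} (hP : P ≤ C) : (A ⊔ P) ⊓ C = P := by
    rw [sup_comm, sup_inf_assoc_of_le A hP, hAC.eq_bot, sup_bot_eq]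
  have hbij : Set.BijOn (A ⊔ ·) {P | P ≤ C ∧ finrank F P = 1} (covers A (A ⊔ C)) := by
    refine ⟨fun P ⟨hPC, hP⟩ =>
      ⟨le_sup_left, sup_le_sup_left hPC A, by rw [finrank_sup_of_le hPC, hP]⟩,
      fun P hP Q hQ h => ?_, fun U ⟨hAU, hUC, hU⟩ => ?_⟩
    · rw [← sup_inf_of_le hP.1, ← sup_inf_of_le hQ.1]
      exact congrArg (· ⊓ C) h
    · have hsup : A ⊔ C ⊓ U = U := by rw [← sup_inf_assoc_of_le C hAU, inf_eq_right.2 hUC]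
      have h := finrank_sup_of_le (inf_le_left : C ⊓ U ≤ C)
      rw [hsup] at h
      exact ⟨C ⊓ U, ⟨inf_le_left, by omega⟩, hsup⟩
  rw [← hbij.ncard_eq, ncard_points, finrank_sup_of_le le_rfl, Nat.add_sub_cancel_left]

lemma surjOn_covers [Finite F] {A' B' : Submodule F V} (hAB : A ≤ B) (hAB' : A' ≤ B')
    (hd : finrank F B - finrank F A = finrank F B' - finrank F A')
    {φ : Submodule F V → Submodule F V} (hφ : Set.MapsTo φ (covers A B) (covers A' B'))
    (hinj : Set.InjOn φ (covers A B)) : Set.SurjOn φ (covers A B) (covers A' B') := by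
  have : Finite V := Module.finite_of_finite F
  have h : φ '' covers A B = covers A' B' :=
    Set.eq_of_subset_of_ncard_le hφ.image_subset
      (by rw [hinj.ncard_image, ncard_covers hAB, ncard_covers hAB', hd]) (Set.toFinite _)
  exact h.ge

lemma gaussNum_strictMono {q : ℕ} (hq : 0 < q) : StrictMono (gaussNum q) :=
  strictMono_nat_of_lt_succ fun m => by
    rw [gaussNum, gaussNum, Finset.sum_range_succ]
    exact Nat.lt_add_of_pos_right (pow_pos hq m)

end Counting

section Duality

variable {F : Type*} [Field F] {n : ℕ} {X Y : Submodule F (Fin n → F)}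

/-- The orthogonal complement with respect to the standard dot product of `F^n`; it induces the
duality between the Grassmann graphs of dimensions `k` and `n - k`. -/
noncomputable def dotOrthogonal (X : Submodule F (Fin n → F)) : Submodule F (Fin n → F) :=
  LinearMap.BilinForm.orthogonal (dotProductBilin F F) X

lemma isRefl_dotProductBilin :
    LinearMap.IsRefl (dotProductBilin F F : LinearMap.BilinForm F (Fin n → F)) :=
  fun x y h => (dotProduct_comm y x).trans h

lemma nondegenerate_dotProductBilin :
    LinearMap.BilinForm.Nondegenerate
      (dotProductBilin F F : LinearMap.BilinForm F (Fin n → F)) :=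
  (LinearMap.IsRefl.nondegenerate_iff_separatingLeft isRefl_dotProductBilin).2 dotProduct_eq_zero

lemma dotOrthogonal_dotOrthogonal (X : Submodule F (Fin n → F)) :
    dotOrthogonal (dotOrthogonal X) = X :=
  LinearMap.BilinForm.orthogonal_orthogonal (B := dotProductBilin F F)
    nondegenerate_dotProductBilin isRefl_dotProductBilin X

lemma dotOrthogonal_injective : Function.Injective (dotOrthogonal (F := F) (n := n)) :=
  Function.LeftInverse.injective dotOrthogonal_dotOrthogonal

lemma finrank_dotOrthogonal (X : Submodule F (Fin n → F)) :
    finrank F (dotOrthogonal X) = n - finrank F X := by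
  rw [dotOrthogonal, LinearMap.BilinForm.finrank_orthogonal nondegenerate_dotProductBilin,
    finrank_fin_fun]

lemma dotOrthogonal_le_dotOrthogonal : dotOrthogonal X ≤ dotOrthogonal Y ↔ Y ≤ X := by
  have antitone {X Y : Submodule F (Fin n → F)} (h : X ≤ Y) :
      dotOrthogonal Y ≤ dotOrthogonal X := LinearMap.BilinForm.orthogonal_le h
  refine ⟨fun h => ?_, antitone⟩
  simpa only [dotOrthogonal_dotOrthogonal] using antitone h

lemma finrank_le_card (X : Submodule F (Fin n → F)) : finrank F X ≤ n :=
  (finrank_le X).trans_eq (finrank_fin_fun F)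

lemma IsAdjacent.dotOrthogonal (h : IsAdjacent X Y) :
    IsAdjacent (dotOrthogonal X) (dotOrthogonal Y) := by
  have := h.finrank_sup
  have := finrank_le_card (X ⊔ Y)
  refine IsAdjacent.of_ge (A := _root_.dotOrthogonal (X ⊔ Y)) ?_
    (dotOrthogonal_injective.ne h.ne) (dotOrthogonal_le_dotOrthogonal.2 le_sup_left)
    (dotOrthogonal_le_dotOrthogonal.2 le_sup_right) ?_
  · rw [finrank_dotOrthogonal, finrank_dotOrthogonal, h.1]
  · rw [finrank_dotOrthogonal, finrank_dotOrthogonal]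
    omega

lemma isAdjacent_dotOrthogonal :
    IsAdjacent (dotOrthogonal X) (dotOrthogonal Y) ↔ IsAdjacent X Y :=
  ⟨fun h => by simpa only [dotOrthogonal_dotOrthogonal] using h.dotOrthogonal,
    IsAdjacent.dotOrthogonal⟩

lemma ncard_hyperplanes [Finite F] {k : ℕ} (hY : finrank F Y = k + 1) :
    {X | X ≤ Y ∧ finrank F X = k}.ncard = gaussNum (Nat.card F) (k + 1) := by
  have hn := finrank_le_card Y
  have hbij : Set.BijOn dotOrthogonal {X | X ≤ Y ∧ finrank F X = k}
      (covers (dotOrthogonal Y) ⊤) := by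
    refine ⟨fun X ⟨hXY, hX⟩ => ⟨dotOrthogonal_le_dotOrthogonal.2 hXY, le_top, ?_⟩,
      dotOrthogonal_injective.injOn, fun U ⟨hYU, _, hU⟩ => ?_⟩
    · rw [finrank_dotOrthogonal, finrank_dotOrthogonal]
      omega
    · refine ⟨dotOrthogonal U, ⟨?_, ?_⟩, dotOrthogonal_dotOrthogonal U⟩
      · rwa [← dotOrthogonal_le_dotOrthogonal, dotOrthogonal_dotOrthogonal]
      · rw [finrank_dotOrthogonal, hU, finrank_dotOrthogonal]
        omega
  rw [hbij.ncard_eq, ncard_covers le_top, finrank_top, finrank_fin_fun, finrank_dotOrthogonal]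
  congr 1
  omega

end Duality
/-! ### Collineations extend to the subspace lattice -/

section Collineation

variable {F V : Type*} [Field F] [AddCommGroup V] [Module F V]

lemma exists_point_eq_of_injective [Finite F] [FiniteDimensional F V]
    {g : Submodule F V → Submodule F V}
    (hg : ∀ P : Submodule F V, finrank F P = 1 → finrank F (g P) = 1)
    (hinj : ∀ P Q : Submodule F V, finrank F P = 1 → finrank F Q = 1 → g P = g Q → P = Q)
    {B B' W : Submodule F V} (hB : finrank F B' ≤ finrank F B)
    (hBB' : ∀ P ≤ B, finrank F P = 1 → g P ≤ B') (hWB' : W ≤ B') (hW : finrank F W = 1) :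
    ∃ P ≤ B, finrank F P = 1 ∧ g P = W := by
  have : Finite V := Module.finite_of_finite F
  have himage : g '' {P | P ≤ B ∧ finrank F P = 1} = {P | P ≤ B' ∧ finrank F P = 1} := by
    refine Set.eq_of_subset_of_ncard_le ?_ ?_ (Set.toFinite _)
    · rintro _ ⟨P, ⟨hPB, hP⟩, rfl⟩
      exact ⟨hBB' P hPB hP, hg P hP⟩
    · rw [Set.InjOn.ncard_image fun P hP Q hQ h => hinj P Q hP.2 hQ.2 h, ncard_points,
        ncard_points]
      exact (gaussNum_strictMono Nat.card_pos).monotone hB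
  obtain ⟨P, ⟨hPB, hP⟩, rfl⟩ := himage.ge ⟨hWB', hW⟩
  exact ⟨P, hPB, hP, rfl⟩

/-- A map of points (one-dimensional subspaces) of the projective space of `V` that is injective
and sends collinear points to collinear points. Values on other subspaces are irrelevant. -/
structure IsCollineation (g : Submodule F V → Submodule F V) : Prop where
  finrank_eq : ∀ P : Submodule F V, finrank F P = 1 → finrank F (g P) = 1
  inj : ∀ P Q : Submodule F V, finrank F P = 1 → finrank F Q = 1 → g P = g Q → P = Q
  collinear : ∀ L : Submodule F V, finrank F L = 2 →
    ∃ L' : Submodule F V, finrank F L' ≤ 2 ∧ ∀ P ≤ L, finrank F P = 1 → g P ≤ L'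

variable [FiniteDimensional F V] {g : Submodule F V → Submodule F V} {P Q X : Submodule F V}

namespace IsCollineation

lemma exists_point_mem_of_mem_sup [Finite F] (hg : IsCollineation g) (hP : finrank F P = 1)
    (hQ : finrank F Q = 1) {u : V} (hu : u ∈ g P ⊔ g Q) (hu0 : u ≠ 0) :
    ∃ R ≤ P ⊔ Q, finrank F R = 1 ∧ u ∈ g R := by
  by_cases hPQ : P = Q
  · subst hPQ
    exact ⟨P, le_sup_left, hP, by rwa [sup_idem] at hu⟩
  have hadj : IsAdjacent P Q :=
    IsAdjacent.of_ge (by omega) hPQ bot_le bot_le (by rw [finrank_bot]; omega)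
  have hPQ2 : finrank F ↥(P ⊔ Q) = 2 := by rw [hadj.finrank_sup, hP]
  obtain ⟨L', hL', hgL'⟩ := hg.collinear _ hPQ2
  have huL' : F ∙ u ≤ L' := (span_singleton_le_iff_mem u L').2 <|
    sup_le (hgL' P le_sup_left hP) (hgL' Q le_sup_right hQ) hu
  obtain ⟨R, hR, hR1, hgR⟩ :=
    exists_point_eq_of_injective hg.finrank_eq hg.inj (hL'.trans hPQ2.ge) hgL' huL'
      (finrank_span_singleton hu0)
  exact ⟨R, hR, hR1, hgR ▸ mem_span_singleton_self u⟩

lemma exists_mem_iff [Finite F] (hg : IsCollineation g) (X : Submodule F V) :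
    ∃ Y : Submodule F V, ∀ v, v ∈ Y ↔ v = 0 ∨ ∃ P ≤ X, finrank F P = 1 ∧ v ∈ g P := by
  refine ⟨{ carrier := {v | v = 0 ∨ ∃ P ≤ X, finrank F P = 1 ∧ v ∈ g P}
            zero_mem' := Or.inl rfl
            add_mem' := ?_
            smul_mem' := ?_ }, fun v => Iff.rfl⟩
  · rintro a b (rfl | ⟨P, hPX, hP, ha⟩) (rfl | ⟨Q, hQX, hQ, hb⟩)
    · exact Or.inl (add_zero 0)
    · exact Or.inr ⟨Q, hQX, hQ, by rwa [zero_add]⟩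
    · exact Or.inr ⟨P, hPX, hP, by rwa [add_zero]⟩
    · by_cases hab : a + b = 0
      · exact Or.inl hab
      obtain ⟨R, hR, hR1, habR⟩ :=
        hg.exists_point_mem_of_mem_sup hP hQ (add_mem_sup ha hb) hab
      exact Or.inr ⟨R, hR.trans (sup_le hPX hQX), hR1, habR⟩
  · rintro c a (rfl | ⟨P, hPX, hP, ha⟩)
    · exact Or.inl (smul_zero c)
    · exact Or.inr ⟨P, hPX, hP, (g P).smul_mem c ha⟩

lemma le_iff_of_mem_iff (hg : IsCollineation g) {Y : Submodule F V}
    (hY : ∀ v, v ∈ Y ↔ v = 0 ∨ ∃ P ≤ X, finrank F P = 1 ∧ v ∈ g P) (hP : finrank F P = 1) :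
    g P ≤ Y ↔ P ≤ X := by
  refine ⟨fun h => ?_, fun h v hv => (hY v).2 (Or.inr ⟨P, h, hP, hv⟩)⟩
  obtain ⟨v, hvP, hv0⟩ := exists_mem_notMem_of_finrank_lt (X := (⊥ : Submodule F V)) (Y := g P)
    (by rw [finrank_bot, hg.finrank_eq P hP]; exact Nat.zero_lt_one)
  obtain rfl | ⟨Q, hQX, hQ, hvQ⟩ := (hY v).1 (h hvP)
  · exact absurd (zero_mem _) hv0
  · rw [mem_bot] at hv0
    have hPQ : g P = g Q :=
      (eq_span_singleton_of_mem_of_finrank_eq_one (hg.finrank_eq P hP) hvP hv0).trans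
        (eq_span_singleton_of_mem_of_finrank_eq_one (hg.finrank_eq Q hQ) hvQ hv0).symm
    exact hg.inj P Q hP hQ hPQ ▸ hQX

theorem exists_orderIso [Finite F] (hg : IsCollineation g) :
    ∃ G : Submodule F V ≃o Submodule F V, ∀ P : Submodule F V, finrank F P = 1 → G P = g P := by
  choose G₀ hG₀ using hg.exists_mem_iff
  have hpoint {P X : Submodule F V} (hP : finrank F P = 1) : g P ≤ G₀ X ↔ P ≤ X :=
    hg.le_iff_of_mem_iff (hG₀ X) hP
  have hle (X Y : Submodule F V) : G₀ X ≤ G₀ Y ↔ X ≤ Y := by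
    refine ⟨fun h x hx => ?_, fun h v hv => (hG₀ Y v).2 <| ((hG₀ X v).1 hv).imp_right
      fun ⟨P, hPX, hP⟩ => ⟨P, hPX.trans h, hP⟩⟩
    obtain rfl | hx0 := eq_or_ne x 0
    · exact Y.zero_mem
    have hx1 : finrank F ↥(F ∙ x) = 1 := finrank_span_singleton hx0
    rw [← span_singleton_le_iff_mem] at hx ⊢
    exact (hpoint hx1).1 (((hpoint hx1).2 hx).trans h)
  have : Finite V := Module.finite_of_finite F
  let E : Submodule F V ↪o Submodule F V := OrderEmbedding.ofMapLEIff G₀ hle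
  let G := RelIso.ofSurjective E (Finite.surjective_of_injective E.injective)
  refine ⟨G, fun P hP => (eq_of_le_of_finrank_le ((hpoint hP).2 le_rfl) ?_).symm⟩
  exact (finrank_orderIso G P).trans (hP.trans (hg.finrank_eq P hP).symm) |>.le

end IsCollineation

end Collineation

/-! ### Embeddings of the graph of non-degenerate codes -/

section Codes

variable {F : Type*} [Field F] {n : ℕ} {X Y Z : Submodule F (Fin n → F)}

/-- Non-degeneracy of a linear code of arbitrary dimension: no coordinate vanishes identically. -/
def IsNondegenerate (X : Submodule F (Fin n → F)) : Prop :=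
  ∀ i, ¬ X ≤ coordHyp F n i

lemma IsNondegenerate.mono (hX : IsNondegenerate X) (hXY : X ≤ Y) : IsNondegenerate Y :=
  fun i hi => hX i (hXY.trans hi)

lemma isNondegenerate_iff : IsNondegenerate X ↔ ∀ i, ∃ v ∈ X, v i ≠ 0 :=
  forall_congr' fun _ => SetLike.not_le_iff_exists

lemma isNondegenerate_of_mem {v : Fin n → F} (hv : ∀ i, v i ≠ 0) (hvX : v ∈ X) :
    IsNondegenerate X :=
  isNondegenerate_iff.2 fun i => ⟨v, hvX, hv i⟩

lemma isNondegenerate_of_one_mem (hX : 1 ∈ X) : IsNondegenerate X :=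
  isNondegenerate_of_mem (fun _ => one_ne_zero) hX

/-- An injective adjacency-preserving map from the non-degenerate `[n,k]` codes to the Grassmann
graph `Γ_k(V)`. -/
structure IsCodeEmbedding (k : ℕ) (f : Submodule F (Fin n → F) → Submodule F (Fin n → F)) :
    Prop where
  finrank_eq : ∀ {X : Submodule F (Fin n → F)}, IsNondegenerate X → finrank F X = k →
    finrank F (f X) = k
  inj : ∀ {X Y : Submodule F (Fin n → F)}, IsNondegenerate X → IsNondegenerate Y →
    finrank F X = k → finrank F Y = k → f X = f Y → X = Y
  adj : ∀ {X Y : Submodule F (Fin n → F)}, IsNondegenerate X → IsNondegenerate Y →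
    finrank F X = k → IsAdjacent X Y → IsAdjacent (f X) (f Y)

/-- The images of the `k`-dimensional `X ⊇ Z` share a `(k-1)`-dimensional subspace: for
`dim Z = k - 1`, the star of `Z` goes into a star. -/
def MapsStarToStar (k : ℕ) (f : Submodule F (Fin n → F) → Submodule F (Fin n → F))
    (Z : Submodule F (Fin n → F)) : Prop :=
  ∃ A : Submodule F (Fin n → F), finrank F A + 1 = k ∧
    ∀ X : Submodule F (Fin n → F), Z ≤ X → finrank F X = k → A ≤ f X

/-- The images of the `k`-dimensional `X ⊇ Z` lie in a common `(k+1)`-dimensional subspace: for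
`dim Z = k - 1`, the star of `Z` goes into a top. -/
def MapsStarToTop (k : ℕ) (f : Submodule F (Fin n → F) → Submodule F (Fin n → F))
    (Z : Submodule F (Fin n → F)) : Prop :=
  ∃ W : Submodule F (Fin n → F), finrank F W = k + 1 ∧
    ∀ X : Submodule F (Fin n → F), Z ≤ X → finrank F X = k → f X ≤ W

/-- The map sends the star of every non-degenerate `(k-1)`-dimensional subspace into a star. -/
def PreservesStars (k : ℕ) (f : Submodule F (Fin n → F) → Submodule F (Fin n → F)) : Prop :=
  ∀ Z : Submodule F (Fin n → F), IsNondegenerate Z → finrank F Z + 1 = k → MapsStarToStar k f Z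

lemma exists_isAdjacent_inf_eq (hZ : finrank F Z + 2 ≤ n) :
    ∃ X Y : Submodule F (Fin n → F),
      IsAdjacent X Y ∧ finrank F X = finrank F Z + 1 ∧ X ⊓ Y = Z := by
  obtain ⟨v, -, hv⟩ := exists_mem_notMem_of_finrank_lt (X := Z) (Y := ⊤)
    (by rw [finrank_top, finrank_fin_fun]; omega)
  have hZv := finrank_sup_span_singleton hv
  obtain ⟨w, -, hw⟩ := exists_mem_notMem_of_finrank_lt (X := Z ⊔ F ∙ v) (Y := ⊤)
    (by rw [finrank_top, finrank_fin_fun]; omega)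
  have hZw := finrank_sup_span_singleton fun h => hw (mem_sup_left (T := F ∙ v) h)
  have hne : Z ⊔ F ∙ v ≠ Z ⊔ F ∙ w := fun h =>
    hw (h ▸ mem_sup_right (mem_span_singleton_self w))
  have hadj := IsAdjacent.of_ge (A := Z) (by omega) hne le_sup_left le_sup_left hZv.le
  exact ⟨_, _, hadj, hZv, hadj.inf_eq le_sup_left le_sup_left hZv.le⟩

end Codes

/-! ### Descent to lower dimensions -/

section Descent

variable {F : Type*} [Field F] {n j k : ℕ} {X Y Z A : Submodule F (Fin n → F)}
  {f Φ : Submodule F (Fin n → F) → Submodule F (Fin n → F)}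

/-- Extends a map of `k`-dimensional subspaces to lower dimensions: `Z` goes to the intersection
of the images of all `k`-dimensional subspaces containing it. -/
def infExtension (k : ℕ) (f : Submodule F (Fin n → F) → Submodule F (Fin n → F))
    (Z : Submodule F (Fin n → F)) : Submodule F (Fin n → F) :=
  ⨅ X, ⨅ (_ : Z ≤ X ∧ finrank F X = k), f X

lemma le_infExtension :
    A ≤ infExtension k f Z ↔ ∀ X : Submodule F (Fin n → F), Z ≤ X → finrank F X = k → A ≤ f X := by
  simp only [infExtension, le_iInf_iff, and_imp]

lemma infExtension_mono : Monotone (infExtension k f) := fun _ _ hZZ' =>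
  le_infExtension.2 fun X hX => le_infExtension.1 le_rfl X (hZZ'.trans hX)

lemma infExtension_eq (hX : finrank F X = k) : infExtension k f X = f X :=
  le_antisymm (le_infExtension.1 le_rfl X le_rfl hX) <|
    le_infExtension.2 fun _ hXY hY => (congrArg f
      (eq_of_le_of_finrank_le hXY (hY.trans hX.symm).le)).le

lemma le_infExtension_of_covers (hZ : finrank F Z < k)
    (h : ∀ Y : Submodule F (Fin n → F), Z ≤ Y → finrank F Y = finrank F Z + 1 →
      A ≤ infExtension k f Y) :
    A ≤ infExtension k f Z := by
  refine le_infExtension.2 fun X hZX hX => ?_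
  obtain ⟨Y, hZY, hYX, hY⟩ := exists_le_le_finrank_eq hZX (Nat.le_succ _) (hX.symm ▸ hZ)
  exact le_infExtension.1 (h Y hZY hY) X hYX hX

lemma finrank_le_of_covers (hmono : Monotone Φ) (hΦ : IsCodeEmbedding (j + 1) Φ)
    (hZ : IsNondegenerate Z) (hZj : finrank F Z = j) (hj : j + 2 ≤ n) :
    finrank F (Φ Z) ≤ j := by
  obtain ⟨X, Y, hXY, hX, rfl⟩ := exists_isAdjacent_inf_eq (Z := Z) (by omega)
  have hXn := hZ.mono inf_le_left
  have hadj := (hΦ.adj hXn (hZ.mono inf_le_right) (by omega) hXY).2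
  rw [hΦ.finrank_eq hXn (by omega)] at hadj
  have := finrank_mono (le_inf (hmono (inf_le_left : X ⊓ Y ≤ X)) (hmono inf_le_right))
  omega

lemma surjOn_covers_of_isCodeEmbedding [Finite F] (hmono : Monotone Φ)
    (hΦ : IsCodeEmbedding (finrank F Z + 1) Φ) (hZ : IsNondegenerate Z)
    (hΦZ : finrank F (Φ Z) = finrank F Z) :
    Set.SurjOn Φ (covers Z ⊤) (covers (Φ Z) ⊤) := by
  refine surjOn_covers le_top le_top (by rw [hΦZ]) (fun Y hY => ⟨hmono hY.1, le_top, ?_⟩)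
    fun Y hY Y' hY' => hΦ.inj (hZ.mono hY.1) (hZ.mono hY'.1) hY.2.2 hY'.2.2
  rw [hΦ.finrank_eq (hZ.mono hY.1) hY.2.2, hΦZ]

lemma IsCodeEmbedding.le_of_map_le_map [Finite F] (hmono : Monotone Φ)
    (hΦ : IsCodeEmbedding (finrank F X + 1) Φ)
    (hX : IsNondegenerate X) (hΦX : finrank F (Φ X) = finrank F X) (hY : IsNondegenerate Y)
    (hXY : finrank F Y = finrank F X + 1) (h : Φ X ≤ Φ Y) : X ≤ Y := by
  obtain ⟨U, ⟨hXU, -, hU⟩, hΦU⟩ := surjOn_covers_of_isCodeEmbedding hmono hΦ hX hΦX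
    ⟨h, le_top, by rw [hΦ.finrank_eq hY hXY, hΦX]⟩
  exact hΦ.inj (hX.mono hXU) hY hU hXY hΦU ▸ hXU

lemma IsCodeEmbedding.pred [Finite F] (hmono : Monotone Φ) (hΦ : IsCodeEmbedding (j + 1) Φ)
    (hdim : ∀ Z : Submodule F (Fin n → F), IsNondegenerate Z → finrank F Z = j →
      finrank F (Φ Z) = j) (hj : j + 2 ≤ n) :
    IsCodeEmbedding j Φ := by
  have hinj {X Y : Submodule F (Fin n → F)} (hX : IsNondegenerate X) (hY : IsNondegenerate Y)
      (hXj : finrank F X = j) (hYj : finrank F Y = j) (h : Φ X = Φ Y) : X = Y := by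
    obtain ⟨U₁, U₂, hU, hU₁, rfl⟩ := exists_isAdjacent_inf_eq (Z := X) (by omega)
    have le_cover {U : Submodule F (Fin n → F)} (hXU : U₁ ⊓ U₂ ≤ U)
        (hUj : finrank F U = j + 1) : Y ≤ U := by
      subst hYj
      exact hΦ.le_of_map_le_map hmono hY (hdim Y hY rfl) (hX.mono hXU) hUj (h ▸ hmono hXU)
    exact (eq_of_le_of_finrank_le (le_inf (le_cover inf_le_left (by omega))
      (le_cover inf_le_right (by have := hU.1; omega))) (by omega)).symm
  refine ⟨fun hX => hdim _ hX, hinj, fun {X Y} hX hY hXj hXY => ?_⟩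
  have hYj : finrank F Y = j := hXY.1 ▸ hXj
  refine IsAdjacent.of_le (by rw [hdim X hX hXj, hdim Y hY hYj])
    (fun h => hXY.ne (hinj hX hY hXj hYj h)) (hmono le_sup_left) (hmono le_sup_right) ?_
  rw [hΦ.finrank_eq (hX.mono le_sup_left) (by rw [hXY.finrank_sup, hXj]), hdim X hX hXj]

-- If the images of the covers `Y` of `Z` formed a top, then `Φ` would map three independent
-- covers into the image of the join of two of them, against `IsCodeEmbedding.le_of_map_le_map`.
lemma finrank_infExtension_of_isCodeEmbedding [Finite F]
    (hΦ : IsCodeEmbedding j (infExtension k f)) (hΦ' : IsCodeEmbedding (j + 1) (infExtension k f))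
    (hZ : IsNondegenerate Z) (hZj : finrank F Z + 1 = j) (hjk : j ≤ k) (hj : j + 2 ≤ n) :
    finrank F (infExtension k f Z) + 1 = j := by
  have hmono : Monotone (infExtension k f) := infExtension_mono
  obtain ⟨Y₁, Y₂, hY, hY₁, hinf⟩ := exists_isAdjacent_inf_eq (Z := Z) (by omega)
  have hZY₁ : Z ≤ Y₁ := hinf ▸ inf_le_left
  have hZY₂ : Z ≤ Y₂ := hinf ▸ inf_le_right
  have hadj := hΦ.adj (hZ.mono hZY₁) (hZ.mono hZY₂) (by omega) hY
  have hΦY₁ := hΦ.finrank_eq (hZ.mono hZY₁) (by omega)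
  have hclique : (infExtension k f '' {Y | Z ≤ Y ∧ finrank F Y = j}).Pairwise IsAdjacent := by
    rintro _ ⟨Y, ⟨hZY, hYj⟩, rfl⟩ _ ⟨Y', ⟨hZY', hYj'⟩, rfl⟩ hne
    exact hΦ.adj (hZ.mono hZY) (hZ.mono hZY') hYj <|
      .of_ge (by omega) (fun h => hne (congrArg _ h)) hZY hZY' (by omega)
  obtain hstar | htop := le_or_le_of_pairwise_isAdjacent hclique
    ⟨Y₁, ⟨hZY₁, by omega⟩, rfl⟩ ⟨Y₂, ⟨hZY₂, by have := hY.1; omega⟩, rfl⟩ hadj.ne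
  · have hΦZ : infExtension k f Z = infExtension k f Y₁ ⊓ infExtension k f Y₂ :=
      le_antisymm (le_inf (hmono hZY₁) (hmono hZY₂)) <|
        le_infExtension_of_covers (by omega) fun Y hZY hYj =>
          hstar _ ⟨Y, ⟨hZY, by omega⟩, rfl⟩
    rw [hΦZ, hadj.2, hΦY₁]
  · exfalso
    have hsup := hY.finrank_sup
    obtain ⟨v, -, hv⟩ := exists_mem_notMem_of_finrank_lt (X := Y₁ ⊔ Y₂) (Y := ⊤)
      (by rw [finrank_top, finrank_fin_fun]; omega)
    have hY₃ := finrank_sup_span_singleton fun h => hv (mem_sup_left (hZY₁ h))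
    have hY₃j : finrank F ↥(Z ⊔ F ∙ v) = j := by omega
    subst hY₃j
    have hle : Z ⊔ F ∙ v ≤ Y₁ ⊔ Y₂ := hΦ'.le_of_map_le_map hmono (hZ.mono le_sup_left)
      (hΦ.finrank_eq (hZ.mono le_sup_left) rfl) (hZ.mono (hZY₁.trans le_sup_left)) (by omega)
      ((htop _ ⟨_, ⟨le_sup_left, rfl⟩, rfl⟩).trans
        (sup_le (hmono le_sup_left) (hmono le_sup_right)))
    exact hv (hle (mem_sup_right (mem_span_singleton_self v)))

lemma IsCodeEmbedding.infExtension (hf : IsCodeEmbedding k f) :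
    IsCodeEmbedding k (infExtension k f) where
  finrank_eq hX hXk := by rw [infExtension_eq hXk, hf.finrank_eq hX hXk]
  inj hX hY hXk hYk h :=
    hf.inj hX hY hXk hYk (by rwa [infExtension_eq hXk, infExtension_eq hYk] at h)
  adj hX hY hXk hXY := by
    rw [infExtension_eq hXk, infExtension_eq (hXY.1 ▸ hXk)]
    exact hf.adj hX hY hXk hXY

lemma finrank_infExtension_of_preservesStars (hf : IsCodeEmbedding k f) (hstar : PreservesStars k f)
    (hZ : IsNondegenerate Z) (hZk : finrank F Z + 1 = k) (hkn : k + 1 ≤ n) :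
    finrank F (infExtension k f Z) + 1 = k := by
  subst hZk
  obtain ⟨A, hA, hAf⟩ := hstar Z hZ rfl
  have := finrank_mono (le_infExtension.2 hAf)
  have := finrank_le_of_covers infExtension_mono hf.infExtension hZ rfl (by omega)
  omega

/-- A monotone map that restricts to an embedding of non-degenerate codes in every dimension up to
`k`. -/
structure IsMonotoneCodeEmbedding (k : ℕ)
    (Φ : Submodule F (Fin n → F) → Submodule F (Fin n → F)) : Prop where
  mono : Monotone Φ
  isCodeEmbedding : ∀ j ≤ k, IsCodeEmbedding j Φ

namespace IsMonotoneCodeEmbedding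

variable {k : ℕ}

lemma finrank_eq (hΦ : IsMonotoneCodeEmbedding k Φ) (hX : IsNondegenerate X)
    (hXk : finrank F X ≤ k) : finrank F (Φ X) = finrank F X :=
  (hΦ.isCodeEmbedding _ hXk).finrank_eq hX rfl

lemma inj (hΦ : IsMonotoneCodeEmbedding k Φ) (hX : IsNondegenerate X) (hY : IsNondegenerate Y)
    (hXY : finrank F X = finrank F Y) (hXk : finrank F X ≤ k) (h : Φ X = Φ Y) : X = Y :=
  (hΦ.isCodeEmbedding _ hXk).inj hX hY rfl hXY.symm h

lemma isAdjacent (hΦ : IsMonotoneCodeEmbedding k Φ) (hX : IsNondegenerate X)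
    (hY : IsNondegenerate Y) (hXk : finrank F X ≤ k) (h : IsAdjacent X Y) :
    IsAdjacent (Φ X) (Φ Y) :=
  (hΦ.isCodeEmbedding _ hXk).adj hX hY rfl h

lemma le_of_map_le_map [Finite F] (hΦ : IsMonotoneCodeEmbedding k Φ) (hX : IsNondegenerate X)
    (hY : IsNondegenerate Y) (hXY : finrank F Y = finrank F X + 1) (hYk : finrank F Y ≤ k)
    (h : Φ X ≤ Φ Y) : X ≤ Y :=
  (hΦ.isCodeEmbedding _ (hXY ▸ hYk)).le_of_map_le_map hΦ.mono hX
    (hΦ.finrank_eq hX (by omega)) hY hXY h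

end IsMonotoneCodeEmbedding

theorem isMonotoneCodeEmbedding_infExtension [Finite F] (hf : IsCodeEmbedding k f)
    (hstar : PreservesStars k f) (hkn : k + 2 ≤ n) :
    IsMonotoneCodeEmbedding k (infExtension k f) := by
  refine ⟨infExtension_mono, fun j hj => ?_⟩
  suffices IsCodeEmbedding j (infExtension k f) ∧
      ∀ Z : Submodule F (Fin n → F), IsNondegenerate Z → finrank F Z + 1 = j →
        finrank F (infExtension k f Z) + 1 = j from this.1
  induction hj using Nat.decreasingInduction with
  | self =>
    exact ⟨hf.infExtension, fun Z hZ hZk =>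
      finrank_infExtension_of_preservesStars hf hstar hZ hZk (by omega)⟩
  | of_succ j hj ih =>
    have hΦ : IsCodeEmbedding j (infExtension k f) := ih.1.pred infExtension_mono
      (fun Z hZ hZj => Nat.succ_injective (ih.2 Z hZ (congrArg _ hZj))) (by omega)
    exact ⟨hΦ, fun Z hZ hZj =>
      finrank_infExtension_of_isCodeEmbedding hΦ ih.1 hZ hZj hj.le (by omega)⟩

end Descent
/-! ### Stars go to stars, up to duality -/

section Connectivity

variable {F V : Type*} [DivisionRing F] [AddCommGroup V] [Module F V] [FiniteDimensional F V]

lemma exists_isAdjacent_finrank_inf_lt {X Y : Submodule F V} (hXY : finrank F X = finrank F Y)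
    (hne : X ≠ Y) :
    ∃ Z, X ⊓ Y ≤ Z ∧ IsAdjacent X Z ∧ finrank F ↥(X ⊓ Y) < finrank F ↥(Z ⊓ Y) := by
  have hlt := IsAdjacent.finrank_inf_lt hXY hne
  obtain ⟨y, hyY, hy⟩ := exists_mem_notMem_of_finrank_lt (hXY ▸ hlt)
  have hyX : y ∉ X := fun h => hy ⟨h, hyY⟩
  obtain ⟨H, hH, hHX, hHd⟩ := exists_le_le_finrank_eq (inf_le_left : X ⊓ Y ≤ X)
    (m := finrank F X - 1) (by omega) (by omega)
  have hHy := finrank_sup_span_singleton fun h => hyX (hHX h)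
  refine ⟨H ⊔ F ∙ y, hH.trans le_sup_left, ?_, ?_⟩
  · exact .of_ge (A := H) (by omega)
      (fun h => hyX (h ▸ mem_sup_right (mem_span_singleton_self y))) hHX le_sup_left (by omega)
  · calc finrank F ↥(X ⊓ Y) < finrank F ↥((X ⊓ Y) ⊔ F ∙ y) := by
          rw [finrank_sup_span_singleton hy]; omega
      _ ≤ finrank F ↥((H ⊔ F ∙ y) ⊓ Y) := finrank_mono <| sup_le
          (le_inf (hH.trans le_sup_left) inf_le_right)
          (le_inf le_sup_right ((span_singleton_le_iff_mem y Y).2 hyY))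

lemma isAdjacent_induction_of_le {A : Submodule F V} {P : Submodule F V → Prop}
    (hP : ∀ X Y, A ≤ X → A ≤ Y → IsAdjacent X Y → P X → P Y) {X Y : Submodule F V} (hX : A ≤ X)
    (hY : A ≤ Y) (hXY : finrank F X = finrank F Y) (h : P X) : P Y := by
  induction hm : finrank F X - finrank F ↥(X ⊓ Y) using Nat.strong_induction_on generalizing X with
  | h m ih =>
    by_cases hne : X = Y
    · exact hne ▸ h
    obtain ⟨Z, hZ, hadj, hlt⟩ := exists_isAdjacent_finrank_inf_lt hXY hne
    have := IsAdjacent.finrank_inf_lt hXY hne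
    have := hadj.1
    have hAZ := (le_inf hX hY).trans hZ
    exact ih _ (by omega) hAZ (by omega) (hP X Z hX hAZ hadj h) rfl

end Connectivity

section StarOrTop

variable {F : Type*} [Field F] {n k : ℕ} {X Y Z W : Submodule F (Fin n → F)}
  {f : Submodule F (Fin n → F) → Submodule F (Fin n → F)}

lemma exists_one_mem_eq_or_isAdjacent (hZ : 0 < finrank F Z) :
    ∃ Z' : Submodule F (Fin n → F), 1 ∈ Z' ∧ finrank F Z' = finrank F Z ∧
      (Z = Z' ∨ IsAdjacent Z Z') := by
  by_cases h1 : 1 ∈ Z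
  · exact ⟨Z, h1, rfl, .inl rfl⟩
  obtain ⟨A, -, hAZ, hA⟩ := exists_le_le_finrank_eq (bot_le : ⊥ ≤ Z) (m := finrank F Z - 1)
    (by rw [finrank_bot]; omega) (by omega)
  have hA1 := finrank_sup_span_singleton fun h => h1 (hAZ h)
  have hmem : 1 ∈ A ⊔ F ∙ 1 := mem_sup_right (mem_span_singleton_self 1)
  exact ⟨_, hmem, by omega,
    .inr <| .of_ge (A := A) (by omega) (fun h => h1 (h ▸ hmem)) hAZ le_sup_left (by omega)⟩

lemma IsNondegenerate.isAdjacent_induction {P : Submodule F (Fin n → F) → Prop}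
    (hP : ∀ X Y : Submodule F (Fin n → F), IsNondegenerate X → IsNondegenerate Y →
      finrank F X = k → IsAdjacent X Y → P X → P Y)
    (hX : IsNondegenerate X) (hY : IsNondegenerate Y) (hXk : finrank F X = k)
    (hYk : finrank F Y = k) (hk : 0 < k) (h : P X) : P Y := by
  obtain ⟨X', hX', hXX', hXadj⟩ := exists_one_mem_eq_or_isAdjacent (hk.trans_eq hXk.symm)
  obtain ⟨Y', hY', hYY', hYadj⟩ := exists_one_mem_eq_or_isAdjacent (hk.trans_eq hYk.symm)
  have hPX' : P X' := hXadj.elim (fun hXX' => hXX' ▸ h)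
    fun hadj => hP X X' hX (isNondegenerate_of_one_mem hX') hXk hadj h
  -- The dimension is part of the predicate because `hP` only applies in dimension `k`.
  have hPY' : finrank F Y' = k ∧ P Y' := by
    refine isAdjacent_induction_of_le (A := F ∙ 1) (P := fun U => finrank F U = k ∧ P U)
      (fun U U' hU hU' hadj ⟨hUk, hPU⟩ => ⟨hadj.1 ▸ hUk, hP U U' ?_ ?_ hUk hadj hPU⟩)
      ((span_singleton_le_iff_mem 1 X').2 hX') ((span_singleton_le_iff_mem 1 Y').2 hY')
      (by omega) ⟨by omega, hPX'⟩
    exacts [isNondegenerate_of_one_mem ((span_singleton_le_iff_mem 1 U).1 hU),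
      isNondegenerate_of_one_mem ((span_singleton_le_iff_mem 1 U').1 hU')]
  exact hYadj.elim (fun hYY' => hYY' ▸ hPY'.2) fun hadj =>
    hP Y' Y (isNondegenerate_of_one_mem hY') hY hPY'.1 hadj.symm hPY'.2

namespace IsCodeEmbedding

lemma injOn (hf : IsCodeEmbedding k f) {S : Set (Submodule F (Fin n → F))}
    (hS : S ⊆ ndCodes F n k) : Set.InjOn f S :=
  fun _ hX _ hY => hf.inj (hS hX).2 (hS hY).2 (hS hX).1 (hS hY).1

lemma mapsStarToStar_or_mapsStarToTop (hf : IsCodeEmbedding k f) (hkn : k + 1 ≤ n)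
    (hZ : IsNondegenerate Z) (hZk : finrank F Z + 1 = k) :
    MapsStarToStar k f Z ∨ MapsStarToTop k f Z := by
  obtain ⟨X₁, X₂, hX, hX₁, hinf⟩ := exists_isAdjacent_inf_eq (Z := Z) (by omega)
  have hZX₁ : Z ≤ X₁ := hinf ▸ inf_le_left
  have hZX₂ : Z ≤ X₂ := hinf ▸ inf_le_right
  have hadj := hf.adj (hZ.mono hZX₁) (hZ.mono hZX₂) (by omega) hX
  have hfX₁ := hf.finrank_eq (hZ.mono hZX₁) (by omega)
  have hclique : (f '' {X | Z ≤ X ∧ finrank F X = k}).Pairwise IsAdjacent := by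
    rintro _ ⟨X, ⟨hZX, hXk⟩, rfl⟩ _ ⟨X', ⟨hZX', hXk'⟩, rfl⟩ hne
    exact hf.adj (hZ.mono hZX) (hZ.mono hZX') hXk <|
      .of_ge (by omega) (fun h => hne (congrArg f h)) hZX hZX' (by omega)
  obtain hstar | htop := le_or_le_of_pairwise_isAdjacent hclique ⟨X₁, ⟨hZX₁, by omega⟩, rfl⟩
    ⟨X₂, ⟨hZX₂, by have := hX.1; omega⟩, rfl⟩ hadj.ne
  · exact .inl ⟨_, by rw [hadj.2, hfX₁], fun X hZX hXk => hstar _ ⟨X, ⟨hZX, hXk⟩, rfl⟩⟩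
  · exact .inr ⟨_, by rw [hadj.finrank_sup, hfX₁],
      fun X hZX hXk => htop _ ⟨X, ⟨hZX, hXk⟩, rfl⟩⟩

lemma injOn_covers (hf : IsCodeEmbedding k f) (hZ : IsNondegenerate Z)
    (hZk : finrank F Z + 1 = k) : Set.InjOn f (covers Z ⊤) :=
  hf.injOn fun _ hX => ⟨hX.2.2.trans hZk, hZ.mono hX.1⟩

lemma mapsTo_covers_of_le (hf : IsCodeEmbedding k f) (hZ : IsNondegenerate Z)
    (hZk : finrank F Z + 1 = k)
    (hW : ∀ X : Submodule F (Fin n → F), Z ≤ X → finrank F X = k → f X ≤ W) :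
    Set.MapsTo f (covers Z ⊤) {X | X ≤ W ∧ finrank F X = k} :=
  fun X hX => ⟨hW X hX.1 (hX.2.2.trans hZk), hf.finrank_eq (hZ.mono hX.1) (hX.2.2.trans hZk)⟩

variable [Finite F]

lemma preservesStars_of_two_mul_lt (hf : IsCodeEmbedding k f) (hkn : k + 1 ≤ n)
    (h2k : 2 * k < n) : PreservesStars k f := by
  intro Z hZ hZk
  refine (hf.mapsStarToStar_or_mapsStarToTop hkn hZ hZk).resolve_right fun ⟨W, hWk, hW⟩ => ?_
  have hle := Set.ncard_le_ncard (hf.mapsTo_covers_of_le hZ hZk hW).image_subset (Set.toFinite _)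
  rw [(hf.injOn_covers hZ hZk).ncard_image, ncard_covers le_top, ncard_hyperplanes hWk, finrank_top,
    finrank_fin_fun, (gaussNum_strictMono Nat.card_pos).le_iff_le] at hle
  omega

lemma surjOn_covers_top_of_star (hf : IsCodeEmbedding k f) (hZ : IsNondegenerate Z)
    (hZk : finrank F Z + 1 = k) {A : Submodule F (Fin n → F)} (hAk : finrank F A + 1 = k)
    (hA : ∀ X : Submodule F (Fin n → F), Z ≤ X → finrank F X = k → A ≤ f X) :
    Set.SurjOn f (covers Z ⊤) (covers A ⊤) := by
  refine surjOn_covers le_top le_top (by omega) (fun X hX => ?_) (hf.injOn_covers hZ hZk)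
  have hXk := hX.2.2.trans hZk
  exact ⟨hA X hX.1 hXk, le_top, by rw [hf.finrank_eq (hZ.mono hX.1) hXk, hAk]⟩

lemma surjOn_covers_of_two_mul_eq (hf : IsCodeEmbedding k f) (hkn : 2 * k = n)
    (hZ : IsNondegenerate Z) (hZk : finrank F Z + 1 = k) (hWk : finrank F W = k + 1)
    (hW : ∀ X : Submodule F (Fin n → F), Z ≤ X → finrank F X = k → f X ≤ W) :
    Set.SurjOn f (covers Z ⊤) {X | X ≤ W ∧ finrank F X = k} := by
  refine (Set.eq_of_subset_of_ncard_le (hf.mapsTo_covers_of_le hZ hZk hW).image_subset ?_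
    (Set.toFinite _)).ge
  rw [(hf.injOn_covers hZ hZk).ncard_image, ncard_covers le_top, ncard_hyperplanes hWk, finrank_top,
    finrank_fin_fun, show n - finrank F Z = k + 1 by omega]

/-- Otherwise the star of `Z` fills the star of some `A` and the star of `Y` fills a top `W`.
A subspace `A ⊔ F ∙ v ≤ W` other than `f (Y ⊔ Z)` is then attained both above `Z` and above `Y`,
hence only at `Y ⊔ Z`. -/
lemma mapsStarToTop_of_isAdjacent (hf : IsCodeEmbedding k f) (hkn : 2 * k = n)
    (hY : IsNondegenerate Y) (hZ : IsNondegenerate Z) (hYk : finrank F Y + 1 = k)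
    (hYZ : IsAdjacent Y Z) (htop : MapsStarToTop k f Y) : MapsStarToTop k f Z := by
  have hZk : finrank F Z + 1 = k := hYZ.1 ▸ hYk
  have hsup : finrank F ↥(Y ⊔ Z) = k := hYZ.finrank_sup.trans hYk
  refine (hf.mapsStarToStar_or_mapsStarToTop (by omega) hZ hZk).resolve_left fun ⟨A, hAk, hA⟩ => ?_
  obtain ⟨W, hWk, hW⟩ := htop
  have hAsup := hA _ le_sup_right hsup
  have hsupW := hW _ le_sup_left hsup
  have hfsup := hf.finrank_eq (hY.mono le_sup_left) hsup
  obtain ⟨v, hvW, hv⟩ := exists_mem_notMem_of_finrank_lt (X := f (Y ⊔ Z)) (Y := W) (by omega)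
  have hAv := finrank_sup_span_singleton fun h => hv (hAsup h)
  obtain ⟨X₁, hX₁, hfX₁⟩ :=
    hf.surjOn_covers_top_of_star hZ hZk hAk hA ⟨le_sup_left, le_top, hAv⟩
  obtain ⟨X₂, hX₂, hfX₂⟩ := hf.surjOn_covers_of_two_mul_eq hkn hY hYk hWk hW
    ⟨sup_le (hAsup.trans hsupW) ((span_singleton_le_iff_mem v W).2 hvW), hAv.trans hAk⟩
  have hX₁k := hX₁.2.2.trans hZk
  have hX₁₂ : X₁ = X₂ := hf.inj (hZ.mono hX₁.1) (hY.mono hX₂.1) hX₁k (hX₂.2.2.trans hYk)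
    (hfX₁.trans hfX₂.symm)
  have hsup₁ : Y ⊔ Z = X₁ :=
    eq_of_le_of_finrank_le (sup_le (hX₁₂ ▸ hX₂.1) hX₁.1) (hX₁k.trans hsup.symm).le
  rw [hsup₁, hfX₁] at hv
  exact hv (mem_sup_right (mem_span_singleton_self v))

lemma preservesStars_or_forall_mapsStarToTop (hf : IsCodeEmbedding k f) (hk : 1 < k)
    (hkn : 2 * k = n) : PreservesStars k f ∨ ∀ Z : Submodule F (Fin n → F),
      IsNondegenerate Z → finrank F Z + 1 = k → MapsStarToTop k f Z := by
  by_contra! ⟨hstar, Z, hZ, hZk, hZtop⟩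
  refine hstar fun Y hY hYk =>
    (hf.mapsStarToStar_or_mapsStarToTop (by omega) hY hYk).resolve_right fun hYtop => hZtop ?_
  exact hY.isAdjacent_induction (k := k - 1)
    (fun U U' hU hU' hUk => hf.mapsStarToTop_of_isAdjacent hkn hU hU' (by omega)) hZ (by omega)
    (by omega) (by omega) hYtop

end IsCodeEmbedding

end StarOrTop

section LargeDimension

variable {F : Type*} [Field F] [Finite F] {n k : ℕ} {X Y Z W : Submodule F (Fin n → F)}
  {f : Submodule F (Fin n → F) → Submodule F (Fin n → F)}

lemma gaussNum_le_ncard_tcOf_add (hY : IsNondegenerate Y) (hYk : finrank F Y = k + 1) :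
    gaussNum (Nat.card F) (k + 1) ≤ (tcOf F n k Y).ncard + n := by
  have hcover : {X | X ≤ Y ∧ finrank F X = k} ⊆
      tcOf F n k Y ∪ Set.range fun i => Y ⊓ coordHyp F n i := by
    rintro X ⟨hXY, hXk⟩
    by_cases hX : IsNondegenerate X
    · exact .inl ⟨⟨hXk, hXY⟩, hXk, hX⟩
    · obtain ⟨i, hi⟩ := not_forall_not.1 hX
      have hlt : Y ⊓ coordHyp F n i < Y := inf_lt_left.2 (hY i)
      have := finrank_lt_finrank_of_lt hlt
      exact .inr ⟨i, (eq_of_le_of_finrank_le (le_inf hXY hi) (by omega)).symm⟩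
  have hrange : (Set.range fun i => Y ⊓ coordHyp F n i).ncard ≤ n := by
    rw [← Set.image_univ]
    exact (Set.ncard_image_le (Set.toFinite _)).trans_eq (by rw [Set.ncard_univ, Nat.card_fin])
  rw [← ncard_hyperplanes hYk]
  exact (Set.ncard_le_ncard hcover (Set.toFinite _)).trans
    ((Set.ncard_union_le _ _).trans (Nat.add_le_add_left hrange _))

lemma gaussNum_succ (q m : ℕ) : gaussNum q (m + 1) = gaussNum q m + q ^ m :=
  Finset.sum_range_succ _ _

lemma two_mul_le_gaussNum {q : ℕ} (hq : 2 ≤ q) (hk : 3 ≤ k) : 2 * k ≤ gaussNum q k := by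
  induction k, hk using Nat.le_induction with
  | base =>
    simp only [gaussNum, Finset.sum_range_succ, Finset.sum_range_zero, pow_zero, pow_one]
    have := Nat.pow_le_pow_left hq 2
    omega
  | succ m hm ih =>
    rw [gaussNum_succ]
    have := hq.trans (Nat.le_self_pow (by omega : m ≠ 0) q)
    omega

lemma gaussNum_add_two_le_ncard_tcOf (hY : IsNondegenerate Y) (hYk : finrank F Y = k + 1)
    (hk : 3 ≤ k) (hn : n < 2 * k) : gaussNum (Nat.card F) k + 2 ≤ (tcOf F n k Y).ncard := by
  have := gaussNum_le_ncard_tcOf_add hY hYk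
  have hq : 2 ≤ Nat.card F := Finite.one_lt_card
  have := two_mul_le_gaussNum hq hk
  have hpow : gaussNum (Nat.card F) k < Nat.card F ^ k :=
    Nat.geomSum_lt hq fun _ => Finset.mem_range.1
  rw [gaussNum_succ] at *
  omega

omit [Finite F] in
lemma pairwise_isAdjacent_tcOf (hYk : finrank F Y = k + 1) :
    (tcOf F n k Y).Pairwise IsAdjacent := fun _ hX _ hX' hne =>
  .of_le (hX.2.1.trans hX'.2.1.symm) hne hX.1.2 hX'.1.2 (by rw [hYk, hX.2.1])

namespace IsCodeEmbedding

lemma exists_forall_mem_tcOf_le (hf : IsCodeEmbedding k f) (hk : 3 ≤ k) (hn : n < 2 * k)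
    (hY : IsNondegenerate Y) (hYk : finrank F Y = k + 1) :
    ∃ W : Submodule F (Fin n → F), finrank F W = k + 1 ∧ ∀ X ∈ tcOf F n k Y, f X ≤ W := by
  have hcard := gaussNum_add_two_le_ncard_tcOf hY hYk hk hn
  have hinj : Set.InjOn f (tcOf F n k Y) := hf.injOn Set.inter_subset_right
  obtain ⟨X₁, hX₁, X₂, hX₂, hne⟩ :=
    (Set.one_lt_ncard (Set.toFinite (tcOf F n k Y))).1 (by omega)
  have hclique : (f '' tcOf F n k Y).Pairwise IsAdjacent := by
    rintro _ ⟨X, hX, rfl⟩ _ ⟨X', hX', rfl⟩ hne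
    exact hf.adj hX.2.2 hX'.2.2 hX.2.1
      (pairwise_isAdjacent_tcOf hYk hX hX' fun h => hne (congrArg f h))
  have hadj := hclique ⟨X₁, hX₁, rfl⟩ ⟨X₂, hX₂, rfl⟩ (hinj.ne hX₁ hX₂ hne)
  have hfX₁ := hf.finrank_eq hX₁.2.2 hX₁.2.1
  obtain hstar | htop :=
    le_or_le_of_pairwise_isAdjacent hclique ⟨X₁, hX₁, rfl⟩ ⟨X₂, hX₂, rfl⟩ hadj.ne
  · exfalso
    have hsub : f '' tcOf F n k Y ⊆ covers (f X₁ ⊓ f X₂) ⊤ := by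
      rintro _ ⟨X, hX, rfl⟩
      exact ⟨hstar _ ⟨X, hX, rfl⟩, le_top, by rw [hf.finrank_eq hX.2.2 hX.2.1, hadj.2, hfX₁]⟩
    have hle := Set.ncard_le_ncard hsub (Set.toFinite _)
    rw [hinj.ncard_image, ncard_covers le_top, finrank_top, finrank_fin_fun] at hle
    have hinf := hadj.2
    have := (gaussNum_strictMono (Nat.card_pos (α := F))).monotone
      (show n - finrank F ↥(f X₁ ⊓ f X₂) ≤ k by omega)
    omega
  · exact ⟨_, by rw [hadj.finrank_sup, hfX₁], fun X hX => htop _ ⟨X, hX, rfl⟩⟩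

lemma map_le_of_mem_tcOf (hf : IsCodeEmbedding k f) (hk : 3 ≤ k) (hn : n < 2 * k)
    (hZ : IsNondegenerate Z) (hZk : finrank F Z + 1 = k) (hWk : finrank F W = k + 1)
    (hW : ∀ X : Submodule F (Fin n → F), Z ≤ X → finrank F X = k → f X ≤ W) (hZY : Z ≤ Y)
    (hYk : finrank F Y = k + 1) (hX : X ∈ tcOf F n k Y) : f X ≤ W := by
  obtain ⟨W', hW'k, hW'⟩ := hf.exists_forall_mem_tcOf_le hk hn (hZ.mono hZY) hYk
  obtain ⟨v, hvY, hv⟩ := exists_mem_notMem_of_finrank_lt (X := Z) (Y := Y) (by omega)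
  have hZv := finrank_sup_span_singleton hv
  obtain ⟨w, hwY, hw⟩ := exists_mem_notMem_of_finrank_lt (X := Z ⊔ F ∙ v) (Y := Y) (by omega)
  have hZw := finrank_sup_span_singleton fun h => hw (mem_sup_left (T := F ∙ v) h)
  have hn₁ : IsNondegenerate (Z ⊔ F ∙ v) := hZ.mono le_sup_left
  have hn₂ : IsNondegenerate (Z ⊔ F ∙ w) := hZ.mono le_sup_left
  have hle₁ : Z ⊔ F ∙ v ≤ Y := sup_le hZY ((span_singleton_le_iff_mem v Y).2 hvY)
  have hle₂ : Z ⊔ F ∙ w ≤ Y := sup_le hZY ((span_singleton_le_iff_mem w Y).2 hwY)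
  have hadj := hf.adj hn₁ hn₂ (by omega) <| .of_ge (A := Z) (by omega)
    (fun h => hw (h ▸ mem_sup_right (mem_span_singleton_self w))) le_sup_left le_sup_left hZv.le
  have hfv := hf.finrank_eq hn₁ (by omega)
  have hWsup := hadj.sup_eq (hW _ le_sup_left (by omega)) (hW _ le_sup_left (by omega)) (by omega)
  have hW'sup := hadj.sup_eq (hW' _ ⟨⟨by omega, hle₁⟩, by omega, hn₁⟩)
    (hW' _ ⟨⟨by omega, hle₂⟩, by omega, hn₂⟩) (by omega)
  exact hWsup ▸ hW'sup ▸ hW' X hX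

/-- If a star went into a top `W`, the tops of two `(k+1)`-dimensional subspaces containing it
would inject into the `k`-dimensional subspaces of `W`, which are too few. -/
lemma preservesStars_of_lt_two_mul (hf : IsCodeEmbedding k f) (hkn : k + 2 ≤ n)
    (hn : n < 2 * k) : PreservesStars k f := by
  have hk : 3 ≤ k := by omega
  intro Z hZ hZk
  refine (hf.mapsStarToStar_or_mapsStarToTop (by omega) hZ hZk).resolve_right
    fun ⟨W, hWk, hW⟩ => ?_
  obtain ⟨X, hZX, -, hX⟩ := exists_le_le_finrank_eq (le_top : Z ≤ ⊤) (m := k) (by omega)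
    (by rw [finrank_top, finrank_fin_fun]; omega)
  obtain ⟨Y₁, Y₂, hY, hY₁, rfl⟩ := exists_isAdjacent_inf_eq (Z := X) (by omega)
  rw [hX] at hY₁
  have hY₂ : finrank F Y₂ = k + 1 := hY.1 ▸ hY₁
  have hcard₁ := gaussNum_le_ncard_tcOf_add (hZ.mono (hZX.trans inf_le_left)) hY₁
  have hcard₂ := gaussNum_add_two_le_ncard_tcOf (hZ.mono (hZX.trans inf_le_right)) hY₂ hk hn
  have hinter : (tcOf F n k Y₁ ∩ tcOf F n k Y₂).ncard ≤ 1 := by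
    rw [← Set.ncard_singleton (Y₁ ⊓ Y₂)]
    exact Set.ncard_le_ncard (fun U hU =>
      eq_of_le_of_finrank_le (le_inf hU.1.1.2 hU.2.1.2) (hX.trans hU.1.2.1.symm).le)
      (Set.toFinite _)
  have hunion := Set.ncard_union_add_ncard_inter (tcOf F n k Y₁) (tcOf F n k Y₂) (Set.toFinite _)
    (Set.toFinite _)
  have hsub : f '' (tcOf F n k Y₁ ∪ tcOf F n k Y₂) ⊆ {U | U ≤ W ∧ finrank F U = k} := by
    rintro _ ⟨U, hU | hU, rfl⟩
    · exact ⟨hf.map_le_of_mem_tcOf hk hn hZ hZk hWk hW (hZX.trans inf_le_left) hY₁ hU,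
        hf.finrank_eq hU.2.2 hU.2.1⟩
    · exact ⟨hf.map_le_of_mem_tcOf hk hn hZ hZk hWk hW (hZX.trans inf_le_right) hY₂ hU,
        hf.finrank_eq hU.2.2 hU.2.1⟩
  have hinj : Set.InjOn f (tcOf F n k Y₁ ∪ tcOf F n k Y₂) :=
    hf.injOn (Set.union_subset Set.inter_subset_right Set.inter_subset_right)
  have hle := Set.ncard_le_ncard hsub (Set.toFinite _)
  rw [hinj.ncard_image, ncard_hyperplanes hWk] at hle
  have := two_mul_le_gaussNum (Finite.one_lt_card : 1 < Nat.card F) hk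
  omega

end IsCodeEmbedding

end LargeDimension

section StarsOrDual

variable {F : Type*} [Field F] {n k : ℕ}
  {f : Submodule F (Fin n → F) → Submodule F (Fin n → F)}

namespace IsCodeEmbedding

lemma dotOrthogonal_comp (hf : IsCodeEmbedding k f) (hkn : 2 * k = n) :
    IsCodeEmbedding k (dotOrthogonal ∘ f) where
  finrank_eq hX hXk := by
    rw [Function.comp_apply, finrank_dotOrthogonal, hf.finrank_eq hX hXk]
    omega
  inj hX hY hXk hYk h := hf.inj hX hY hXk hYk (dotOrthogonal_injective h)
  adj hX hY hXk hXY := (hf.adj hX hY hXk hXY).dotOrthogonal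

theorem preservesStars_or_preservesStars_dotOrthogonal_comp [Finite F] (hf : IsCodeEmbedding k f)
    (hk : 1 < k) (hkn : k + 2 ≤ n) :
    PreservesStars k f ∨ 2 * k = n ∧ PreservesStars k (dotOrthogonal ∘ f) := by
  obtain hlt | heq | hgt := lt_trichotomy (2 * k) n
  · exact .inl (hf.preservesStars_of_two_mul_lt (by omega) hlt)
  · refine (hf.preservesStars_or_forall_mapsStarToTop hk heq).imp_right fun htop =>
      ⟨heq, fun Z hZ hZk => ?_⟩
    obtain ⟨W, hWk, hW⟩ := htop Z hZ hZk
    exact ⟨dotOrthogonal W, by rw [finrank_dotOrthogonal]; omega,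
      fun X hZX hXk => dotOrthogonal_le_dotOrthogonal.2 (hW X hZX hXk)⟩
  · exact .inl (hf.preservesStars_of_lt_two_mul hkn hgt)

end IsCodeEmbedding

end StarsOrDual

/-! ### Fields with at least three elements -/

section Points

variable {F V : Type*} [DivisionRing F] [AddCommGroup V] [Module F V] [FiniteDimensional F V]
  {A P Q : Submodule F V}

lemma finrank_sup_of_not_le (hP : finrank F P = 1) (hPA : ¬ P ≤ A) :
    finrank F ↥(A ⊔ P) = finrank F A + 1 := by
  have := finrank_sup_add_finrank_inf_eq A P
  have := finrank_lt_finrank_of_lt (lt_of_le_of_ne inf_le_right fun h => hPA (inf_eq_right.1 h))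
  omega

lemma le_sup_of_le_sup (hP : finrank F P = 1) (hQ : finrank F Q = 1) (hPA : ¬ P ≤ A)
    (h : P ≤ A ⊔ Q) : Q ≤ A ⊔ P := by
  have hQA : ¬ Q ≤ A := fun hQA => hPA (h.trans (sup_le le_rfl hQA))
  have := finrank_sup_of_not_le hP hPA
  have := finrank_sup_of_not_le hQ hQA
  exact le_sup_right.trans (eq_of_le_of_finrank_le (sup_le le_sup_left h) (by omega)).ge

end Points

section ExistsNondegenerate

variable {F : Type*} [Field F] {n : ℕ} {A L : Submodule F (Fin n → F)}

lemma exists_ne_zero_ne (hq : 2 < Nat.card F) (x : F) : ∃ y, y ≠ 0 ∧ y ≠ x := by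
  have : Finite F := Nat.finite_of_card_ne_zero (by omega)
  by_contra! h
  have hle : (Set.univ : Set F).ncard ≤ ({0, x} : Set F).ncard :=
    Set.ncard_le_ncard fun y _ => or_iff_not_imp_left.2 (h y)
  rw [Set.ncard_univ] at hle
  have := Set.ncard_insert_le (0 : F) {x}
  rw [Set.ncard_singleton] at this
  omega

lemma exists_single_notMem (hA : finrank F A < n) : ∃ i, Pi.single i (1 : F) ∉ A := by
  by_contra! h
  have htop : A = ⊤ := by
    refine top_le_iff.1 ((Pi.basisFun F (Fin n)).span_eq.ge.trans (span_le.2 ?_))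
    rintro _ ⟨i, rfl⟩
    rw [Pi.basisFun_apply]
    exact h i
  rw [htop, finrank_top, finrank_fin_fun] at hA
  exact hA.false

lemma exists_mem_ne_zero_apply_eq_zero (hL : 2 ≤ finrank F L) (i : Fin n) :
    ∃ a ∈ L, a ≠ 0 ∧ a i = 0 := by
  obtain ⟨a, ha, ha0⟩ := exists_mem_ne_zero_of_ne_bot <|
    LinearMap.ker_ne_bot_of_finrank_lt (f := (LinearMap.proj i).domRestrict L)
      (by rw [finrank_self]; omega)
  exact ⟨a, a.2, fun h => ha0 (Subtype.ext h), ha⟩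

/-- Of two such vectors that differ by a multiple of the `i`-th unit vector, one is outside `A`. -/
lemma exists_notMem_forall_ne_zero_add (hq : 2 < Nat.card F) {i : Fin n} {a : Fin n → F}
    (hi : Pi.single i 1 ∉ A) (ha : a i = 0) :
    ∃ w ∉ A, (∀ j, w j ≠ 0) ∧ ∀ j, (w + a) j ≠ 0 := by
  choose y hy0 hy using exists_ne_zero_ne hq
  let w (c : F) : Fin n → F := Function.update (fun j => y (-a j)) i c
  have hw {c : F} (hc : c ≠ 0) : (∀ j, w c j ≠ 0) ∧ ∀ j, (w c + a) j ≠ 0 := by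
    refine ⟨fun j => ?_, fun j => ?_⟩ <;> obtain rfl | hj := eq_or_ne j i
    · simpa only [w, Function.update_self] using hc
    · simpa only [w, Function.update_of_ne hj] using hy0 _
    · simpa only [w, Pi.add_apply, Function.update_self, ha, add_zero] using hc
    · simpa only [w, Pi.add_apply, Function.update_of_ne hj, ne_eq, add_eq_zero_iff_eq_neg]
        using hy _
  have hsub : w (y 1) - w 1 = (y 1 - 1) • Pi.single i 1 := by
    ext j
    obtain rfl | hj := eq_or_ne j i
    · simp [w]
    · simp [w, hj]
  by_contra! h
  have hmem {c : F} (hc : c ≠ 0) : w c ∈ A := by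
    by_contra hA
    exact (h _ hA (hw hc).1).elim (hw hc).2
  have := A.sub_mem (hmem (hy0 1)) (hmem one_ne_zero)
  rw [hsub, A.smul_mem_iff (sub_ne_zero.2 (hy 1))] at this
  exact hi this

lemma finrank_span_singleton_of_notMem {w : Fin n → F} (hw : w ∉ A) : finrank F ↥(F ∙ w) = 1 :=
  finrank_span_singleton fun h => hw (h ▸ A.zero_mem)

lemma exists_nondegenerate_point_not_le (hq : 2 < Nat.card F) (hA : finrank F A < n) :
    ∃ Q : Submodule F (Fin n → F), IsNondegenerate Q ∧ finrank F Q = 1 ∧ ¬ Q ≤ A := by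
  obtain ⟨i, hi⟩ := exists_single_notMem hA
  obtain ⟨w, hwA, hw, -⟩ := exists_notMem_forall_ne_zero_add hq hi (a := 0) rfl
  exact ⟨F ∙ w, isNondegenerate_of_mem hw (mem_span_singleton_self w),
    finrank_span_singleton_of_notMem hwA, fun h => hwA ((span_singleton_le_iff_mem w A).1 h)⟩

lemma exists_nondegenerate_point_line (hq : 2 < Nat.card F) (hL : finrank F L = 2) (hLA : L ≤ A)
    (hA : finrank F A < n) :
    ∃ Q Y : Submodule F (Fin n → F), IsNondegenerate Q ∧ finrank F Q = 1 ∧ ¬ Q ≤ A ∧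
      IsNondegenerate Y ∧ finrank F Y = 2 ∧ Y ≤ L ⊔ Q ∧ ¬ Q ≤ Y := by
  obtain ⟨i, hi⟩ := exists_single_notMem hA
  obtain ⟨a, haL, ha0, hai⟩ := exists_mem_ne_zero_apply_eq_zero hL.ge i
  obtain ⟨w, hwA, hw, hwa⟩ := exists_notMem_forall_ne_zero_add hq hi hai
  obtain ⟨b, hbL, hba⟩ := exists_mem_notMem_of_finrank_lt (X := F ∙ a) (Y := L)
    (by rw [finrank_span_singleton ha0]; omega)
  have hbL' : F ∙ b ≤ L := (span_singleton_le_iff_mem b L).2 hbL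
  have hwaL : w + a ∉ L := fun h => hwA (hLA ((L.add_mem_iff_left haL).1 h))
  have hY : finrank F ↥(F ∙ b ⊔ F ∙ (w + a)) = 2 := by
    rw [finrank_sup_span_singleton fun h => hwaL (hbL' h), finrank_span_singleton]
    exact fun hb => hba (hb ▸ zero_mem _)
  refine ⟨F ∙ w, F ∙ b ⊔ F ∙ (w + a), isNondegenerate_of_mem hw (mem_span_singleton_self w),
    finrank_span_singleton_of_notMem hwA, fun h => hwA ((span_singleton_le_iff_mem w A).1 h),
    isNondegenerate_of_mem hwa (mem_sup_right (mem_span_singleton_self _)), hY, ?_, fun h => ?_⟩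
  · exact sup_le (hbL'.trans le_sup_left) ((span_singleton_le_iff_mem _ _).2
      (add_mem (mem_sup_right (mem_span_singleton_self w)) (mem_sup_left haL)))
  · have hwY := (span_singleton_le_iff_mem w _).1 h
    have haY : a ∈ F ∙ b ⊔ F ∙ (w + a) := by
      have := sub_mem (mem_sup_right (S := F ∙ b) (mem_span_singleton_self (w + a))) hwY
      rwa [add_sub_cancel_left] at this
    have hab : finrank F ↥(F ∙ a ⊔ F ∙ b) = 2 := by
      rw [finrank_sup_span_singleton hba, finrank_span_singleton ha0]
    have hYL : F ∙ a ⊔ F ∙ b = F ∙ b ⊔ F ∙ (w + a) := eq_of_le_of_finrank_le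
      (sup_le ((span_singleton_le_iff_mem a _).2 haY) le_sup_left) (by omega)
    have : F ∙ a ⊔ F ∙ b ≤ L := sup_le ((span_singleton_le_iff_mem a L).2 haL) hbL'
    exact hwA (hLA (this (hYL ▸ hwY)))

end ExistsNondegenerate

section PointExtension

variable {F : Type*} [Field F] [Finite F] {n k : ℕ}
  {Φ g : Submodule F (Fin n → F) → Submodule F (Fin n → F)}
  {E P Q W X Y Z : Submodule F (Fin n → F)}

namespace IsMonotoneCodeEmbedding

lemma map_le_of_isAdjacent (hΦ : IsMonotoneCodeEmbedding k Φ) (hZ : IsNondegenerate Z)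
    (hY : IsNondegenerate Y) (hZX : Z ≤ X) (hX : finrank F X = finrank F Z + 1)
    (hXk : finrank F X ≤ k) (hXY : IsAdjacent X Y) (hZY : ¬ Z ≤ Y) (hZW : Φ Z ≤ W)
    (hYW : Φ Y ≤ W) : Φ X ≤ W := by
  have hXn := hZ.mono hZX
  have hΦXY := hΦ.isAdjacent hXn hY hXk hXY
  have hYX := hXY.1
  have hne : Φ Z ≠ Φ X ⊓ Φ Y := fun h =>
    hZY (hΦ.le_of_map_le_map hZ hY (by omega) (by omega) (h.le.trans inf_le_right))
  have := hΦ.finrank_eq hXn hXk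
  have := hΦ.finrank_eq hZ (by omega)
  have := hΦXY.2
  rw [← sup_eq_of_hyperplanes (hΦ.mono hZX) inf_le_left (by omega) (by omega) hne]
  exact sup_le hZW (inf_le_right.trans hYW)

/-- Inside `E`, the subspaces covering `Z` are mapped into `W`; as there are equally many in `E` and
in `W`, no other one is. -/
lemma le_of_map_le (hΦ : IsMonotoneCodeEmbedding k Φ) (hZ : IsNondegenerate Z)
    (hY : IsNondegenerate Y) (hZE : Z ≤ E) (hYE : Y ≤ E) (hZY : ¬ Z ≤ Y)
    (hE : finrank F E = finrank F Z + 2) (hYZ : finrank F Y = finrank F Z + 1)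
    (hYk : finrank F Y ≤ k) (hW : finrank F W = finrank F Z + 2) (hZW : Φ Z ≤ W) (hYW : Φ Y ≤ W)
    (hX : X ∈ covers Z ⊤) (hXW : Φ X ≤ W) : X ≤ E := by
  have hΦZ := hΦ.finrank_eq hZ (by omega)
  have hmap {U : Submodule F (Fin n → F)} (hU : U ∈ covers Z E) : Φ U ≤ W :=
    hΦ.map_le_of_isAdjacent hZ hY hU.1 hU.2.2 (hU.2.2.trans_le (hYZ ▸ hYk))
      (.of_le (hU.2.2.trans hYZ.symm) (fun h => hZY (h ▸ hU.1)) hU.2.1 hYE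
        (by rw [hU.2.2]; omega)) hZY hZW hYW
  have hfinrank {U : Submodule F (Fin n → F)} (hZU : Z ≤ U) (hU : finrank F U = finrank F Z + 1) :
      finrank F (Φ U) = finrank F (Φ Z) + 1 := by
    rw [hΦ.finrank_eq (hZ.mono hZU) (by omega), hU, hΦZ]
  obtain ⟨U, hU, hUX⟩ := surjOn_covers hZE hZW (by omega)
    (fun U hU => ⟨hΦ.mono hU.1, hmap hU, hfinrank hU.1 hU.2.2⟩)
    (fun U hU U' hU' => hΦ.inj (hZ.mono hU.1) (hZ.mono hU'.1) (hU.2.2.trans hU'.2.2.symm)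
      (hU.2.2.trans_le (hYZ ▸ hYk)))
    ⟨hΦ.mono hX.1, hXW, hfinrank hX.1 hX.2.2⟩
  rw [← hΦ.inj (hZ.mono hU.1) (hZ.mono hX.1) (hU.2.2.trans hX.2.2.symm)
    (hU.2.2.trans_le (hYZ ▸ hYk)) hUX]
  exact hU.2.1

/-- The plane `P ⊔ Q₁ ⊔ Q₂` contains no line through `Q₁` and `Q₃`. -/
lemma not_map_sup_le_sup (hΦ : IsMonotoneCodeEmbedding k Φ) (hk : 2 ≤ k) (hP : finrank F P = 1)
    {Q₁ Q₂ Q₃ : Submodule F (Fin n → F)} (h₁ : IsNondegenerate Q₁) (h₂ : IsNondegenerate Q₂)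
    (h₃ : IsNondegenerate Q₃) (hQ₁ : finrank F Q₁ = 1) (hQ₂ : finrank F Q₂ = 1)
    (hQ₃ : finrank F Q₃ = 1) (h₁P : ¬ Q₁ ≤ P) (h₂P : ¬ Q₂ ≤ P ⊔ Q₁) (h₃P : ¬ Q₃ ≤ P ⊔ Q₁ ⊔ Q₂) :
    ¬ Φ (P ⊔ Q₃) ≤ Φ (P ⊔ Q₁) ⊔ Φ (P ⊔ Q₂) := by
  intro hle
  have h₃P' : ¬ Q₃ ≤ P ⊔ Q₁ := fun h => h₃P (h.trans le_sup_left)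
  have h₁P₂ : ¬ Q₁ ≤ P ⊔ Q₂ := fun h => h₂P (le_sup_of_le_sup hQ₁ hQ₂ h₁P h)
  have h₁P₃ : ¬ Q₁ ≤ P ⊔ Q₃ := fun h => h₃P' (le_sup_of_le_sup hQ₁ hQ₃ h₁P h)
  have d₁ := finrank_sup_of_not_le hQ₁ h₁P
  have d₂ := finrank_sup_of_not_le hQ₂ fun h => h₂P (h.trans le_sup_left)
  have d₃ := finrank_sup_of_not_le hQ₃ fun h => h₃P' (h.trans le_sup_left)
  have d₁₂ := finrank_sup_of_not_le hQ₂ h₂P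
  have d₁₃ := finrank_sup_of_not_le (A := Q₁) hQ₃ fun h => h₃P' (h.trans le_sup_right)
  have n₁ : IsNondegenerate (P ⊔ Q₁) := h₁.mono le_sup_right
  have n₂ : IsNondegenerate (P ⊔ Q₂) := h₂.mono le_sup_right
  have hW := (hΦ.isAdjacent n₁ n₂ (by omega) (.of_ge (A := P) (by omega)
    (fun h => h₁P₂ (h ▸ le_sup_right)) le_sup_left le_sup_left (by omega))).finrank_sup
  rw [hΦ.finrank_eq n₁ (by omega)] at hW
  have hQ₁W : Φ Q₁ ≤ Φ (P ⊔ Q₁) ⊔ Φ (P ⊔ Q₂) := (hΦ.mono le_sup_right).trans le_sup_left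
  have h₁₃ : Φ (Q₁ ⊔ Q₃) ≤ Φ (P ⊔ Q₁) ⊔ Φ (P ⊔ Q₂) :=
    hΦ.map_le_of_isAdjacent h₁ (h₃.mono le_sup_right) le_sup_left d₁₃ (by omega)
      (.of_ge (A := Q₃) (by omega) (fun h => h₁P₃ (h ▸ le_sup_left)) le_sup_right le_sup_right
        (by omega)) h₁P₃ hQ₁W hle
  refine h₃P ((le_sup_right : Q₃ ≤ Q₁ ⊔ Q₃).trans ?_)
  exact hΦ.le_of_map_le h₁ n₂ (le_sup_right.trans le_sup_left)
    (sup_le (le_sup_left.trans le_sup_left) le_sup_right) h₁P₂ (by omega) (by omega) (by omega)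
    (by omega) hQ₁W le_sup_right ⟨le_sup_left, le_top, d₁₃⟩ h₁₃

lemma exists_point_le (hΦ : IsMonotoneCodeEmbedding k Φ) (hq : 2 < Nat.card F) (hk : 2 ≤ k)
    (hkn : k + 2 ≤ n) (hP : finrank F P = 1) :
    ∃ p : Submodule F (Fin n → F), finrank F p = 1 ∧
      ∀ X, IsNondegenerate X → P ≤ X → finrank F X = 2 → p ≤ Φ X := by
  obtain ⟨Q₁, h₁, hQ₁, h₁P⟩ := exists_nondegenerate_point_not_le hq (A := P) (by omega)
  have d₁ := finrank_sup_of_not_le hQ₁ h₁P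
  obtain ⟨Q₂, h₂, hQ₂, h₂P⟩ := exists_nondegenerate_point_not_le hq (A := P ⊔ Q₁) (by omega)
  have d₂ := finrank_sup_of_not_le hQ₂ fun h => h₂P (h.trans le_sup_left)
  have d₁₂ := finrank_sup_of_not_le hQ₂ h₂P
  obtain ⟨Q₃, h₃, hQ₃, h₃P⟩ := exists_nondegenerate_point_not_le hq (A := P ⊔ Q₁ ⊔ Q₂) (by omega)
  have d₃ := finrank_sup_of_not_le hQ₃ fun h => h₃P (h.trans (le_sup_left.trans le_sup_left))
  let S := {X | IsNondegenerate X ∧ P ≤ X ∧ finrank F X = 2}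
  have hS {Q : Submodule F (Fin n → F)} (hQ : IsNondegenerate Q)
      (hd : finrank F ↥(P ⊔ Q) = finrank F P + 1) : P ⊔ Q ∈ S :=
    ⟨hQ.mono le_sup_right, le_sup_left, by omega⟩
  have hadj {X Y : Submodule F (Fin n → F)} (hX : X ∈ S) (hY : Y ∈ S) (hne : X ≠ Y) :
      IsAdjacent (Φ X) (Φ Y) :=
    hΦ.isAdjacent hX.1 hY.1 (by rw [hX.2.2]; omega)
      (.of_ge (by rw [hX.2.2, hY.2.2]) hne hX.2.1 hY.2.1 (by rw [hX.2.2, hP]))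
  have hclique : (Φ '' S).Pairwise IsAdjacent := by
    rintro _ ⟨X, hX, rfl⟩ _ ⟨Y, hY, rfl⟩ hne
    exact hadj hX hY fun h => hne (congrArg Φ h)
  have h₁₂ := hadj (hS h₁ d₁) (hS h₂ d₂) fun h => h₂P (h ▸ le_sup_right)
  obtain hstar | htop := le_or_le_of_pairwise_isAdjacent hclique ⟨_, hS h₁ d₁, rfl⟩
    ⟨_, hS h₂ d₂, rfl⟩ h₁₂.ne
  · have := h₁₂.2
    rw [hΦ.finrank_eq (hS h₁ d₁).1 (by omega)] at this
    exact ⟨_, by omega, fun X hX hPX hXd => hstar _ ⟨X, ⟨hX, hPX, hXd⟩, rfl⟩⟩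
  · exact absurd (htop _ ⟨_, hS h₃ d₃, rfl⟩)
      (hΦ.not_map_sup_le_sup hk hP h₁ h₂ h₃ hQ₁ hQ₂ hQ₃ h₁P h₂P h₃P)

end IsMonotoneCodeEmbedding

/-- A map of points `g` compatible with `Φ` on the lines with a non-degenerate code: this recovers
the images of degenerate points, on which `Φ` is uncontrolled. -/
structure IsPointExtension (Φ g : Submodule F (Fin n → F) → Submodule F (Fin n → F)) : Prop where
  finrank_eq : ∀ P : Submodule F (Fin n → F), finrank F P = 1 → finrank F (g P) = 1
  le : ∀ P X : Submodule F (Fin n → F), finrank F P = 1 → IsNondegenerate X → P ≤ X →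
    finrank F X = 2 → g P ≤ Φ X

namespace IsPointExtension

omit [Finite F] in
lemma eq_map (hg : IsPointExtension Φ g) (hΦ : IsMonotoneCodeEmbedding k Φ) (hk : 2 ≤ k)
    (hn : 3 ≤ n) (hQ : IsNondegenerate Q) (hQ1 : finrank F Q = 1) : g Q = Φ Q := by
  obtain ⟨X, Y, hXY, hX, rfl⟩ := exists_isAdjacent_inf_eq (Z := Q) (by omega)
  have hY := hXY.1
  have hXn : IsNondegenerate X := hQ.mono inf_le_left
  have hYn : IsNondegenerate Y := hQ.mono inf_le_right
  have hΦXY := hΦ.isAdjacent hXn hYn (by omega) hXY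
  have hΦX := hΦ.finrank_eq hXn (by omega)
  have hΦQ := hΦ.finrank_eq hQ (by omega)
  have hgQ := hg.finrank_eq _ hQ1
  rw [← hΦXY.inf_eq (hg.le _ X hQ1 hXn inf_le_left (by omega))
    (hg.le _ Y hQ1 hYn inf_le_right (by omega)) (by omega)]
  exact hΦXY.inf_eq (hΦ.mono inf_le_left) (hΦ.mono inf_le_right) (by omega)

omit [Finite F] in
lemma le_of_le (hg : IsPointExtension Φ g) (hΦ : IsMonotoneCodeEmbedding k Φ) (hk : 2 ≤ k)
    (hn : 3 ≤ n) (hQ : IsNondegenerate Q) (hQ1 : finrank F Q = 1) (hP : finrank F P = 1)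
    (hQX : Q ≤ X) (hPX : P ≤ X) : g P ≤ Φ X := by
  by_cases hPQ : P ≤ Q
  · rw [eq_of_le_of_finrank_eq hPQ (hP.trans hQ1.symm), hg.eq_map hΦ hk hn hQ hQ1]
    exact hΦ.mono hQX
  · exact (hg.le P (Q ⊔ P) hP (hQ.mono le_sup_left) le_sup_right
      (by rw [finrank_sup_of_not_le hP hPQ, hQ1])).trans (hΦ.mono (sup_le hQX hPX))

omit [Finite F] in
lemma eq_map_of_eq (hg : IsPointExtension Φ g) (hΦ : IsMonotoneCodeEmbedding k Φ) (hk : 2 ≤ k)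
    (hP : finrank F P = 1) (hQ : finrank F Q = 1) (hPQ : ¬ Q ≤ P) (h : g P = g Q)
    {R : Submodule F (Fin n → F)} (hRn : IsNondegenerate R) (hR : finrank F R = 1)
    (hRPQ : ¬ R ≤ P ⊔ Q) : g P = Φ R := by
  have dP := finrank_sup_of_not_le hR fun h => hRPQ (h.trans le_sup_left)
  have dQ := finrank_sup_of_not_le hR fun h => hRPQ (h.trans le_sup_right)
  have nP : IsNondegenerate (P ⊔ R) := hRn.mono le_sup_right
  have nQ : IsNondegenerate (Q ⊔ R) := hRn.mono le_sup_right
  have hQPR : ¬ Q ≤ P ⊔ R := fun hQR => hRPQ (le_sup_of_le_sup hQ hR hPQ hQR)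
  have hadj := hΦ.isAdjacent nP nQ (by omega) (.of_ge (A := R) (by omega)
    (fun h => hQPR (h ▸ le_sup_left)) le_sup_right le_sup_right (by omega))
  have hΦP := hΦ.finrank_eq nP (by omega)
  have hΦR := hΦ.finrank_eq hRn (by omega)
  have hgP := hg.finrank_eq P hP
  rw [← hadj.inf_eq (hg.le P _ hP nP le_sup_left (by omega))
    (h ▸ hg.le Q _ hQ nQ le_sup_left (by omega)) (by omega)]
  exact hadj.inf_eq (hΦ.mono le_sup_right) (hΦ.mono le_sup_right) (by omega)

omit [Finite F] in
lemma inj (hg : IsPointExtension Φ g) (hΦ : IsMonotoneCodeEmbedding k Φ) (hq : 2 < Nat.card F)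
    (hk : 2 ≤ k) (hn : 4 ≤ n) (hP : finrank F P = 1) (hQ : finrank F Q = 1) (h : g P = g Q) :
    P = Q := by
  by_contra hne
  have hPQ : ¬ Q ≤ P := fun hQP => hne (eq_of_le_of_finrank_eq hQP (hQ.trans hP.symm)).symm
  have dPQ := finrank_sup_of_not_le hQ hPQ
  obtain ⟨R, hRn, hR, hRPQ⟩ := exists_nondegenerate_point_not_le hq (A := P ⊔ Q) (by omega)
  have dR := finrank_sup_of_not_le hR hRPQ
  obtain ⟨S, hSn, hS, hSPQ⟩ := exists_nondegenerate_point_not_le hq (A := P ⊔ Q ⊔ R) (by omega)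
  have hRS : R = S := hΦ.inj hRn hSn (hR.trans hS.symm) (by omega) <|
    (hg.eq_map_of_eq hΦ hk hP hQ hPQ h hRn hR hRPQ).symm.trans
      (hg.eq_map_of_eq hΦ hk hP hQ hPQ h hSn hS fun h => hSPQ (h.trans le_sup_left))
  exact hSPQ (hRS ▸ le_sup_right)

lemma le_sup_of_le_plane (hg : IsPointExtension Φ g) (hΦ : IsMonotoneCodeEmbedding k Φ)
    (hk : 2 ≤ k) (hn : 3 ≤ n) (hE : finrank F E = 3) (hQ : IsNondegenerate Q)
    (hQ1 : finrank F Q = 1) (hQE : Q ≤ E) (hY : IsNondegenerate Y) (hY2 : finrank F Y = 2)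
    (hYE : Y ≤ E) (hQY : ¬ Q ≤ Y) (hP : finrank F P = 1) (hPE : P ≤ E) : g P ≤ Φ Q ⊔ Φ Y := by
  by_cases hPQ : P ≤ Q
  · rw [eq_of_le_of_finrank_eq hPQ (hP.trans hQ1.symm), hg.eq_map hΦ hk hn hQ hQ1]
    exact le_sup_left
  · have hX := finrank_sup_of_not_le hP hPQ
    refine (hg.le P (Q ⊔ P) hP (hQ.mono le_sup_left) le_sup_right (by omega)).trans ?_
    exact hΦ.map_le_of_isAdjacent hQ hY le_sup_left hX (by omega)
      (.of_le (by omega) (fun h => hQY (h ▸ le_sup_left)) (sup_le hQE hPE) hYE (by omega)) hQY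
      le_sup_left le_sup_right

/-- A line is the intersection of two planes each spanned by a non-degenerate point and a
non-degenerate line, and the points of such a plane go into a plane. -/
lemma isCollineation (hg : IsPointExtension Φ g) (hΦ : IsMonotoneCodeEmbedding k Φ)
    (hq : 2 < Nat.card F) (hk : 2 ≤ k) (hn : 4 ≤ n) : IsCollineation g := by
  have hinj (P Q : Submodule F (Fin n → F)) (hP : finrank F P = 1) (hQ : finrank F Q = 1)
      (h : g P = g Q) : P = Q := hg.inj hΦ hq hk hn hP hQ h
  have exists_plane {A L : Submodule F (Fin n → F)} (hL : finrank F L = 2) (hLA : L ≤ A)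
      (hA : finrank F A < n) : ∃ Q W : Submodule F (Fin n → F), ¬ Q ≤ A ∧ finrank F Q = 1 ∧
        finrank F W ≤ 3 ∧ ∀ P ≤ L ⊔ Q, finrank F P = 1 → g P ≤ W := by
    obtain ⟨Q, Y, hQ, hQ1, hQA, hY, hY2, hYQ, hQY⟩ := exists_nondegenerate_point_line hq hL hLA hA
    refine ⟨Q, Φ Q ⊔ Φ Y, hQA, hQ1, ?_, fun P hPE hP => ?_⟩
    · have := finrank_add_le_finrank_add_finrank (Φ Q) (Φ Y)
      have := hΦ.finrank_eq hQ (by omega)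
      have := hΦ.finrank_eq hY (by omega)
      omega
    · exact hg.le_sup_of_le_plane hΦ hk (by omega)
        (by rw [finrank_sup_of_not_le hQ1 fun h => hQA (h.trans hLA), hL]) hQ hQ1 le_sup_right
        hY hY2 hYQ hQY hP hPE
  refine ⟨hg.finrank_eq, hinj, fun L hL => ?_⟩
  obtain ⟨Q₁, W₁, hQ₁L, hQ₁, hW₁, hgW₁⟩ := exists_plane hL le_rfl (by omega)
  have hE₁ := finrank_sup_of_not_le hQ₁ hQ₁L
  obtain ⟨Q₂, W₂, hQ₂L, hQ₂, hW₂, hgW₂⟩ := exists_plane hL (le_sup_left (b := Q₁)) (by omega)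
  refine ⟨W₁ ⊓ W₂, ?_, fun P hPL hP =>
    le_inf (hgW₁ P (hPL.trans le_sup_left) hP) (hgW₂ P (hPL.trans le_sup_left) hP)⟩
  by_contra! hlt
  have hW₂₁ : W₂ ≤ W₁ := inf_eq_right.1 (eq_of_le_of_finrank_le inf_le_right (by omega))
  obtain ⟨P, hPE₁, hP, hPQ₂⟩ := exists_point_eq_of_injective hg.finrank_eq hinj
    (B := L ⊔ Q₁) (by omega) hgW₁ ((hgW₂ Q₂ le_sup_right hQ₂).trans hW₂₁) (hg.finrank_eq Q₂ hQ₂)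
  exact hQ₂L (hinj P Q₂ hP hQ₂ hPQ₂ ▸ hPE₁)

end IsPointExtension

theorem IsMonotoneCodeEmbedding.exists_orderIso_of_two_lt_card
    (hΦ : IsMonotoneCodeEmbedding k Φ) (hq : 2 < Nat.card F) (hk : 2 ≤ k) (hkn : k + 2 ≤ n) :
    ∃ G : Submodule F (Fin n → F) ≃o Submodule F (Fin n → F), ∀ X : Submodule F (Fin n → F),
      finrank F X = k → (∃ w ∈ X, ∀ i, w i ≠ 0) → G X = Φ X := by
  choose! g hg hgΦ using fun (P : Submodule F (Fin n → F)) (hP : finrank F P = 1) =>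
    hΦ.exists_point_le hq hk hkn hP
  have hg : IsPointExtension Φ g := ⟨hg, fun P X hP hX hPX hX2 => hgΦ P hP X hX hPX hX2⟩
  obtain ⟨G, hG⟩ := (hg.isCollineation hΦ hq hk (by omega)).exists_orderIso
  refine ⟨G, fun X hXk ⟨w, hwX, hw⟩ => ?_⟩
  have hX : IsNondegenerate X := isNondegenerate_of_mem hw hwX
  refine orderIso_eq_of_span_singleton_le G (hΦ.finrank_eq hX hXk.le).symm fun x hxX hx0 => ?_
  have hw0 : w ≠ 0 := by
    rintro rfl
    exact hw ⟨0, by omega⟩ rfl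
  rw [hG _ (finrank_span_singleton hx0)]
  exact hg.le_of_le hΦ hk (by omega) (isNondegenerate_of_mem hw (mem_span_singleton_self w))
    (finrank_span_singleton hw0) (finrank_span_singleton hx0)
    ((span_singleton_le_iff_mem w X).2 hwX) ((span_singleton_le_iff_mem x X).2 hxX)

end PointExtension

/-! ### The field with two elements -/

section CardEqTwo

variable {F V : Type*} [Field F] [AddCommGroup V] [Module F V] {A : Submodule F V} {v w x y z : V}

lemma eq_zero_or_eq_one (hF : Nat.card F = 2) (c : F) : c = 0 ∨ c = 1 := by
  obtain ⟨_, -, h⟩ := (Nat.card_eq_two_iff' (0 : F)).1 hF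
  exact or_iff_not_imp_left.2 fun hc => (h c hc).trans (h 1 one_ne_zero).symm

lemma add_self_eq_zero_of_card_eq_two (hF : Nat.card F = 2) (v : V) : v + v = 0 := by
  have h : (1 : F) + 1 = 0 := (eq_zero_or_eq_one hF _).resolve_right (by simp)
  rw [← one_smul F v, ← add_smul, h, zero_smul]

lemma mem_span_singleton_iff_of_card_eq_two (hF : Nat.card F = 2) :
    x ∈ F ∙ v ↔ x = 0 ∨ x = v := by
  refine ⟨fun h => ?_, ?_⟩
  · obtain ⟨c, rfl⟩ := mem_span_singleton.1 h
    exact (eq_zero_or_eq_one hF c).imp (fun hc => by rw [hc, zero_smul])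
      fun hc => by rw [hc, one_smul]
  · rintro (rfl | rfl)
    exacts [zero_mem _, mem_span_singleton_self _]

lemma mem_sup_span_singleton_iff_of_card_eq_two (hF : Nat.card F = 2) :
    x ∈ A ⊔ F ∙ v ↔ x ∈ A ∨ x + v ∈ A := by
  have hvv := add_self_eq_zero_of_card_eq_two hF v
  refine ⟨fun h => ?_, ?_⟩
  · obtain ⟨a, ha, b, hb, rfl⟩ := mem_sup.1 h
    obtain rfl | rfl := (mem_span_singleton_iff_of_card_eq_two hF).1 hb
    · exact Or.inl (by rwa [add_zero])
    · exact Or.inr (by rwa [add_assoc, hvv, add_zero])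
  · rintro (h | h)
    · exact mem_sup_left h
    · rw [← add_zero x, ← hvv, ← add_assoc]
      exact add_mem_sup h (mem_span_singleton_self v)

lemma finrank_span_pair_of_card_eq_two [FiniteDimensional F V] (hF : Nat.card F = 2)
    (hv : v ≠ 0) (hw : w ≠ 0) (hvw : w ≠ v) : finrank F ↥(F ∙ v ⊔ F ∙ w) = 2 := by
  rw [finrank_sup_span_singleton
    fun h => ((mem_span_singleton_iff_of_card_eq_two hF).1 h).elim hw hvw,
    finrank_span_singleton hv]

lemma add_eq_of_mem_of_card_eq_two [FiniteDimensional F V] (hF : Nat.card F = 2)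
    (hA : finrank F A = 2) (hx : x ∈ A) (hy : y ∈ A) (hz : z ∈ A) (hx0 : x ≠ 0)
    (hy0 : y ≠ 0) (hz0 : z ≠ 0) (hxy : y ≠ x) (hxz : z ≠ x) (hyz : z ≠ y) : x + y = z := by
  have hspan : F ∙ x ⊔ F ∙ y = A := eq_of_le_of_finrank_eq
    (sup_le ((span_singleton_le_iff_mem _ _).2 hx) ((span_singleton_le_iff_mem _ _).2 hy))
    ((finrank_span_pair_of_card_eq_two hF hx0 hy0 hxy).trans hA.symm)
  have hneg := fun v : V => eq_neg_of_add_eq_zero_left (add_self_eq_zero_of_card_eq_two hF v)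
  rw [← hspan, mem_sup_span_singleton_iff_of_card_eq_two hF,
    mem_span_singleton_iff_of_card_eq_two hF, mem_span_singleton_iff_of_card_eq_two hF] at hz
  obtain (h | h) | h | h := hz
  · exact absurd h hz0
  · exact absurd h hxz
  · exact absurd ((eq_neg_of_add_eq_zero_left h).trans (hneg y).symm) hyz
  · rw [← h, add_assoc, add_self_eq_zero_of_card_eq_two hF, add_zero]

end CardEqTwo

section OneFreeLine

variable {F : Type*} [Field F] {n : ℕ} {L L' : Submodule F (Fin n → F)} {v a : Fin n → F}

/-- A non-degenerate line that misses the all-ones vector. Over the field with two elements the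
all-ones vector spans the only non-degenerate point, so these lines are the ones on which a monotone
embedding is not already controlled by its value at a point. -/
structure IsOneFreeLine (L : Submodule F (Fin n → F)) : Prop where
  isNondegenerate : IsNondegenerate L
  finrank_eq : finrank F L = 2
  one_notMem : (1 : Fin n → F) ∉ L

lemma isOneFreeLine_span_pair (hF : Nat.card F = 2) (hv : v ≠ 1) (hva : ∀ j, v j = 0 → a j = 1)
    (h10 : ∃ i, v i = 1 ∧ a i = 0) (h11 : ∃ i, v i = 1 ∧ a i = 1) :
    IsOneFreeLine (F ∙ v ⊔ F ∙ a) := by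
  obtain ⟨i, hvi, hai⟩ := h10
  obtain ⟨j, hvj, haj⟩ := h11
  have hv0 : v ≠ 0 := fun h => by simp [h] at hvi
  have ha0 : a ≠ 0 := fun h => by simp [h] at haj
  have hav : a ≠ v := fun h => by simp [← h, hai] at hvi
  refine ⟨isNondegenerate_iff.2 fun l => ?_, finrank_span_pair_of_card_eq_two hF hv0 ha0 hav,
    fun h => ?_⟩
  · obtain hl | hl := eq_or_ne (v l) 0
    · exact ⟨a, mem_sup_right (mem_span_singleton_self a), by simp [hva l hl]⟩
    · exact ⟨v, mem_sup_left (mem_span_singleton_self v), hl⟩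
  · rw [mem_sup_span_singleton_iff_of_card_eq_two hF, mem_span_singleton_iff_of_card_eq_two hF,
      mem_span_singleton_iff_of_card_eq_two hF] at h
    obtain (h | h) | h | h := h
    · simpa using congrFun h i
    · exact hv h.symm
    · simpa [hai] using congrFun h i
    · have := congrFun h j
      simp [hvj, haj] at this

lemma IsOneFreeLine.exists_eq_span_pair (hF : Nat.card F = 2) (hL : IsOneFreeLine L) (hvL : v ∈ L)
    (hv : v ≠ 0) : ∃ a, L = F ∙ v ⊔ F ∙ a ∧ (∀ j, v j = 0 → a j = 1) ∧
      (∃ i, v i = 1 ∧ a i = 0) ∧ ∃ i, v i = 1 ∧ a i = 1 := by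
  have h01 := eq_zero_or_eq_one hF
  have hvL' : F ∙ v ≤ L := (span_singleton_le_iff_mem _ _).2 hvL
  obtain ⟨a, haL, hav⟩ := exists_mem_notMem_of_finrank_lt (X := F ∙ v) (Y := L)
    (by rw [finrank_span_singleton hv, hL.finrank_eq]; exact one_lt_two)
  have hspan : F ∙ v ⊔ F ∙ a = L :=
    eq_of_le_of_finrank_eq (sup_le hvL' ((span_singleton_le_iff_mem _ _).2 haL))
      (by rw [finrank_sup_span_singleton hav, finrank_span_singleton hv, hL.finrank_eq])
  have hva (j : Fin n) (hj : v j = 0) : a j = 1 := by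
    refine (h01 (a j)).resolve_left fun haj => hL.isNondegenerate j (hspan ▸ sup_le ?_ ?_)
    · exact (span_singleton_le_iff_mem _ _).2 hj
    · exact (span_singleton_le_iff_mem _ _).2 haj
  refine ⟨a, hspan.symm, hva, ?_, ?_⟩ <;> by_contra! h
  · refine hL.one_notMem ?_
    convert haL using 1
    ext j
    obtain hj | hj := h01 (v j)
    · exact (hva j hj).symm
    · exact ((h01 (a j)).resolve_left (h j hj)).symm
  · refine hL.one_notMem ?_
    convert add_mem hvL haL using 1
    ext j
    obtain hj | hj := h01 (v j)
    · simp [hj, hva j hj]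
    · simp [hj, (h01 (a j)).resolve_right (h j hj)]

-- With `L = ⟨v, a⟩` and `L' = ⟨v + 1, b⟩` the line `⟨a, b⟩` works: `a`, `b` and `1` agree at a
-- coordinate where `v` is `1` and at one where `v` is `0`.
lemma IsOneFreeLine.exists_le_sup_le_sup (hF : Nat.card F = 2) (hL : IsOneFreeLine L)
    (hL' : IsOneFreeLine L') (hvL : v ∈ L) (hvL' : v + 1 ∈ L') :
    ∃ M : Submodule F (Fin n → F), IsOneFreeLine M ∧ L ≤ M ⊔ F ∙ v ∧ L' ≤ M ⊔ F ∙ (v + 1) ∧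
      v ∉ M ⊔ F ∙ 1 := by
  have hF11 : (1 : F) + 1 = 0 := add_self_eq_zero_of_card_eq_two hF 1
  have h01 (j : Fin n) : v j + 1 = 0 ↔ v j = 1 := by
    obtain h | h := eq_zero_or_eq_one hF (v j) <;> simp [h, hF11]
  have hv0 : v ≠ 0 := by rintro rfl; exact hL'.one_notMem (by simpa using hvL')
  have hv1 : v + 1 ≠ 0 := fun h => hL.one_notMem <| by
    rwa [show v = 1 from funext fun j => (h01 j).1 (congrFun h j)] at hvL
  obtain ⟨a, rfl, ha, ⟨i₁, -, hai₁⟩, i₂, hvi₂, hai₂⟩ := hL.exists_eq_span_pair hF hvL hv0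
  obtain ⟨b, rfl, hb, ⟨i₃, hvi₃, hbi₃⟩, i₄, hvi₄, hbi₄⟩ := hL'.exists_eq_span_pair hF hvL' hv1
  simp only [Pi.add_apply, Pi.one_apply, h01, add_eq_right] at hb hvi₃ hvi₄
  have ha1 : a ≠ 1 := fun h => by simp [h] at hai₁
  refine ⟨F ∙ a ⊔ F ∙ b, isOneFreeLine_span_pair hF ha1 (fun j hj => hb j ?_)
    ⟨i₃, ha i₃ hvi₃, hbi₃⟩ ⟨i₂, hai₂, hb i₂ hvi₂⟩, ?_, ?_, fun h => ?_⟩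
  · exact (eq_zero_or_eq_one hF (v j)).resolve_left fun hvj => by simp [ha j hvj] at hj
  · exact sup_le le_sup_right (le_sup_left.trans le_sup_left)
  · exact sup_le le_sup_right (le_sup_right.trans le_sup_left)
  · rw [sup_assoc, mem_sup] at h
    obtain ⟨_, ha', _, hb', hv⟩ := h
    obtain ⟨α, rfl⟩ := mem_span_singleton.1 ha'
    rw [mem_sup] at hb'
    obtain ⟨_, hb', _, h1, rfl⟩ := hb'
    obtain ⟨β, rfl⟩ := mem_span_singleton.1 hb'
    obtain ⟨γ, rfl⟩ := mem_span_singleton.1 h1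
    have h₂ := congrFun hv i₂
    have h₄ := congrFun hv i₄
    simp only [Pi.add_apply, Pi.smul_apply, Pi.one_apply, smul_eq_mul, mul_one, hai₂, hb i₂ hvi₂,
      hvi₂, ha i₄ hvi₄, hbi₄, hvi₄] at h₂ h₄
    exact one_ne_zero (h₂.symm.trans h₄)

namespace IsOneFreeLine

lemma ne_one (hL : IsOneFreeLine L) (hvL : v ∈ L) : v ≠ 1 := fun h => hL.one_notMem (h ▸ hvL)

lemma finrank_sup_span_one (hL : IsOneFreeLine L) : finrank F ↥(L ⊔ F ∙ 1) = 3 := by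
  rw [finrank_sup_span_singleton hL.one_notMem, hL.finrank_eq]

lemma eq_zero_or_eq_of_apply_eq_zero (hF : Nat.card F = 2) (hL : IsOneFreeLine L) (hvL : v ∈ L)
    (hv : v ≠ 0) {x : Fin n → F} (hxL : x ∈ L) {i : Fin n} (hvi : v i = 0) (hxi : x i = 0) :
    x = 0 ∨ x = v := by
  by_contra! hx
  obtain ⟨w, hwL, hwi⟩ := isNondegenerate_iff.1 hL.isNondegenerate i
  have hw {u : Fin n → F} (hui : u i = 0) : w ≠ u := fun h => hwi (h ▸ hui)
  have hsum := add_eq_of_mem_of_card_eq_two hF hL.finrank_eq hvL hxL hwL hv hx.1 (hw rfl) hx.2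
    (hw hvi) (hw hxi)
  exact hwi (by rw [← hsum, Pi.add_apply, hvi, hxi, add_zero])

lemma eq_of_sup_span_one_eq (hF : Nat.card F = 2) (hL : IsOneFreeLine L) (hL' : IsOneFreeLine L')
    (hvL : v ∈ L) (hvL' : v ∈ L') (hv : v ≠ 0) (h : L ⊔ F ∙ 1 = L' ⊔ F ∙ 1) : L = L' := by
  obtain ⟨i, hi⟩ := Function.ne_iff.1 (hL.ne_one hvL)
  have hvi : v i = 0 := (eq_zero_or_eq_one hF (v i)).resolve_right hi
  refine (eq_of_le_of_finrank_eq (fun b hb => ?_) (hL'.finrank_eq.trans hL.finrank_eq.symm)).symm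
  obtain hbL | hbL := (mem_sup_span_singleton_iff_of_card_eq_two hF).1 (h.ge (mem_sup_left hb))
  · exact hbL
  obtain hbi | hbi := eq_zero_or_eq_one hF (b i)
  · obtain rfl | rfl := hL'.eq_zero_or_eq_of_apply_eq_zero hF hvL' hv hb hvi hbi
    exacts [zero_mem L, hvL]
  · have hb1 : b + 1 ∈ L' := by
      have hi : (b + 1) i = 0 := by
        rw [Pi.add_apply, hbi, Pi.one_apply, add_self_eq_zero_of_card_eq_two hF]
      obtain h0 | hv := hL.eq_zero_or_eq_of_apply_eq_zero hF hvL hv hbL hvi hi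
      exacts [h0 ▸ zero_mem L', hv ▸ hvL']
    exact absurd ((Submodule.add_mem_iff_right _ hb).1 hb1) hL'.one_notMem

end IsOneFreeLine

lemma exists_isOneFreeLine_mem (hF : Nat.card F = 2) (hv1 : v ≠ 1)
    (hv : (Function.support v).Nontrivial) : ∃ L, IsOneFreeLine L ∧ v ∈ L := by
  obtain ⟨i, hi, j, hj, hij⟩ := hv
  have hone (l : Fin n) (hl : v l ≠ 0) : v l = 1 := (eq_zero_or_eq_one hF _).resolve_left hl
  have hF11 : (1 : F) + 1 = 0 := add_self_eq_zero_of_card_eq_two hF 1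
  have ha {l : Fin n} (hl : l ≠ i) : (1 + Pi.single i 1 : Fin n → F) l = 1 := by
    rw [Pi.add_apply, Pi.single_eq_of_ne hl, Pi.one_apply, add_zero]
  exact ⟨F ∙ v ⊔ F ∙ (1 + Pi.single i 1),
    isOneFreeLine_span_pair hF hv1 (fun l hl => ha fun hli => hi (hli ▸ hl))
      ⟨i, hone i hi, by simp [hF11]⟩ ⟨j, hone j hj, ha hij.symm⟩,
    mem_sup_left (mem_span_singleton_self v)⟩

lemma IsOneFreeLine.support_nontrivial (hF : Nat.card F = 2) (hL : IsOneFreeLine L) (hvL : v ∈ L)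
    (hv : v ≠ 0) : (Function.support v).Nontrivial := by
  obtain ⟨a, -, -, ⟨i, hvi, hai⟩, j, hvj, haj⟩ := hL.exists_eq_span_pair hF hvL hv
  exact ⟨i, by simp [hvi], j, by simp [hvj], fun hij => by simp [← hij, hai] at haj⟩

lemma support_nontrivial_or_support_add_one_nontrivial (hn : 3 ≤ n) (v : Fin n → F) :
    (Function.support v).Nontrivial ∨ (Function.support (v + 1)).Nontrivial := by
  by_contra! h
  have hcover : Function.support v ∪ Function.support (v + 1) = Set.univ := by
    refine Set.eq_univ_of_forall fun i => or_iff_not_imp_left.2 fun hi => ?_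
    simp [Function.notMem_support.1 hi]
  have hcard := Set.ncard_union_le (Function.support v) (Function.support (v + 1))
  rw [hcover, Set.ncard_univ, Nat.card_fin] at hcard
  have h₁ := Set.ncard_le_one_iff_subsingleton.2 h.1
  have h₂ := Set.ncard_le_one_iff_subsingleton.2 h.2
  omega

end OneFreeLine

namespace IsMonotoneCodeEmbedding

variable {F : Type*} [Field F] {n k : ℕ} {Φ : Submodule F (Fin n → F) → Submodule F (Fin n → F)}
  {L L' : Submodule F (Fin n → F)} {v p : Fin n → F}

lemma finrank_map_span_one [NeZero n] (hΦ : IsMonotoneCodeEmbedding k Φ) (hk : 1 ≤ k) :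
    finrank F (Φ (F ∙ 1)) = 1 := by
  have h1 : finrank F ↥(F ∙ (1 : Fin n → F)) = 1 := finrank_span_singleton one_ne_zero
  rw [hΦ.finrank_eq (isNondegenerate_of_one_mem (mem_span_singleton_self 1)) (h1.trans_le hk), h1]

lemma finrank_map_span_pair [NeZero n] (hΦ : IsMonotoneCodeEmbedding k Φ) (hF : Nat.card F = 2)
    (hk : 2 ≤ k) (hv0 : v ≠ 0) (hv1 : v ≠ 1) : finrank F (Φ (F ∙ v ⊔ F ∙ 1)) = 2 := by
  have h := finrank_span_pair_of_card_eq_two hF hv0 one_ne_zero hv1.symm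
  rw [hΦ.finrank_eq (isNondegenerate_of_one_mem (mem_sup_right (mem_span_singleton_self 1)))
    (h.trans_le hk), h]

lemma map_sup_span_singleton (hΦ : IsMonotoneCodeEmbedding k Φ) (hL : IsNondegenerate L)
    (hLk : finrank F L < k) (hv : v ∉ L) (hp : p ∈ Φ (L ⊔ F ∙ v)) (hpL : p ∉ Φ L) :
    Φ (L ⊔ F ∙ v) = Φ L ⊔ F ∙ p := by
  refine (eq_of_le_of_finrank_eq
    (sup_le (hΦ.mono le_sup_left) ((span_singleton_le_iff_mem _ _).2 hp)) ?_).symm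
  have hLv := finrank_sup_span_singleton hv
  rw [finrank_sup_span_singleton hpL, hΦ.finrank_eq hL hLk.le,
    hΦ.finrank_eq (hL.mono le_sup_left) (by omega), hLv]

lemma sup_span_singleton_eq (hΦ : IsMonotoneCodeEmbedding k Φ) (hL : IsNondegenerate L)
    (hLk : finrank F L < k) {w : Fin n → F} (hv : v ∉ L) (hw : w ∉ L) (hpv : p ∈ Φ (L ⊔ F ∙ v))
    (hpw : p ∈ Φ (L ⊔ F ∙ w)) (hpL : p ∉ Φ L) : L ⊔ F ∙ v = L ⊔ F ∙ w := by
  have hLv := finrank_sup_span_singleton hv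
  refine hΦ.inj (hL.mono le_sup_left) (hL.mono le_sup_left)
    (hLv.trans (finrank_sup_span_singleton hw).symm) (by omega) ?_
  rw [hΦ.map_sup_span_singleton hL hLk hv hpv hpL, hΦ.map_sup_span_singleton hL hLk hw hpw hpL]

variable [Finite F]

lemma one_mem_of_map_span_one_le [NeZero n] (hΦ : IsMonotoneCodeEmbedding k Φ) (hk : 2 ≤ k)
    (hL : IsNondegenerate L) (hL2 : finrank F L = 2) (h : Φ (F ∙ 1) ≤ Φ L) : 1 ∈ L := by
  have h1 : finrank F ↥(F ∙ (1 : Fin n → F)) = 1 := finrank_span_singleton one_ne_zero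
  exact (span_singleton_le_iff_mem _ _).1 <|
    hΦ.le_of_map_le_map (isNondegenerate_of_one_mem (mem_span_singleton_self 1)) hL (by omega)
      (by omega) h

lemma notMem_map_span_one [NeZero n] (hΦ : IsMonotoneCodeEmbedding k Φ) (hk : 2 ≤ k)
    (hL : IsOneFreeLine L) (hpL : p ∈ Φ L) (hp : p ≠ 0) : p ∉ Φ (F ∙ 1) := fun hp1 => by
  refine hL.one_notMem (hΦ.one_mem_of_map_span_one_le hk hL.isNondegenerate hL.finrank_eq ?_)
  rwa [eq_span_singleton_of_mem_of_finrank_eq_one (hΦ.finrank_map_span_one (by omega)) hp1 hp,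
    span_singleton_le_iff_mem]

omit [Finite F] in
lemma finrank_map_inf_map_span_pair [NeZero n] (hΦ : IsMonotoneCodeEmbedding k Φ)
    (hF : Nat.card F = 2) (hk : 2 ≤ k) (hL : IsOneFreeLine L) (hvL : v ∈ L) (hv : v ≠ 0) :
    finrank F ↥(Φ L ⊓ Φ (F ∙ v ⊔ F ∙ 1)) = 1 := by
  have hpair := finrank_span_pair_of_card_eq_two hF hv one_ne_zero (hL.ne_one hvL).symm
  have h1 : (1 : Fin n → F) ∈ F ∙ v ⊔ F ∙ 1 := mem_sup_right (mem_span_singleton_self 1)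
  have hadj : IsAdjacent L (F ∙ v ⊔ F ∙ 1) := IsAdjacent.of_ge (A := F ∙ v)
    (hL.finrank_eq.trans hpair.symm) (fun h => hL.one_notMem (h ▸ h1))
    ((span_singleton_le_iff_mem _ _).2 hvL) le_sup_left
    (by rw [hL.finrank_eq, finrank_span_singleton hv])
  have hΦadj := hΦ.isAdjacent hL.isNondegenerate (isNondegenerate_of_one_mem h1)
    (hL.finrank_eq.trans_le hk) hadj
  have := hΦadj.2
  rw [hΦ.finrank_eq hL.isNondegenerate (hL.finrank_eq.trans_le hk), hL.finrank_eq] at this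
  omega

omit [Finite F] in
lemma map_span_pair_inf [NeZero n] (hΦ : IsMonotoneCodeEmbedding k Φ) (hF : Nat.card F = 2)
    (hk : 2 ≤ k) (hL : IsOneFreeLine L) {x y : Fin n → F} (hx : x ∈ L) (hy : y ∈ L) (hx0 : x ≠ 0)
    (hy0 : y ≠ 0) (hxy : x ≠ y) : Φ (F ∙ x ⊔ F ∙ 1) ⊓ Φ (F ∙ y ⊔ F ∙ 1) = Φ (F ∙ 1) := by
  have hpair {z : Fin n → F} (hz : z ∈ L) (hz0 : z ≠ 0) :=
    finrank_span_pair_of_card_eq_two hF hz0 one_ne_zero (hL.ne_one hz).symm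
  have h1 (A : Submodule F (Fin n → F)) : IsNondegenerate (A ⊔ F ∙ 1) :=
    isNondegenerate_of_one_mem (mem_sup_right (mem_span_singleton_self 1))
  have hne : F ∙ x ⊔ F ∙ 1 ≠ F ∙ y ⊔ F ∙ 1 := fun h => by
    have hxy' : x ∈ F ∙ y ⊔ F ∙ 1 := h.le (mem_sup_left (mem_span_singleton_self x))
    have h1y : (1 : Fin n → F) ∈ F ∙ y ⊔ F ∙ 1 := mem_sup_right (mem_span_singleton_self 1)
    have hsum := add_eq_of_mem_of_card_eq_two hF (hpair hy hy0) hxy'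
      (mem_sup_left (mem_span_singleton_self y)) h1y hx0 hy0 one_ne_zero hxy.symm
      (hL.ne_one hx).symm (hL.ne_one hy).symm
    exact hL.one_notMem (hsum ▸ add_mem hx hy)
  have hadj := hΦ.isAdjacent (h1 _) (h1 _) ((hpair hx hx0).trans_le hk) <|
    IsAdjacent.of_ge (A := F ∙ 1) ((hpair hx hx0).trans (hpair hy hy0).symm) hne le_sup_right
      le_sup_right (by rw [hpair hx hx0, finrank_span_singleton one_ne_zero])
  exact hadj.inf_eq (hΦ.mono le_sup_right) (hΦ.mono le_sup_right)
      (by rw [hΦ.finrank_map_span_pair hF hk hx0 (hL.ne_one hx),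
      hΦ.finrank_map_span_one (by omega)])

omit [Finite F] in
-- Through `v`, the join with the all-ones vector separates distinct lines.
lemma map_sup_span_one_inf [NeZero n] (hΦ : IsMonotoneCodeEmbedding k Φ) (hF : Nat.card F = 2)
    (hk : 3 ≤ k) (hL : IsOneFreeLine L) (hL' : IsOneFreeLine L') (hvL : v ∈ L) (hvL' : v ∈ L')
    (hv : v ≠ 0) (hne : L ≠ L') : Φ (L ⊔ F ∙ 1) ⊓ Φ (L' ⊔ F ∙ 1) = Φ (F ∙ v ⊔ F ∙ 1) := by
  have hv1 := hL.ne_one hvL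
  have h1 (A : Submodule F (Fin n → F)) : IsNondegenerate (A ⊔ F ∙ 1) :=
    isNondegenerate_of_one_mem (mem_sup_right (mem_span_singleton_self 1))
  have hL3 := hL.finrank_sup_span_one
  have hvL₁ : F ∙ v ⊔ F ∙ 1 ≤ L ⊔ F ∙ 1 :=
    sup_le_sup_right ((span_singleton_le_iff_mem v L).2 hvL) _
  have hvL₁' : F ∙ v ⊔ F ∙ 1 ≤ L' ⊔ F ∙ 1 :=
    sup_le_sup_right ((span_singleton_le_iff_mem v L').2 hvL') _
  have hadj : IsAdjacent (L ⊔ F ∙ 1) (L' ⊔ F ∙ 1) := IsAdjacent.of_ge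
    (hL3.trans hL'.finrank_sup_span_one.symm)
    (fun h => hne (hL.eq_of_sup_span_one_eq hF hL' hvL hvL' hv h)) hvL₁ hvL₁'
    (by rw [hL3, finrank_span_pair_of_card_eq_two hF hv one_ne_zero hv1.symm])
  refine (hΦ.isAdjacent (h1 L) (h1 L') (hL3.trans_le hk) hadj).inf_eq
    (hΦ.mono hvL₁) (hΦ.mono hvL₁') ?_
  rw [hΦ.finrank_eq (h1 L) (hL3.trans_le hk), hL3, hΦ.finrank_map_span_pair hF (by omega) hv hv1]

omit [Finite F] in
lemma map_inf_map_span_pair_le [NeZero n] (hΦ : IsMonotoneCodeEmbedding k Φ) (hF : Nat.card F = 2)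
    (hk : 3 ≤ k) (hL : IsOneFreeLine L) (hL' : IsOneFreeLine L') (hvL : v ∈ L) (hvL' : v ∈ L')
    (hv : v ≠ 0) : Φ L ⊓ Φ (F ∙ v ⊔ F ∙ 1) ≤ Φ L' := by
  obtain rfl | hne := eq_or_ne L L'
  · exact inf_le_left
  have hLL' : Φ L ⊓ Φ L' ≤ Φ L ⊓ Φ (F ∙ v ⊔ F ∙ 1) := le_inf inf_le_left <|
    (inf_le_inf (hΦ.mono le_sup_left) (hΦ.mono le_sup_left)).trans
      (hΦ.map_sup_span_one_inf hF hk hL hL' hvL hvL' hv hne).le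
  have hLk : finrank F L ≤ k := hL.finrank_eq.trans_le (by omega)
  have hadj : IsAdjacent L L' := IsAdjacent.of_ge (A := F ∙ v)
    (hL.finrank_eq.trans hL'.finrank_eq.symm) hne ((span_singleton_le_iff_mem _ _).2 hvL)
    ((span_singleton_le_iff_mem _ _).2 hvL') (by rw [hL.finrank_eq, finrank_span_singleton hv])
  have hdim := (hΦ.isAdjacent hL.isNondegenerate hL'.isNondegenerate hLk hadj).2
  rw [hΦ.finrank_eq hL.isNondegenerate hLk, hL.finrank_eq] at hdim
  have hv1 := hΦ.finrank_map_inf_map_span_pair hF (by omega) hL hvL hv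
  rw [← eq_of_le_of_finrank_le hLL' (by omega)]
  exact inf_le_right

lemma mem_sup_span_one_of_mem_map [NeZero n] (hΦ : IsMonotoneCodeEmbedding k Φ)
    (hF : Nat.card F = 2) (hk : 3 ≤ k) (hL : IsOneFreeLine L) (hv0 : v ≠ 0) (hv1 : v ≠ 1)
    (hpv : p ∈ Φ (F ∙ v ⊔ F ∙ 1)) (hp1 : p ∉ Φ (F ∙ 1)) (hpL : p ∈ Φ L) : v ∈ L ⊔ F ∙ 1 := by
  have h1 : IsNondegenerate (F ∙ (1 : Fin n → F)) :=
    isNondegenerate_of_one_mem (mem_span_singleton_self 1)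
  have h1k : finrank F ↥(F ∙ (1 : Fin n → F)) = 1 := finrank_span_singleton one_ne_zero
  have hv : v ∉ F ∙ (1 : Fin n → F) :=
    fun h => ((mem_span_singleton_iff_of_card_eq_two hF).1 h).elim hv0 hv1
  rw [sup_comm] at hpv
  refine hΦ.le_of_map_le_map (h1.mono le_sup_left) (h1.mono le_sup_right) ?_
    (hL.finrank_sup_span_one.trans_le hk) ?_ (mem_sup_right (mem_span_singleton_self v))
  · rw [hL.finrank_sup_span_one, finrank_sup_span_singleton hv, h1k]
  · rw [hΦ.map_sup_span_singleton h1 (by omega) hv hpv hp1]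
    exact sup_le (hΦ.mono le_sup_right)
      ((span_singleton_le_iff_mem _ _).2 (hΦ.mono le_sup_left hpL))

-- A common point of `Φ L` and `Φ L'` would give two distinct planes `⟨M, v⟩` and `⟨M, v + 1⟩`
-- the same image.
lemma notMem_map_of_mem_map [NeZero n] (hΦ : IsMonotoneCodeEmbedding k Φ) (hF : Nat.card F = 2)
    (hk : 3 ≤ k) (hL : IsOneFreeLine L) (hL' : IsOneFreeLine L') (hvL : v ∈ L) (hvL' : v + 1 ∈ L')
    (hp : p ≠ 0) (hpv : p ∈ Φ (F ∙ v ⊔ F ∙ 1)) (hpL : p ∈ Φ L) : p ∉ Φ L' := by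
  intro hpL'
  obtain ⟨M, hM, hLM, hLM', hvM⟩ := hL.exists_le_sup_le_sup hF hL' hvL hvL'
  have h1M : (1 : Fin n → F) ∈ M ⊔ F ∙ 1 := mem_sup_right (mem_span_singleton_self 1)
  have hpM : p ∉ Φ M := fun hpM => hvM <| hΦ.mem_sup_span_one_of_mem_map hF hk hM
    (fun h => hvM (h ▸ zero_mem _)) (hL.ne_one hvL) hpv
    (hΦ.notMem_map_span_one (by omega) hL hpL hp) hpM
  have hvM₀ : v ∉ M := fun h => hvM (mem_sup_left h)
  have hvM₁ : v + 1 ∉ M := fun h => hvM ((Submodule.add_mem_iff_left _ h1M).1 (mem_sup_left h))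
  have heq : M ⊔ F ∙ v = M ⊔ F ∙ (v + 1) := hΦ.sup_span_singleton_eq hM.isNondegenerate
    (hM.finrank_eq.trans_lt hk) hvM₀ hvM₁ (hΦ.mono hLM hpL) (hΦ.mono hLM' hpL') hpM
  have h1 : (1 : Fin n → F) ∈ M ⊔ F ∙ v := (Submodule.add_mem_iff_right _
    (mem_sup_right (mem_span_singleton_self v))).1
      (heq.ge (mem_sup_right (mem_span_singleton_self (v + 1))))
  obtain h | h := (mem_sup_span_singleton_iff_of_card_eq_two hF).1 h1
  · exact hM.one_notMem h
  · exact hvM₁ (add_comm (1 : Fin n → F) v ▸ h)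

end IsMonotoneCodeEmbedding

section VectorExtension

variable {F : Type*} [Field F] {n k : ℕ} {Φ : Submodule F (Fin n → F) → Submodule F (Fin n → F)}
  {L : Submodule F (Fin n → F)} {v p p' p₁ : Fin n → F} {g : (Fin n → F) → Fin n → F}

/-- A possible image `p` of the vector `v` under a linear map inducing `Φ`: a nonzero vector in the
image of every known line through `v`. -/
structure IsCompatibleVector (Φ : Submodule F (Fin n → F) → Submodule F (Fin n → F))
    (v p : Fin n → F) : Prop where
  ne_zero : p ≠ 0
  mem_map_sup_span_one : p ∈ Φ (F ∙ v ⊔ F ∙ 1)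
  mem_map : ∀ L, IsOneFreeLine L → v ∈ L → p ∈ Φ L

lemma IsMonotoneCodeEmbedding.exists_isCompatibleVector [NeZero n]
    (hΦ : IsMonotoneCodeEmbedding k Φ) (hF : Nat.card F = 2) (hk : 3 ≤ k)
    (hv : (Function.support v).Nontrivial) : ∃ p, IsCompatibleVector Φ v p := by
  have exists_ne {A : Submodule F (Fin n → F)} (hA : finrank F A = 1) : ∃ p ∈ A, p ≠ 0 := by
    obtain ⟨p, hp⟩ := Module.finrank_pos_iff_exists_ne_zero.1 (hA.symm ▸ one_pos)
    exact ⟨p, p.2, fun h => hp (Subtype.ext h)⟩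
  obtain rfl | hv1 := eq_or_ne v 1
  · obtain ⟨p, hp, hp0⟩ := exists_ne (hΦ.finrank_map_span_one (by omega))
    exact ⟨p, hp0, by rwa [sup_idem], fun L hL h1 => absurd h1 hL.one_notMem⟩
  · have hv0 : v ≠ 0 := Function.support_nonempty_iff.1 hv.nonempty
    obtain ⟨L, hL, hvL⟩ := exists_isOneFreeLine_mem hF hv1 hv
    obtain ⟨p, hp, hp0⟩ :=
      exists_ne (hΦ.finrank_map_inf_map_span_pair hF (by omega) hL hvL hv0)
    exact ⟨p, hp0, hp.2, fun L' hL' hvL' =>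
      hΦ.map_inf_map_span_pair_le hF hk hL hL' hvL hvL' hv0 hp⟩

namespace IsCompatibleVector

variable [Finite F] [NeZero n]

lemma notMem_map_span_one (hp : IsCompatibleVector Φ v p) (hΦ : IsMonotoneCodeEmbedding k Φ)
    (hF : Nat.card F = 2) (hk : 2 ≤ k) (hv1 : v ≠ 1) (hv : (Function.support v).Nontrivial) :
    p ∉ Φ (F ∙ 1) := by
  obtain ⟨L, hL, hvL⟩ := exists_isOneFreeLine_mem hF hv1 hv
  exact hΦ.notMem_map_span_one hk hL (hp.mem_map L hL hvL) hp.ne_zero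

lemma add_eq (hp : IsCompatibleVector Φ v p) (hp₁ : IsCompatibleVector Φ 1 p₁)
    (hp' : IsCompatibleVector Φ (v + 1) p') (hΦ : IsMonotoneCodeEmbedding k Φ)
    (hF : Nat.card F = 2) (hk : 3 ≤ k) (hv : (Function.support v).Nontrivial)
    (hv' : (Function.support (v + 1)).Nontrivial) : p + p₁ = p' := by
  have hv0 : v ≠ 0 := Function.support_nonempty_iff.1 hv.nonempty
  have hv1' : v + 1 ≠ 1 := fun h => hv0 (by simpa using h)
  have hv1 : v ≠ 1 := fun h => Function.support_nonempty_iff.1 hv'.nonempty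
    (by rw [h, add_self_eq_zero_of_card_eq_two hF])
  have hspan : F ∙ (v + 1) ⊔ F ∙ 1 ≤ F ∙ v ⊔ F ∙ 1 := sup_le
    ((span_singleton_le_iff_mem _ _).2
      (add_mem_sup (mem_span_singleton_self v) (mem_span_singleton_self 1))) le_sup_right
  have hp₁' := hp₁.mem_map_sup_span_one
  rw [sup_idem] at hp₁'
  obtain ⟨L, hL, hvL⟩ := exists_isOneFreeLine_mem hF hv1 hv
  obtain ⟨L', hL', hvL'⟩ := exists_isOneFreeLine_mem hF hv1' hv'
  refine add_eq_of_mem_of_card_eq_two hF (hΦ.finrank_map_span_pair hF (by omega) hv0 hv1)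
    hp.mem_map_sup_span_one (hΦ.mono le_sup_right hp₁') (hΦ.mono hspan hp'.mem_map_sup_span_one)
    hp.ne_zero hp₁.ne_zero hp'.ne_zero ?_ ?_ ?_
  · exact fun h => hp.notMem_map_span_one hΦ hF (by omega) hv1 hv (h ▸ hp₁')
  · exact fun h => hΦ.notMem_map_of_mem_map hF hk hL hL' hvL hvL' hp.ne_zero
      hp.mem_map_sup_span_one (hp.mem_map L hL hvL) (h ▸ hp'.mem_map L' hL' hvL')
  · exact fun h => hp'.notMem_map_span_one hΦ hF (by omega) hv1' hv' (h ▸ hp₁')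

end IsCompatibleVector

/-- A map of vectors that is a candidate for a linear map inducing `Φ`. The vectors with at most one
nonzero coordinate lie on no one-free line; for those the second condition is the definition. -/
structure IsVectorExtension (Φ : Submodule F (Fin n → F) → Submodule F (Fin n → F))
    (g : (Fin n → F) → Fin n → F) : Prop where
  isCompatibleVector : ∀ v, (Function.support v).Nontrivial → IsCompatibleVector Φ v (g v)
  map_add_one : ∀ v, g (v + 1) = g v + g 1

lemma support_one_nontrivial (hn : 2 ≤ n) : (Function.support (1 : Fin n → F)).Nontrivial :=
  ⟨⟨0, by omega⟩, one_ne_zero, ⟨1, by omega⟩, one_ne_zero, by simp⟩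

lemma IsMonotoneCodeEmbedding.exists_isVectorExtension [Finite F]
    (hΦ : IsMonotoneCodeEmbedding k Φ) (hF : Nat.card F = 2) (hk : 3 ≤ k) (hn : 3 ≤ n) :
    ∃ g, IsVectorExtension Φ g := by
  classical
  have : NeZero n := ⟨by omega⟩
  have hself (x : Fin n → F) : x + x = 0 := add_self_eq_zero_of_card_eq_two hF x
  choose! t ht using fun v : Fin n → F => hΦ.exists_isCompatibleVector (v := v) hF hk
  have h1 := support_one_nontrivial (F := F) (n := n) (by omega)
  refine ⟨fun v => if (Function.support v).Nontrivial then t v else t (v + 1) + t 1,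
    fun v hv => by rw [if_pos hv]; exact ht v hv, fun v => ?_⟩
  rw [if_pos h1]
  by_cases hv : (Function.support v).Nontrivial <;>
    by_cases hv' : (Function.support (v + 1)).Nontrivial
  · rw [if_pos hv, if_pos hv', (ht v hv).add_eq (ht 1 h1) (ht _ hv') hΦ hF hk hv hv']
  · rw [if_pos hv, if_neg hv', add_assoc v, hself, add_zero]
  · rw [if_neg hv, if_pos hv', add_assoc, hself, add_zero]
  · exact absurd (support_nontrivial_or_support_add_one_nontrivial hn v) (by tauto)

namespace IsVectorExtension

lemma map_zero (hg : IsVectorExtension Φ g) (hF : Nat.card F = 2) : g 0 = 0 := by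
  simpa only [add_self_eq_zero_of_card_eq_two hF] using hg.map_add_one 1

lemma mem_map (hg : IsVectorExtension Φ g) (hF : Nat.card F = 2) (hL : IsOneFreeLine L)
    (hvL : v ∈ L) : g v ∈ Φ L := by
  obtain rfl | hv := eq_or_ne v 0
  · rw [hg.map_zero hF]
    exact zero_mem _
  · exact (hg.isCompatibleVector v (hL.support_nontrivial hF hvL hv)).mem_map L hL hvL

lemma map_one_mem (hg : IsVectorExtension Φ g) (hn : 2 ≤ n) : g 1 ∈ Φ (F ∙ 1) := by
  have h := (hg.isCompatibleVector 1 (support_one_nontrivial hn)).mem_map_sup_span_one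
  rwa [sup_idem] at h

lemma mem_map_sup_span_one (hg : IsVectorExtension Φ g) (hΦ : Monotone Φ) (hn : 3 ≤ n)
    (v : Fin n → F) : g v ∈ Φ (F ∙ v ⊔ F ∙ 1) := by
  obtain hv | hv := support_nontrivial_or_support_add_one_nontrivial hn v
  · exact (hg.isCompatibleVector v hv).mem_map_sup_span_one
  · have hspan : F ∙ (v + 1) ⊔ F ∙ 1 ≤ F ∙ v ⊔ F ∙ 1 := sup_le
      ((span_singleton_le_iff_mem _ _).2
        (add_mem_sup (mem_span_singleton_self v) (mem_span_singleton_self 1))) le_sup_right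
    have hmem := hΦ hspan (hg.isCompatibleVector _ hv).mem_map_sup_span_one
    rw [hg.map_add_one] at hmem
    exact (Submodule.add_mem_iff_left _ (hΦ le_sup_right (hg.map_one_mem (by omega)))).1 hmem

lemma eq_zero_of_map_eq_zero [Finite F] (hg : IsVectorExtension Φ g)
    (hΦ : IsMonotoneCodeEmbedding k Φ) (hF : Nat.card F = 2) (hk : 2 ≤ k) (hn : 3 ≤ n)
    (hgv : g v = 0) : v = 0 := by
  have : NeZero n := ⟨by omega⟩
  obtain hv | hv := support_nontrivial_or_support_add_one_nontrivial hn v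
  · exact absurd hgv (hg.isCompatibleVector v hv).ne_zero
  · by_contra hv0
    refine (hg.isCompatibleVector _ hv).notMem_map_span_one hΦ hF hk (by simpa using hv0) hv ?_
    rw [hg.map_add_one, hgv, zero_add]
    exact hg.map_one_mem (by omega)

lemma map_ne_map [Finite F] (hg : IsVectorExtension Φ g) (hΦ : IsMonotoneCodeEmbedding k Φ)
    (hF : Nat.card F = 2) (hk : 2 ≤ k) (hn : 3 ≤ n) (hL : IsOneFreeLine L) {x y : Fin n → F}
    (hx : x ∈ L) (hy : y ∈ L) (hx0 : x ≠ 0) (hy0 : y ≠ 0) (hxy : x ≠ y) : g x ≠ g y := by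
  have : NeZero n := ⟨by omega⟩
  have hinf := hΦ.map_span_pair_inf hF hk hL hx hy hx0 hy0 hxy
  intro h
  refine hΦ.notMem_map_span_one hk hL (hg.mem_map hF hL hx)
    (fun hgx => hx0 (hg.eq_zero_of_map_eq_zero hΦ hF hk hn hgx)) (hinf.le ⟨?_, ?_⟩)
  · exact hg.mem_map_sup_span_one hΦ.mono hn x
  · exact h ▸ hg.mem_map_sup_span_one hΦ.mono hn y

lemma map_add_of_mem [Finite F] (hg : IsVectorExtension Φ g) (hΦ : IsMonotoneCodeEmbedding k Φ)
    (hF : Nat.card F = 2) (hk : 2 ≤ k) (hn : 3 ≤ n) (hL : IsOneFreeLine L) {x y : Fin n → F}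
    (hx : x ∈ L) (hy : y ∈ L) (hx0 : x ≠ 0) (hy0 : y ≠ 0) (hxy : x ≠ y) :
    g (x + y) = g x + g y := by
  have hne (z : Fin n → F) (hz0 : z ≠ 0) : g z ≠ 0 :=
    fun h => hz0 (hg.eq_zero_of_map_eq_zero hΦ hF hk hn h)
  have hsum0 : x + y ≠ 0 := fun h => hxy <| (eq_neg_of_add_eq_zero_left h).trans
    (eq_neg_of_add_eq_zero_left (add_self_eq_zero_of_card_eq_two hF y)).symm
  have hΦL := (hΦ.finrank_eq hL.isNondegenerate (hL.finrank_eq.trans_le hk)).trans hL.finrank_eq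
  have hgne {a b : Fin n → F} := hg.map_ne_map hΦ hF hk hn hL (x := a) (y := b)
  refine (add_eq_of_mem_of_card_eq_two hF hΦL (hg.mem_map hF hL hx) (hg.mem_map hF hL hy)
    (hg.mem_map hF hL (add_mem hx hy)) (hne x hx0) (hne y hy0) (hne _ hsum0)
    (hgne hy hx hy0 hx0 hxy.symm) (hgne (add_mem hx hy) hx hsum0 hx0 (by simpa using hy0))
    (hgne (add_mem hx hy) hy hsum0 hy0 (by simpa using hx0))).symm

lemma map_add_of_mul_eq_zero [Finite F] (hg : IsVectorExtension Φ g)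
    (hΦ : IsMonotoneCodeEmbedding k Φ) (hF : Nat.card F = 2) (hk : 2 ≤ k) (hn : 3 ≤ n)
    {x y : Fin n → F} (hxy : x * y = 0) : g (x + y) = g x + g y := by
  have hself (x : Fin n → F) : x + x = 0 := add_self_eq_zero_of_card_eq_two hF x
  have h01 := eq_zero_or_eq_one hF
  have hF11 : (1 : F) + 1 = 0 := add_self_eq_zero_of_card_eq_two hF 1
  obtain rfl | hx := eq_or_ne x 0
  · rw [hg.map_zero hF, zero_add, zero_add]
  obtain rfl | hy := eq_or_ne y 0
  · rw [hg.map_zero hF, add_zero, add_zero]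
  obtain rfl | hne := eq_or_ne y (x + 1)
  · rw [hg.map_add_one, ← add_assoc, ← add_assoc, hself, hself, zero_add, zero_add]
  obtain ⟨i, hyi⟩ := Function.ne_iff.1 hy
  obtain ⟨j, hj⟩ := Function.ne_iff.1 hne
  have hxy0 (l : Fin n) : x l = 0 ∨ y l = 0 := mul_eq_zero.1 (congrFun hxy l)
  have hxi : x i = 0 := (hxy0 i).resolve_right hyi
  have hyi : y i = 1 := (h01 _).resolve_left hyi
  rw [Pi.add_apply, Pi.one_apply] at hj
  have hxj : x j = 0 := (hxy0 j).elim id fun h => (h01 _).resolve_right fun h' =>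
    hj (by rw [h, h', hF11])
  have hyj : y j = 0 := (h01 _).resolve_right fun h => hj (by rw [h, hxj, zero_add])
  have hline : IsOneFreeLine (F ∙ (x + 1) ⊔ F ∙ (y + 1)) := by
    refine isOneFreeLine_span_pair hF (by simpa using hx) (fun l hl => ?_)
      ⟨i, by simp [hxi], by simp [hyi, hF11]⟩ ⟨j, by simp [hxj], by simp [hyj]⟩
    have hxl : x l ≠ 0 := fun h => by simp [h] at hl
    simp [(hxy0 l).resolve_left hxl]
  have hadd := hg.map_add_of_mem hΦ hF hk hn hline (x := x + 1) (y := y + 1)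
    (mem_sup_left (mem_span_singleton_self _)) (mem_sup_right (mem_span_singleton_self _))
    (fun h => by simpa [hxj] using congrFun h j) (fun h => by simpa [hyj] using congrFun h j)
    (fun h => by simpa [hxi, hyi] using congrFun h i)
  rwa [hg.map_add_one, hg.map_add_one, add_add_add_comm, hself, add_zero, add_add_add_comm, hself,
    add_zero] at hadd

-- Split both vectors along the intersection of their supports.
lemma map_add [Finite F] (hg : IsVectorExtension Φ g) (hΦ : IsMonotoneCodeEmbedding k Φ)
    (hF : Nat.card F = 2) (hk : 2 ≤ k) (hn : 3 ≤ n) (x y : Fin n → F) :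
    g (x + y) = g x + g y := by
  have hself (x : Fin n → F) : x + x = 0 := add_self_eq_zero_of_card_eq_two hF x
  have hsq (x : Fin n → F) : x * x = x := funext fun i => by
    obtain h | h := eq_zero_or_eq_one hF (x i) <;> simp [h]
  have hcompl (x : Fin n → F) : x * (x + 1) = 0 := by rw [mul_add, hsq, mul_one, hself]
  have hdisj {x y : Fin n → F} (h : x * y = 0) : g (x + y) = g x + g y :=
    hg.map_add_of_mul_eq_zero hΦ hF hk hn h
  have hsplit (x y : Fin n → F) : g x = g (x * (y + 1)) + g (x * y) := by
    rw [← hdisj (by rw [mul_mul_mul_comm, mul_comm (y + 1), hcompl, mul_zero]), ← mul_add,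
      add_right_comm, hself, zero_add, mul_one]
  have hsum : x + y = x * (y + 1) + y * (x + 1) := by
    rw [mul_add, mul_add, mul_one, mul_one, mul_comm y x, add_add_add_comm, hself, zero_add]
  rw [hsum, hdisj (by rw [mul_comm y, mul_mul_mul_comm, hcompl, zero_mul]), hsplit x y, hsplit y x,
    mul_comm y x, add_add_add_comm, hself, add_zero]

lemma exists_linearEquiv [Finite F] (hg : IsVectorExtension Φ g)
    (hΦ : IsMonotoneCodeEmbedding k Φ) (hF : Nat.card F = 2) (hk : 2 ≤ k) (hn : 3 ≤ n) :
    ∃ e : (Fin n → F) ≃ₗ[F] (Fin n → F), ∀ v, e v = g v := by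
  let φ : (Fin n → F) →ₗ[F] (Fin n → F) :=
    { toFun := g
      map_add' := hg.map_add hΦ hF hk hn
      map_smul' := fun c v => by
        obtain rfl | rfl := eq_zero_or_eq_one hF c
        · rw [zero_smul, hg.map_zero hF, RingHom.id_apply, zero_smul]
        · rw [one_smul, RingHom.id_apply, one_smul] }
  have hφ : Function.Injective φ := (injective_iff_map_eq_zero φ).2 fun v hv =>
    hg.eq_zero_of_map_eq_zero hΦ hF hk hn hv
  exact ⟨LinearEquiv.ofInjectiveEndo φ hφ, fun v => rfl⟩

lemma mem_map_of_one_mem (hg : IsVectorExtension Φ g) (hΦ : Monotone Φ) (hn : 3 ≤ n)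
    (h1 : 1 ∈ L) (hv : v ∈ L) : g v ∈ Φ L :=
  hΦ (sup_le ((span_singleton_le_iff_mem _ _).2 hv) ((span_singleton_le_iff_mem _ _).2 h1))
    (hg.mem_map_sup_span_one hΦ hn v)

lemma mem_map_of_one_add_single_mem [Finite F] (hg : IsVectorExtension Φ g)
    (hΦ : IsMonotoneCodeEmbedding k Φ) (hF : Nat.card F = 2) (hk : 2 ≤ k) (hn : 3 ≤ n)
    (hL : IsNondegenerate L) {i : Fin n} (hi : 1 + Pi.single i 1 ∈ L) (hv : v ∈ L) :
    g v ∈ Φ L := by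
  by_cases h1 : (1 : Fin n → F) ∈ L
  · exact hg.mem_map_of_one_mem hΦ.mono hn h1 hv
  have h01 := eq_zero_or_eq_one hF
  set a : Fin n → F := 1 + Pi.single i 1 with ha
  have hai : a i = 0 := by simp [ha, add_self_eq_zero_of_card_eq_two hF (1 : F)]
  have haj {j : Fin n} (hj : j ≠ i) : a j = 1 := by simp [ha, hj]
  have hmem {x : Fin n → F} (hx : x ∈ L) (hxi : x i = 1) : g x ∈ Φ L := by
    have hne : x ≠ Pi.single i 1 := fun h => h1 ((Submodule.add_mem_iff_left _ (h ▸ hx)).1 hi)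
    obtain ⟨j, hj⟩ := Function.ne_iff.1 hne
    have hji : j ≠ i := fun h => hj (by rw [h, hxi, Pi.single_eq_same])
    rw [Pi.single_eq_of_ne hji] at hj
    have hline : IsOneFreeLine (F ∙ x ⊔ F ∙ a) := isOneFreeLine_span_pair hF
      (fun h => h1 (h ▸ hx)) (fun l hl => haj fun h => by simp [← h, hl] at hxi)
      ⟨i, hxi, hai⟩ ⟨j, (h01 _).resolve_left hj, haj hji⟩
    exact hΦ.mono
      (sup_le ((span_singleton_le_iff_mem _ _).2 hx) ((span_singleton_le_iff_mem _ _).2 hi))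
      (hg.mem_map hF hline (mem_sup_left (mem_span_singleton_self x)))
  obtain hvi | hvi := h01 (v i)
  · obtain ⟨y, hy, hyi⟩ := isNondegenerate_iff.1 hL i
    have hyi : y i = 1 := (h01 _).resolve_left hyi
    have hvy := hmem (add_mem hv hy) (by rw [Pi.add_apply, hvi, hyi, zero_add])
    rw [hg.map_add hΦ hF hk hn] at hvy
    exact (Submodule.add_mem_iff_left _ (hmem hy hyi)).1 hvy
  · exact hmem hv hvi

end IsVectorExtension

theorem IsMonotoneCodeEmbedding.exists_orderIso_of_card_eq_two [Finite F]
    (hΦ : IsMonotoneCodeEmbedding k Φ) (hF : Nat.card F = 2) (hk : 3 ≤ k) (hn : 3 ≤ n) :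
    ∃ G : Submodule F (Fin n → F) ≃o Submodule F (Fin n → F),
      ∀ X : Submodule F (Fin n → F), IsNondegenerate X → finrank F X = k →
        (1 ∈ X ∨ ∃ i, 1 + Pi.single i 1 ∈ X) → G X = Φ X := by
  obtain ⟨g, hg⟩ := hΦ.exists_isVectorExtension hF hk hn
  obtain ⟨e, he⟩ := hg.exists_linearEquiv hΦ hF (by omega) hn
  refine ⟨orderIsoMapComap e, fun X hX hXk h1X => ?_⟩
  refine orderIso_eq_of_span_singleton_le _ (hΦ.finrank_eq hX hXk.le).symm fun x hx _ => ?_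
  have hgx : g x ∈ Φ X := by
    obtain h1 | ⟨i, hi⟩ := h1X
    · exact hg.mem_map_of_one_mem hΦ.mono hn h1 hx
    · exact hg.mem_map_of_one_add_single_mem hΦ hF (by omega) hn hX hi hx
  rw [orderIsoMapComap_apply, map_span, Set.image_singleton, span_singleton_le_iff_mem]
  exact (he x).symm ▸ hgx

end VectorExtension

/-! ### Rigidity of the non-degenerate codes -/

section Rigidity

variable {F V : Type*} [Field F] [AddCommGroup V] [Module F V] [FiniteDimensional F V]
  {X X' U S : Submodule F V} {u w : V}

lemma isAdjacent_sup_span_singleton (hU : U ≤ X) (hUX : finrank F U + 1 = finrank F X)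
    (hw : w ∉ X) : IsAdjacent X (U ⊔ F ∙ w) :=
  IsAdjacent.of_ge (by rw [finrank_sup_span_singleton fun h => hw (hU h), hUX])
    (fun h => hw (h ▸ mem_sup_right (mem_span_singleton_self w))) hU le_sup_left hUX.ge

lemma le_sup_span_singleton_of_forall_isAdjacent (hX : 2 ≤ finrank F X) (hw : w ∉ X) (hw' : w ∉ X')
    (h : ∀ Y, w ∈ Y → IsAdjacent X Y → IsAdjacent X' Y) : X' ≤ X ⊔ F ∙ w := by
  obtain ⟨Z₁, hZ₁X, -, hZ₁⟩ := exists_hyperplane_mem X.zero_mem hX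
  obtain ⟨x, hxX, hxZ₁⟩ := exists_mem_notMem_of_finrank_lt (X := Z₁) (Y := X) (by omega)
  obtain ⟨Z₂, hZ₂X, hxZ₂, hZ₂⟩ := exists_hyperplane_mem hxX hX
  have hw_mem (Z : Submodule F V) : w ∈ Z ⊔ F ∙ w := mem_sup_right (mem_span_singleton_self w)
  have hX₁ := isAdjacent_sup_span_singleton hZ₁X hZ₁ hw
  have hX₂ := isAdjacent_sup_span_singleton hZ₂X hZ₂ hw
  have hle₁ : Z₁ ⊔ F ∙ w ≤ X ⊔ F ∙ w := sup_le_sup_right hZ₁X _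
  have hle₂ : Z₂ ⊔ F ∙ w ≤ X ⊔ F ∙ w := sup_le_sup_right hZ₂X _
  have hne : Z₁ ⊔ F ∙ w ≠ Z₂ ⊔ F ∙ w := fun heq => by
    have hXZ₁ : X ≤ Z₁ ⊔ F ∙ w := by
      rw [← sup_eq_of_hyperplanes hZ₁X hZ₂X hZ₁ (by omega) fun h => hxZ₁ (h ▸ hxZ₂)]
      exact sup_le le_sup_left (heq ▸ le_sup_left)
    exact hX₁.ne (eq_of_le_of_finrank_eq hXZ₁ hX₁.1)
  have h₁₂ : IsAdjacent (Z₁ ⊔ F ∙ w) (Z₂ ⊔ F ∙ w) := IsAdjacent.of_le (hX₁.1.symm.trans hX₂.1) hne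
    hle₁ hle₂ (by rw [finrank_sup_span_singleton hw, ← hX₁.1])
  refine ((h₁₂.inf_le_or_le_sup (h _ (hw_mem Z₁) hX₁).symm (h _ (hw_mem Z₂) hX₂).symm).resolve_left
    fun hle => hw' (hle ⟨hw_mem Z₁, hw_mem Z₂⟩)).trans (sup_le hle₁ hle₂)

omit [FiniteDimensional F V] in
lemma sup_span_singleton_inf_of_le (hXU : X ≤ U) (hu : u ∉ U) : (X ⊔ F ∙ u) ⊓ U = X := by
  rw [sup_inf_assoc_of_le _ hXU, (disjoint_span_singleton_of_notMem hu).symm.eq_bot, sup_bot_eq]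

lemma eq_of_forall_isAdjacent (hXX' : finrank F X' = finrank F X) (hX : 2 ≤ finrank F X)
    (hXU : X ≤ U) (hX'U : X' ≤ U) (hu : u ∉ U) (hXS : ¬X ≤ S)
    (h : ∀ Z ≤ X, ¬Z ≤ S → IsAdjacent X (Z ⊔ F ∙ u) → IsAdjacent X' (Z ⊔ F ∙ u)) : X' = X := by
  by_contra hne
  have hnle : ¬X ≤ X' := fun hle => hne (eq_of_le_of_finrank_eq hle hXX'.symm).symm
  obtain ⟨x, hxX, hx⟩ := Set.not_subset.1
    (mt AddSubgroupClass.subset_union.1 (not_or_intro hnle hXS))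
  obtain ⟨hxX', hxS⟩ := not_or.1 hx
  obtain ⟨Z, hZX, hxZ, hZ⟩ := exists_hyperplane_mem hxX hX
  have hadj := h Z hZX (fun hZS => hxS (hZS hxZ))
    (isAdjacent_sup_span_singleton hZX hZ fun huX => hu (hXU huX))
  have hle : X' ⊓ (Z ⊔ F ∙ u) ≤ Z :=
    (le_inf inf_le_right (inf_le_left.trans hX'U)).trans
      (sup_span_singleton_inf_of_le (hZX.trans hXU) hu).le
  have heq : X' ⊓ (Z ⊔ F ∙ u) = Z :=
    eq_of_le_of_finrank_le hle (by have := hadj.2; omega)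
  exact hxX' (heq.ge hxZ).1

end Rigidity

section Anchored

variable {F : Type*} [Field F] {n k : ℕ} {c : F} {X X' : Submodule F (Fin n → F)}
  {f : Submodule F (Fin n → F) → Submodule F (Fin n → F)}

/-- The non-degenerate codes containing the all-ones vector, or a vector that differs from it by
`c` in a single coordinate. For a suitable `c`, these are codes on which a given embedding is first
shown to be induced by an automorphism of the lattice of subspaces. -/
def IsAnchored (c : F) (X : Submodule F (Fin n → F)) : Prop :=
  IsNondegenerate X ∧ (1 ∈ X ∨ ∃ i, 1 + Pi.single i c ∈ X)

lemma isAnchored_of_one_mem (hX : 1 ∈ X) : IsAnchored c X :=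
  ⟨isNondegenerate_of_one_mem hX, .inl hX⟩

lemma isAnchored_of_one_add_single_mem {i : Fin n} (hXi : ¬X ≤ coordHyp F n i)
    (hX : 1 + Pi.single i c ∈ X) : IsAnchored c X := by
  refine ⟨fun j => ?_, .inr ⟨i, hX⟩⟩
  obtain rfl | hj := eq_or_ne j i
  · exact hXi
  · refine fun hle => one_ne_zero (α := F) ?_
    have h0 : (1 + Pi.single i c : Fin n → F) j = 0 := hle hX
    rwa [Pi.add_apply, Pi.one_apply, Pi.single_eq_of_ne hj, add_zero] at h0

lemma le_sup_span_one_of_isAnchored (hX : 2 ≤ finrank F X) (h1 : 1 ∉ X) (h1' : 1 ∉ X')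
    (h : ∀ Y, IsAnchored c Y → IsAdjacent X Y → IsAdjacent X' Y) : X' ≤ X ⊔ F ∙ 1 :=
  le_sup_span_singleton_of_forall_isAdjacent hX h1 h1' fun Y h1Y => h Y (isAnchored_of_one_mem h1Y)

lemma eq_of_forall_isAnchored_isAdjacent (hc : c ≠ 0) (hXX' : finrank F X' = finrank F X)
    (hX : 2 ≤ finrank F X) (h1 : 1 ∉ X) (h1' : 1 ∉ X') {i : Fin n} (hXi : ¬X ≤ coordHyp F n i)
    (hi : Pi.single i 1 ∉ X ⊔ F ∙ 1)
    (h : ∀ Y, IsAnchored c Y → IsAdjacent X Y → IsAdjacent X' Y) : X' = X := by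
  have hu : 1 + Pi.single i c ∉ X ⊔ F ∙ (1 : Fin n → F) := fun hu => hi <| by
    have hc_mem := (Submodule.add_mem_iff_right _
      (mem_sup_right (mem_span_singleton_self (1 : Fin n → F)))).1 hu
    rwa [← mul_one c, ← smul_eq_mul, Pi.single_smul, smul_mem_iff _ hc] at hc_mem
  exact eq_of_forall_isAdjacent hXX' hX le_sup_left (le_sup_span_one_of_isAnchored hX h1 h1' h) hu
    hXi fun _ _ hZi => h _ <| isAnchored_of_one_add_single_mem
      (fun hle => hZi (le_sup_left.trans hle)) (mem_sup_right (mem_span_singleton_self _))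

lemma exists_single_notMem_sup_span_one (hX : finrank F X + 2 ≤ n) :
    ∃ i, Pi.single i 1 ∉ X ⊔ F ∙ (1 : Fin n → F) :=
  exists_single_notMem ((finrank_sup_span_singleton_le X 1).trans_lt (by omega))

lemma IsCodeEmbedding.eq_self_of_isAnchored (hf : IsCodeEmbedding k f) (hc : c ≠ 0) (hk : 2 ≤ k)
    (hkn : k + 2 ≤ n)
    (h : ∀ Y : Submodule F (Fin n → F), IsAnchored c Y → finrank F Y = k → f Y = Y)
    (hX : IsNondegenerate X) (hXk : finrank F X = k) : f X = X := by
  by_cases h1 : 1 ∈ X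
  · exact h X (isAnchored_of_one_mem h1) hXk
  have hfXk := hf.finrank_eq hX hXk
  have h1' : 1 ∉ f X := fun h1' => h1 <|
    hf.inj (isNondegenerate_of_one_mem h1') hX hfXk hXk (h _ (isAnchored_of_one_mem h1') hfXk) ▸ h1'
  obtain ⟨i, hi⟩ := exists_single_notMem_sup_span_one (hXk ▸ hkn)
  refine eq_of_forall_isAnchored_isAdjacent hc (hfXk.trans hXk.symm) (hXk ▸ hk) h1 h1' (hX i) hi
    fun Y hY hXY => ?_
  rw [← h Y hY (hXY.1 ▸ hXk)]
  exact hf.adj hX hY.1 hXk hXY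

lemma IsCodeEmbedding.exists_orderIso_of_isAnchored [Finite F] (hf : IsCodeEmbedding k f)
    (hs : PreservesStars k f) (hqk : 2 < Nat.card F ∨ 3 ≤ k) (hk : 2 ≤ k) (hkn : k + 2 ≤ n) :
    ∃ c : F, c ≠ 0 ∧ ∃ G : Submodule F (Fin n → F) ≃o Submodule F (Fin n → F),
      ∀ X : Submodule F (Fin n → F), IsAnchored c X → finrank F X = k → G X = f X := by
  have hΦ := isMonotoneCodeEmbedding_infExtension hf hs hkn
  obtain hq | hq := lt_or_ge 2 (Nat.card F)
  · obtain ⟨c, hc, hc1⟩ := exists_ne_zero_ne hq (-1)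
    obtain ⟨G, hG⟩ := hΦ.exists_orderIso_of_two_lt_card hq hk hkn
    refine ⟨c, hc, G, fun X hX hXk => (hG X hXk ?_).trans (infExtension_eq hXk)⟩
    obtain h1 | ⟨i, hi⟩ := hX.2
    · exact ⟨1, h1, fun _ => one_ne_zero⟩
    · refine ⟨_, hi, fun j => ?_⟩
      rw [Pi.add_apply, Pi.one_apply]
      obtain rfl | hj := eq_or_ne j i
      · rw [Pi.single_eq_same]
        exact fun h => hc1 (eq_neg_of_add_eq_zero_right h)
      · rw [Pi.single_eq_of_ne hj, add_zero]
        exact one_ne_zero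
  · have hF : Nat.card F = 2 := le_antisymm hq Finite.one_lt_card
    obtain ⟨G, hG⟩ := hΦ.exists_orderIso_of_card_eq_two hF (by omega) (by omega)
    exact ⟨1, one_ne_zero, G, fun X hX hXk => (hG X hX.1 hXk hX.2).trans (infExtension_eq hXk)⟩

theorem IsCodeEmbedding.exists_orderIso [Finite F] (hf : IsCodeEmbedding k f)
    (hs : PreservesStars k f) (hqk : 2 < Nat.card F ∨ 3 ≤ k) (hk : 2 ≤ k) (hkn : k + 2 ≤ n) :
    ∃ G : Submodule F (Fin n → F) ≃o Submodule F (Fin n → F), ∀ X : Submodule F (Fin n → F),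
      IsNondegenerate X → finrank F X = k → G X = f X := by
  obtain ⟨c, hc, G, hG⟩ := hf.exists_orderIso_of_isAnchored hs hqk hk hkn
  have hGf : IsCodeEmbedding k (G.symm ∘ f) :=
    { finrank_eq := fun hX hXk => (finrank_orderIso G.symm _).trans (hf.finrank_eq hX hXk)
      inj := fun hX hY hXk hYk h => hf.inj hX hY hXk hYk (G.symm.injective h)
      adj := fun hX hY hXk hXY => (isAdjacent_orderIso G.symm).2 (hf.adj hX hY hXk hXY) }
  refine ⟨G, fun X hX hXk => (G.symm_apply_eq.1 ?_).symm⟩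
  exact hGf.eq_self_of_isAnchored hc hk hkn
    (fun Y hY hYk => G.symm_apply_eq.2 (hG Y hY hYk).symm) hX hXk

end Anchored

section GrassmannAut

variable {F : Type*} [Field F] {n k : ℕ} {X Y : Submodule F (Fin n → F)}
  {f g g' : Submodule F (Fin n → F) → Submodule F (Fin n → F)}

lemma adjSub_iff_isAdjacent (hk : 1 ≤ k) (hX : X ∈ grass F n k) (hY : Y ∈ grass F n k) :
    adjSub F n k X Y ↔ IsAdjacent X Y := by
  have hXk : finrank F X = k := hX
  have hYk : finrank F Y = k := hY
  rw [adjSub, IsAdjacent]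
  omega

/-- `g` restricts to an automorphism of the Grassmann graph `Γ_k(F^n)`. -/
structure IsGrassmannAut (k : ℕ) (g : Submodule F (Fin n → F) → Submodule F (Fin n → F)) :
    Prop where
  bijOn : Set.BijOn g (grass F n k) (grass F n k)
  adjSub_iff : ∀ X ∈ grass F n k, ∀ Y ∈ grass F n k,
    (adjSub F n k (g X) (g Y) ↔ adjSub F n k X Y)

lemma isGrassmannAut_orderIso (hk : 1 ≤ k)
    (G : Submodule F (Fin n → F) ≃o Submodule F (Fin n → F)) : IsGrassmannAut k G where
  bijOn := ⟨fun X hX => (finrank_orderIso G X).trans hX, G.injective.injOn,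
    fun X hX => ⟨G.symm X, (finrank_orderIso G.symm X).trans hX, G.apply_symm_apply X⟩⟩
  adjSub_iff X hX Y hY := by
    rw [adjSub_iff_isAdjacent hk hX hY, ← isAdjacent_orderIso G]
    exact adjSub_iff_isAdjacent hk ((finrank_orderIso G X).trans hX)
      ((finrank_orderIso G Y).trans hY)

lemma isGrassmannAut_dotOrthogonal (hk : 1 ≤ k) (hkn : 2 * k = n) :
    IsGrassmannAut k (dotOrthogonal : Submodule F (Fin n → F) → Submodule F (Fin n → F)) := by
  have hmaps : Set.MapsTo dotOrthogonal (grass F n k) (grass F n k) := fun X hX =>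
    (finrank_dotOrthogonal X).trans (by have : finrank F X = k := hX; omega)
  refine ⟨⟨hmaps, dotOrthogonal_injective.injOn,
    fun X hX => ⟨dotOrthogonal X, hmaps hX, dotOrthogonal_dotOrthogonal X⟩⟩, fun X hX Y hY => ?_⟩
  rw [adjSub_iff_isAdjacent hk (hmaps hX) (hmaps hY), adjSub_iff_isAdjacent hk hX hY,
    isAdjacent_dotOrthogonal]

namespace IsGrassmannAut

lemma comp (hg : IsGrassmannAut k g) (hg' : IsGrassmannAut k g') : IsGrassmannAut k (g ∘ g') where
  bijOn := hg.bijOn.comp hg'.bijOn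
  adjSub_iff X hX Y hY := (hg.adjSub_iff _ (hg'.bijOn.mapsTo hX) _ (hg'.bijOn.mapsTo hY)).trans
    (hg'.adjSub_iff X hX Y hY)

lemma invFunOn (hg : IsGrassmannAut k g) :
    IsGrassmannAut k (Function.invFunOn g (grass F n k)) := by
  have hinv := hg.bijOn.invOn_invFunOn
  have hmaps := hg.bijOn.surjOn.mapsTo_invFunOn
  refine ⟨hinv.symm.bijOn hmaps hg.bijOn.mapsTo, fun X hX Y hY => ?_⟩
  rw [← hg.adjSub_iff _ (hmaps hX) _ (hmaps hY), hinv.2 hX, hinv.2 hY]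

lemma isAdjacent (hg : IsGrassmannAut k g) (hk : 1 ≤ k) (hX : X ∈ grass F n k)
    (hXY : IsAdjacent X Y) : IsAdjacent (g X) (g Y) := by
  have hY : Y ∈ grass F n k := hXY.1.symm.trans hX
  exact (adjSub_iff_isAdjacent hk (hg.bijOn.mapsTo hX) (hg.bijOn.mapsTo hY)).1
    ((hg.adjSub_iff X hX Y hY).2 ((adjSub_iff_isAdjacent hk hX hY).2 hXY))

lemma one_mem_of_one_mem_map (hg : IsGrassmannAut k g) (h : Set.EqOn g id (ndCodes F n k))
    (hX : X ∈ grass F n k) (h1 : 1 ∈ g X) : 1 ∈ X := by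
  have hgX := hg.bijOn.mapsTo hX
  rwa [← hg.bijOn.injOn hgX hX (h ⟨hgX, isNondegenerate_of_one_mem h1⟩)]

lemma isAdjacent_of_isNondegenerate (hg : IsGrassmannAut k g) (h : Set.EqOn g id (ndCodes F n k))
    (hk : 1 ≤ k) (hX : X ∈ grass F n k) (hY : IsNondegenerate Y)
    (hXY : IsAdjacent X Y) : IsAdjacent (g X) Y := by
  have hYk : Y ∈ ndCodes F n k := ⟨hXY.1.symm.trans hX, hY⟩
  rw [← show g Y = Y from h hYk]
  exact hg.isAdjacent hk hX hXY

lemma eq_self_of_single_notMem (hg : IsGrassmannAut k g) (h : Set.EqOn g id (ndCodes F n k))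
    (hk : 2 ≤ k) (hX : X ∈ grass F n k) (h1 : 1 ∉ X) {i : Fin n} (hXi : ¬X ≤ coordHyp F n i)
    (hi : Pi.single i 1 ∉ X ⊔ F ∙ 1) : g X = X :=
  eq_of_forall_isAnchored_isAdjacent one_ne_zero ((hg.bijOn.mapsTo hX).trans hX.symm)
    (hk.trans_eq hX.symm) h1 (mt (hg.one_mem_of_one_mem_map h hX) h1) hXi hi
    fun _ hY => hg.isAdjacent_of_isNondegenerate h (by omega) hX hY.1

lemma map_le_sup_span_one (hg : IsGrassmannAut k g) (h : Set.EqOn g id (ndCodes F n k))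
    (hk : 2 ≤ k) (hX : X ∈ grass F n k) (h1 : 1 ∉ X) : g X ≤ X ⊔ F ∙ 1 :=
  le_sup_span_one_of_isAnchored (c := 1) (hk.trans_eq hX.symm) h1
    (mt (hg.one_mem_of_one_mem_map h hX) h1)
    fun _ hY => hg.isAdjacent_of_isNondegenerate h (by omega) hX hY.1

-- If `X` lies in the `i`-th coordinate hyperplane and `g X` does not, then `g` fixes `g X`.
lemma eq_self_of_eqOn_ndCodes (hg : IsGrassmannAut k g) (h : Set.EqOn g id (ndCodes F n k))
    (hk : 2 ≤ k) (hkn : k + 2 ≤ n) (hX : X ∈ grass F n k) : g X = X := by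
  by_cases h1 : 1 ∈ X
  · exact h ⟨hX, isNondegenerate_of_one_mem h1⟩
  obtain ⟨i, hi⟩ := exists_single_notMem_sup_span_one (hX.symm ▸ hkn)
  by_cases hXi : X ≤ coordHyp F n i
  swap
  · exact hg.eq_self_of_single_notMem h hk hX h1 hXi hi
  have hle := hg.map_le_sup_span_one h hk hX h1
  have hgX := hg.bijOn.mapsTo hX
  by_cases hgXi : g X ≤ coordHyp F n i
  · have h1i : (1 : Fin n → F) ∉ coordHyp F n i := one_ne_zero (α := F)
    exact eq_of_le_of_finrank_eq ((le_inf hle hgXi).trans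
      (sup_span_singleton_inf_of_le hXi h1i).le) (hgX.trans hX.symm)
  · exact hg.bijOn.injOn hgX hX <| hg.eq_self_of_single_notMem h hk hgX
      (mt (hg.one_mem_of_one_mem_map h hX) h1) hgXi fun hi' => hi (sup_le hle le_sup_right hi')

theorem eqOn_of_eqOn_ndCodes (hg : IsGrassmannAut k g) (hg' : IsGrassmannAut k g') (hk : 2 ≤ k)
    (hkn : k + 2 ≤ n) (h : Set.EqOn g' g (ndCodes F n k)) : Set.EqOn g' g (grass F n k) := by
  intro X hX
  have hinv := hg.bijOn.invOn_invFunOn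
  have hfix : Set.EqOn (Function.invFunOn g (grass F n k) ∘ g') id (ndCodes F n k) := fun Y hY => by
    rw [Function.comp_apply, h hY, hinv.1 hY.1, id]
  have hgX := (hg.invFunOn.comp hg').eq_self_of_eqOn_ndCodes hfix hk hkn hX
  rw [← hinv.2 (hg'.bijOn.mapsTo hX)]
  exact congrArg g hgX

end IsGrassmannAut

theorem IsCodeEmbedding.exists_isGrassmannAut [Finite F] (hf : IsCodeEmbedding k f)
    (hqk : 2 < Nat.card F ∨ 3 ≤ k) (hk : 2 ≤ k) (hkn : k + 2 ≤ n) :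
    ∃ g, IsGrassmannAut k g ∧ Set.EqOn g f (ndCodes F n k) := by
  obtain hs | ⟨h2k, hs⟩ := hf.preservesStars_or_preservesStars_dotOrthogonal_comp hk hkn
  · obtain ⟨G, hG⟩ := hf.exists_orderIso hs hqk hk hkn
    exact ⟨G, isGrassmannAut_orderIso (by omega) G, fun X hX => hG X hX.2 hX.1⟩
  · obtain ⟨G, hG⟩ := (hf.dotOrthogonal_comp h2k).exists_orderIso hs hqk hk hkn
    refine ⟨dotOrthogonal ∘ G,
      (isGrassmannAut_dotOrthogonal (by omega) h2k).comp (isGrassmannAut_orderIso (by omega) G),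
      fun X hX => ?_⟩
    rw [Function.comp_apply, hG X hX.2 hX.1, Function.comp_apply, dotOrthogonal_dotOrthogonal]

lemma isCodeEmbedding_of_adjSub (hk : 1 ≤ k) (hmem : ∀ X ∈ ndCodes F n k, f X ∈ grass F n k)
    (hinj : Set.InjOn f (ndCodes F n k))
    (hadj : ∀ X ∈ ndCodes F n k, ∀ Y ∈ ndCodes F n k,
      adjSub F n k X Y → adjSub F n k (f X) (f Y)) : IsCodeEmbedding k f where
  finrank_eq hX hXk := hmem _ ⟨hXk, hX⟩
  inj hX hY hXk hYk := hinj ⟨hXk, hX⟩ ⟨hYk, hY⟩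
  adj {X Y} hX hY hXk hXY := by
    have hXc : X ∈ ndCodes F n k := ⟨hXk, hX⟩
    have hYc : Y ∈ ndCodes F n k := ⟨hXY.1.symm.trans hXk, hY⟩
    exact (adjSub_iff_isAdjacent hk (hmem X hXc) (hmem Y hYc)).1
      (hadj X hXc Y hYc ((adjSub_iff_isAdjacent hk hXc.1 hYc.1).2 hXY))

end GrassmannAut

end

/-- If `q ≥ 3` or `k ≥ 3`, every injective adjacency-preserving map
`f : C(n,k)_q → G_k(V)` extends uniquely to an automorphism of the Grassmann graph
`Γ_k(V)`. -/
theorem stmt_0 (q n k : ℕ) (F : Type*) [Field F] [Fintype F]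
    (hF : Fintype.card F = q) (hk : 1 < k) (hkn : k < n - 1)
    (hqk : 3 ≤ q ∨ 3 ≤ k)
    (f : Submodule F (Fin n → F) → Submodule F (Fin n → F))
    (hmem : ∀ X ∈ ndCodes F n k, f X ∈ grass F n k)
    (hinj : Set.InjOn f (ndCodes F n k))
    (hadj : ∀ X ∈ ndCodes F n k, ∀ Y ∈ ndCodes F n k,
      adjSub F n k X Y → adjSub F n k (f X) (f Y)) :
    ∃ g : Submodule F (Fin n → F) → Submodule F (Fin n → F),
      (Set.BijOn g (grass F n k) (grass F n k) ∧
        (∀ X ∈ grass F n k, ∀ Y ∈ grass F n k,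
          (adjSub F n k (g X) (g Y) ↔ adjSub F n k X Y)) ∧
        Set.EqOn g f (ndCodes F n k)) ∧
      ∀ g' : Submodule F (Fin n → F) → Submodule F (Fin n → F),
        (Set.BijOn g' (grass F n k) (grass F n k) ∧
          (∀ X ∈ grass F n k, ∀ Y ∈ grass F n k,
            (adjSub F n k (g' X) (g' Y) ↔ adjSub F n k X Y)) ∧
          Set.EqOn g' f (ndCodes F n k)) →
        Set.EqOn g' g (grass F n k) := by
  subst hF
  have hqk' : 2 < Nat.card F ∨ 3 ≤ k := by
    rwa [Nat.card_eq_fintype_card]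
  have hf : IsCodeEmbedding k f := isCodeEmbedding_of_adjSub hk.le hmem hinj hadj
  obtain ⟨g, hg, hgf⟩ := hf.exists_isGrassmannAut hqk' hk (by omega)
  refine ⟨g, ⟨hg.bijOn, hg.adjSub_iff, hgf⟩, ?_⟩
  rintro g' ⟨hbij, hadj', hg'f⟩
  exact hg.eqOn_of_eqOn_ndCodes ⟨hbij, hadj'⟩ hk (by omega) (hg'f.trans hgf.symm)
end

section
/- Let n ≥ 4 and V = F_2^n. There exist an injective map h : C(n,2)_2 → G_2(V) and subspaces X, Y ∈ C(n,2)_2 such that: h(X') and h(Y') are adjacent whenever X', Y' ∈ C(n,2)_2 are adjacent; X and Y are not adjacent; and h(X) and h(Y) are adjacent. Consequently, no automorphism of the Grassmann graph Γ_2(V) restricts to h on C(n,2)_2. -/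
/-!
Let `L` be the line spanned by the all-one vector and `H` a coordinate hyperplane, so that
`V = L ⊕ H`. The map `h` fixes the codes through `L` and projects the others from `L` onto `H`.
It is monotone and preserves dimension, so it preserves adjacency wherever it is injective.

For injectivity, suppose that codes `X ≠ Y` off `L` have the same projection, i.e.
`X + L = Y + L`. Then `X ∩ Y` is spanned by a vector `y` different from the all-one vector, so
`y i = 0` for some `i`. Over `F_2` there are only three lines in the plane `(X + L) / ⟨y⟩`, namely
those given by `X`, `Y` and `L`; the `i`-th coordinate vanishes on one of them, but `X` and `Y` are
non-degenerate and `1 i ≠ 0`.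

Finally, two disjoint codes become adjacent as soon as one contains some `z ∉ L` and the other
contains `z + 1`, because `z` and `z + 1` have the same projection.
-/

open Module Submodule

section ProjectFrom

variable {α : Type*} [Lattice α]

open Classical in
/-- The central projection from `L` onto a complement `H`, in the lattice of subspaces: `X` is
sent to `(X ⊔ L) ⊓ H`, except that the elements above the centre `L`, where the projection would
drop the dimension, are left fixed. -/
noncomputable def projectFrom (L H X : α) : α :=
  if L ≤ X then X else (X ⊔ L) ⊓ H

variable {L H X Y : α}

lemma projectFrom_of_le (h : L ≤ X) : projectFrom L H X = X := if_pos h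

lemma projectFrom_of_not_le (h : ¬ L ≤ X) : projectFrom L H X = (X ⊔ L) ⊓ H := if_neg h

lemma projectFrom_le_sup : projectFrom L H X ≤ X ⊔ L := by
  by_cases h : L ≤ X
  · rw [projectFrom_of_le h]
    exact le_sup_left
  · rw [projectFrom_of_not_le h]
    exact inf_le_left

lemma projectFrom_le_projectFrom_of_le_sup (hX : ¬ L ≤ X) (h : X ≤ Y ⊔ L) :
    projectFrom L H X ≤ projectFrom L H Y := by
  have hsup : X ⊔ L ≤ Y ⊔ L := sup_le h le_sup_right
  by_cases hY : L ≤ Y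
  · rw [projectFrom_of_le hY]
    exact projectFrom_le_sup.trans (hsup.trans_eq (sup_eq_left.2 hY))
  · rw [projectFrom_of_not_le hX, projectFrom_of_not_le hY]
    exact inf_le_inf_right H hsup

lemma projectFrom_mono : Monotone (projectFrom L H) := by
  intro X Y hXY
  by_cases hX : L ≤ X
  · rwa [projectFrom_of_le hX, projectFrom_of_le (hX.trans hXY)]
  · exact projectFrom_le_projectFrom_of_le_sup hX (hXY.trans le_sup_left)

lemma le_projectFrom_iff [OrderBot α] (hL : IsAtom L) (hLH : Disjoint L H) :
    L ≤ projectFrom L H X ↔ L ≤ X := by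
  by_cases h : L ≤ X
  · rw [projectFrom_of_le h]
  · rw [projectFrom_of_not_le h]
    exact iff_of_false (fun hle ↦ hL.not_le_iff_disjoint.2 hLH (hle.trans inf_le_right)) h

lemma projectFrom_sup [IsModularLattice α] [OrderTop α] (hLH : Codisjoint L H) :
    projectFrom L H X ⊔ L = X ⊔ L := by
  by_cases h : L ≤ X
  · rw [projectFrom_of_le h]
  · rw [projectFrom_of_not_le h, inf_sup_assoc_of_le H le_sup_right, sup_comm H, hLH.eq_top,
      inf_top_eq]

end ProjectFrom

section Dimension

variable {K V : Type*} [DivisionRing K] [AddCommGroup V] [Module K V] [FiniteDimensional K V]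
  {L H X Y : Submodule K V}

lemma finrank_sup_eq_add_of_disjoint (h : Disjoint X Y) :
    finrank K ↥(X ⊔ Y) = finrank K X + finrank K Y := by
  rw [← finrank_sup_add_finrank_inf_eq, h.eq_bot, finrank_bot, add_zero]

lemma finrank_projectFrom (hL : IsAtom L) (hLH : IsCompl L H) :
    finrank K ↥(projectFrom L H X) = finrank K X := by
  by_cases h : L ≤ X
  · rw [projectFrom_of_le h]
  have hXL : Disjoint X L := (hL.not_le_iff_disjoint.1 h).symm
  have hpL : Disjoint (projectFrom L H X) L :=
    (hL.not_le_iff_disjoint.1 ((le_projectFrom_iff hL hLH.disjoint).not.2 h)).symm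
  apply Nat.add_right_cancel (m := finrank K L)
  rw [← finrank_sup_eq_add_of_disjoint hpL, projectFrom_sup hLH.codisjoint,
    finrank_sup_eq_add_of_disjoint hXL]

lemma finrank_le_finrank_inf_add_of_le_sup (h : X ≤ Y ⊔ L) :
    finrank K X ≤ finrank K ↥(X ⊓ Y) + finrank K L := by
  have hsup : finrank K ↥(X ⊔ Y) ≤ finrank K Y + finrank K L :=
    (finrank_mono (sup_le h le_sup_left)).trans (finrank_add_le_finrank_add_finrank Y L)
  have hadd := finrank_sup_add_finrank_inf_eq X Y
  omega

end Dimension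

section Adjacency

variable {F : Type*} [Field F] {n k : ℕ} {L H X Y Z : Submodule F (Fin n → F)}

lemma adjSub_of_le (hX : X ∈ grass F n k) (hY : Y ∈ grass F n k) (hne : X ≠ Y)
    (hZ : finrank F Z = k - 1) (hZX : Z ≤ X) (hZY : Z ≤ Y) : adjSub F n k X Y := by
  have hlt : finrank F ↥(X ⊓ Y) < finrank F X :=
    finrank_lt_finrank_of_lt <| inf_lt_left.2 fun hXY ↦
      hne (eq_of_le_of_finrank_eq hXY (hX.trans hY.symm))
  have hle : finrank F Z ≤ finrank F ↥(X ⊓ Y) := finrank_mono (le_inf hZX hZY)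
  rw [hX] at hlt
  rw [hZ] at hle
  exact le_antisymm (Nat.le_sub_one_of_lt hlt) hle

lemma ne_of_adjSub (hk : 0 < k) (hX : X ∈ grass F n k) (hadj : adjSub F n k X Y) : X ≠ Y := by
  rintro rfl
  rw [adjSub, inf_idem, hX] at hadj
  omega

lemma projectFrom_mem_grass (hL : IsAtom L) (hLH : IsCompl L H) (hX : X ∈ grass F n k) :
    projectFrom L H X ∈ grass F n k :=
  (finrank_projectFrom hL hLH).trans hX

lemma adjSub_projectFrom (hL : IsAtom L) (hLH : IsCompl L H) (hX : X ∈ grass F n k)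
    (hY : Y ∈ grass F n k) (hne : projectFrom L H X ≠ projectFrom L H Y)
    (hadj : adjSub F n k X Y) : adjSub F n k (projectFrom L H X) (projectFrom L H Y) :=
  adjSub_of_le (projectFrom_mem_grass hL hLH hX) (projectFrom_mem_grass hL hLH hY) hne
    ((finrank_projectFrom hL hLH).trans hadj) (projectFrom_mono inf_le_left)
    (projectFrom_mono inf_le_right)

lemma adjSub_projectFrom_of_le_sup (hL : IsAtom L) (hLH : IsCompl L H) (hX : X ∈ grass F n k)
    (hY : Y ∈ grass F n k) (hne : projectFrom L H X ≠ projectFrom L H Y)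
    (hZ : Z ∈ grass F n (k - 1)) (hLZ : ¬ L ≤ Z) (hZX : Z ≤ X) (hZY : Z ≤ Y ⊔ L) :
    adjSub F n k (projectFrom L H X) (projectFrom L H Y) :=
  adjSub_of_le (projectFrom_mem_grass hL hLH hX) (projectFrom_mem_grass hL hLH hY) hne
    (projectFrom_mem_grass hL hLH hZ) (projectFrom_mono hZX)
    (projectFrom_le_projectFrom_of_le_sup hLZ hZY)

end Adjacency

section NondegenerateCodes

variable {F : Type*} [Field F] {n : ℕ}

lemma inf_coordHyp_eq_span_singleton {X : Submodule F (Fin n → F)} (hX : X ∈ ndCodes F n 2)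
    {y : Fin n → F} (hyX : y ∈ X) (hy : y ≠ 0) {i : Fin n} (hyi : y i = 0) :
    X ⊓ coordHyp F n i = F ∙ y := by
  have hlt : finrank F ↥(X ⊓ coordHyp F n i) < 2 :=
    (finrank_lt_finrank_of_lt (inf_lt_left.2 (hX.2 i))).trans_eq hX.1
  have hle : F ∙ y ≤ X ⊓ coordHyp F n i := (span_singleton_le_iff_mem _ _).2 ⟨hyX, hyi⟩
  refine (eq_of_le_of_finrank_le hle ?_).symm
  rw [finrank_span_singleton hy]
  exact Nat.le_of_lt_succ hlt

lemma span_pair_mem_ndCodes {x y : Fin n → F} (hxy : LinearIndependent F ![x, y])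
    (hsupp : ∀ i, x i ≠ 0 ∨ y i ≠ 0) : span F {x, y} ∈ ndCodes F n 2 := by
  refine ⟨?_, fun i hle ↦ ?_⟩
  · rw [← Matrix.range_cons_cons_empty x y ![], finrank_span_eq_card hxy, Fintype.card_fin]
  · have hx : x i = 0 := hle (subset_span (by simp))
    have hy : y i = 0 := hle (subset_span (by simp))
    exact (hsupp i).elim (· hx) (· hy)

section FiberCompl

variable {ι κ : Type*} [DecidableEq κ]

variable (F) in
/-- The indicator vector of the complement of the fibre of `π` over `j`. If `π` is the identity,
this is the all-one vector minus the `j`-th unit vector. A general `π` repeats coordinates, which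
transports codes from length `|κ|` to length `|ι|`. -/
def fiberCompl (π : ι → κ) (j : κ) (i : ι) : F := if π i = j then 0 else 1

lemma linearIndependent_fiberCompl [Fintype κ] {π : ι → κ} (hπ : Function.Surjective π)
    (hκ : (Fintype.card κ : F) ≠ 1) : LinearIndependent F (fiberCompl F π) := by
  rw [Fintype.linearIndependent_iff]
  intro c hc
  have hconst (j : κ) : c j = ∑ k, c k := by
    obtain ⟨i, rfl⟩ := hπ j
    have hterm (k : κ) : c k * fiberCompl F π k i = c k - if π i = k then c k else 0 := by
      rw [fiberCompl]
      split_ifs <;> simp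
    have hi : ∑ k, c k * fiberCompl F π k i = 0 := by
      simpa only [Finset.sum_apply, Pi.smul_apply, smul_eq_mul, Pi.zero_apply] using congrFun hc i
    simp only [hterm, Finset.sum_sub_distrib, Finset.sum_ite_eq, Finset.mem_univ, if_true] at hi
    exact (sub_eq_zero.1 hi).symm
  have hsum : ∑ k, c k = Fintype.card κ * ∑ k, c k := by
    conv_lhs => rw [Finset.sum_congr rfl fun j _ ↦ hconst j]
    simp
  have hzero : ∑ k, c k = 0 := by
    by_contra h
    exact hκ (mul_right_cancel₀ h (hsum.symm.trans (one_mul _).symm))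
  exact fun j ↦ (hconst j).trans hzero

lemma span_fiberCompl_pair_mem_ndCodes {π : Fin n → κ}
    (hli : LinearIndependent F (fiberCompl F π)) {j k : κ} (hjk : j ≠ k) :
    span F {fiberCompl F π j, fiberCompl F π k} ∈ ndCodes F n 2 := by
  refine span_pair_mem_ndCodes ?_ fun i ↦ ?_
  · have hcomp : fiberCompl F π ∘ ![j, k] = ![fiberCompl F π j, fiberCompl F π k] := by
      ext a : 1
      fin_cases a <;> rfl
    exact hcomp ▸ hli.comp _ (injective_pair_iff_ne.2 hjk)
  · by_cases hi : π i = j <;> simp [fiberCompl, hi, hjk]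

end FiberCompl

variable (F n) in
/-- The repetition code: the line spanned by the all-one vector. -/
def repetitionCode : Submodule F (Fin n → F) := F ∙ 1

lemma isAtom_repetitionCode [NeZero n] : IsAtom (repetitionCode F n) :=
  nonzero_span_atom 1 one_ne_zero

lemma repetitionCode_le_iff {X : Submodule F (Fin n → F)} : repetitionCode F n ≤ X ↔ 1 ∈ X :=
  span_singleton_le_iff_mem 1 X

lemma isCompl_repetitionCode_coordHyp (i : Fin n) :
    IsCompl (repetitionCode F n) (coordHyp F n i) := by
  constructor
  · refine (disjoint_span_singleton_of_notMem fun h ↦ ?_).symm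
    exact one_ne_zero (α := F) h
  · exact codisjoint_iff.2 (LinearMap.span_singleton_sup_ker_eq_top _ one_ne_zero)

end NondegenerateCodes

section Binary

variable {n : ℕ}

lemma zmod_two_eq_one_of_ne_zero {a : ZMod 2} (ha : a ≠ 0) : a = 1 := by
  decide +revert

lemma le_of_le_sup_repetitionCode [NeZero n] {X Y : Submodule (ZMod 2) (Fin n → ZMod 2)}
    (hX : X ∈ ndCodes (ZMod 2) n 2) (hY : Y ∈ ndCodes (ZMod 2) n 2) (h1X : 1 ∉ X)
    (hXY : X ≤ Y ⊔ repetitionCode (ZMod 2) n) : X ≤ Y := by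
  have hinf : X ⊓ Y ≠ ⊥ := fun hbot ↦ by
    have hle := finrank_le_finrank_inf_add_of_le_sup hXY
    rw [hbot, finrank_bot, hX.1, isAtom_iff_finrank_eq_one.1 isAtom_repetitionCode] at hle
    exact absurd hle (by decide)
  obtain ⟨y, ⟨hyX, hyY⟩, hy⟩ := exists_mem_ne_zero_of_ne_bot hinf
  obtain ⟨i, hyi⟩ : ∃ i, y i = 0 := by
    by_contra! hne
    have hy1 : y = 1 := funext fun i ↦ zmod_two_eq_one_of_ne_zero (hne i)
    exact h1X (hy1 ▸ hyX)
  have hXi := inf_coordHyp_eq_span_singleton hX hyX hy hyi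
  have hYi := inf_coordHyp_eq_span_singleton hY hyY hy hyi
  intro x hx
  by_contra hxY
  obtain ⟨w, hw, _, hc, rfl⟩ := mem_sup.1 (hXY hx)
  obtain ⟨c, rfl⟩ := mem_span_singleton.1 hc
  have hc : c ≠ 0 := by
    rintro rfl
    exact hxY (by simpa using hw)
  have hxi : w i + c ≠ 0 := fun h ↦ by
    have hxy : w + c • 1 ∈ ZMod 2 ∙ y := hXi ▸ ⟨hx, by simpa [coordHyp] using h⟩
    exact hxY ((span_singleton_le_iff_mem _ _).2 hyY hxy)
  have hwi : w i ≠ 0 := fun h ↦ by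
    have hwy : w ∈ ZMod 2 ∙ y := hYi ▸ ⟨hw, h⟩
    have hwX : w ∈ X := (span_singleton_le_iff_mem _ _).2 hyX hwy
    exact h1X ((X.smul_mem_iff hc).1 ((X.add_mem_iff_right hwX).1 hx))
  apply hxi
  rw [zmod_two_eq_one_of_ne_zero hwi, zmod_two_eq_one_of_ne_zero hc, CharTwo.add_self_eq_zero]

lemma injOn_projectFrom_repetitionCode (i : Fin n) :
    Set.InjOn (projectFrom (repetitionCode (ZMod 2) n) (coordHyp (ZMod 2) n i))
      (ndCodes (ZMod 2) n 2) := by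
  intro X hX Y hY h
  have : NeZero n := i.neZero
  have hLH := isCompl_repetitionCode_coordHyp (F := ZMod 2) i
  have hiff : repetitionCode (ZMod 2) n ≤ X ↔ repetitionCode (ZMod 2) n ≤ Y := by
    rw [← le_projectFrom_iff isAtom_repetitionCode hLH.disjoint, h,
      le_projectFrom_iff isAtom_repetitionCode hLH.disjoint]
  by_cases h1X : repetitionCode (ZMod 2) n ≤ X
  · rwa [projectFrom_of_le h1X, projectFrom_of_le (hiff.1 h1X)] at h
  · have hsup : X ⊔ repetitionCode (ZMod 2) n = Y ⊔ repetitionCode (ZMod 2) n := by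
      rw [← projectFrom_sup hLH.codisjoint, h, projectFrom_sup hLH.codisjoint]
    have hle : X ≤ Y := le_of_le_sup_repetitionCode hX hY (mt repetitionCode_le_iff.2 h1X)
      (le_sup_left.trans_eq hsup)
    exact eq_of_le_of_finrank_eq hle (hX.1.trans hY.1.symm)

lemma exists_disjoint_ndCodes_add_one_mem (hn : 4 ≤ n) :
    ∃ X ∈ ndCodes (ZMod 2) n 2, ∃ Y ∈ ndCodes (ZMod 2) n 2, Disjoint X Y ∧
      ∃ z ∈ X, z ≠ 0 ∧ z ≠ 1 ∧ z + 1 ∈ Y := by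
  obtain ⟨π, hπ⟩ : ∃ π : Fin n → Fin 4, Function.Surjective π :=
    ⟨_, Function.invFun_surjective (Fin.castLEEmb hn).injective⟩
  have hli : LinearIndependent (ZMod 2) (fiberCompl (ZMod 2) π) :=
    linearIndependent_fiberCompl hπ (by decide)
  refine ⟨_, span_fiberCompl_pair_mem_ndCodes hli (j := 0) (k := 1) (by decide),
    _, span_fiberCompl_pair_mem_ndCodes hli (j := 2) (k := 3) (by decide), ?_,
    fiberCompl (ZMod 2) π 0 + fiberCompl (ZMod 2) π 1, ?_, ?_, ?_, ?_⟩
  · simpa only [Set.image_pair] using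
      hli.disjoint_span_image (s := {0, 1}) (t := {2, 3}) (by simp)
  · exact add_mem (subset_span (by simp)) (subset_span (by simp))
  · obtain ⟨i, hi⟩ := hπ 0
    exact fun h ↦ by simpa [fiberCompl, hi] using congrFun h i
  · obtain ⟨i, hi⟩ := hπ 2
    exact fun h ↦ by simpa [fiberCompl, hi, CharTwo.add_self_eq_zero] using congrFun h i
  · have hsum : fiberCompl (ZMod 2) π 0 + fiberCompl (ZMod 2) π 1 + 1 =
        fiberCompl (ZMod 2) π 2 + fiberCompl (ZMod 2) π 3 := by
      ext i
      simp only [Pi.add_apply, Pi.one_apply, fiberCompl]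
      generalize π i = j
      decide +revert
    rw [hsum]
    exact add_mem (subset_span (by simp)) (subset_span (by simp))

lemma exists_not_adjSub_adjSub_projectFrom (hn : 4 ≤ n) (i : Fin n) :
    ∃ X ∈ ndCodes (ZMod 2) n 2, ∃ Y ∈ ndCodes (ZMod 2) n 2, ¬ adjSub (ZMod 2) n 2 X Y ∧
      adjSub (ZMod 2) n 2 (projectFrom (repetitionCode (ZMod 2) n) (coordHyp (ZMod 2) n i) X)
        (projectFrom (repetitionCode (ZMod 2) n) (coordHyp (ZMod 2) n i) Y) := by
  have : NeZero n := i.neZero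
  obtain ⟨X, hX, Y, hY, hdisj, z, hzX, hz0, hz1, hzY⟩ := exists_disjoint_ndCodes_add_one_mem hn
  refine ⟨X, hX, Y, hY, fun hadj ↦ ?_, ?_⟩
  · rw [adjSub, hdisj.eq_bot, finrank_bot] at hadj
    exact absurd hadj (by decide)
  have hne : X ≠ Y := by
    rintro rfl
    exact hz0 (disjoint_def.1 hdisj z hzX hzX)
  refine adjSub_projectFrom_of_le_sup isAtom_repetitionCode (isCompl_repetitionCode_coordHyp i)
    hX.1 hY.1 ((injOn_projectFrom_repetitionCode i).ne hX hY hne)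
    (Z := ZMod 2 ∙ z) (finrank_span_singleton hz0) ?_ ((span_singleton_le_iff_mem _ _).2 hzX) ?_
  · rw [repetitionCode_le_iff, mem_span_singleton]
    rintro ⟨c, hc⟩
    obtain rfl | hc0 := eq_or_ne c 0
    · exact zero_ne_one ((zero_smul _ z).symm.trans hc)
    · exact hz1 (by simpa [zmod_two_eq_one_of_ne_zero hc0] using hc)
  · rw [span_singleton_le_iff_mem]
    have hz : z = (z + 1) + 1 := by rw [add_assoc, CharTwo.add_self_eq_zero, add_zero]
    rw [hz]
    exact add_mem_sup hzY (mem_span_singleton_self 1)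

end Binary

/-- For `V = F_2^n`, `n ≥ 4`, there is an injective adjacency-preserving
map `h : C(n,2)_2 → G_2(V)` and non-adjacent `X, Y ∈ C(n,2)_2` with `h X, h Y` adjacent;
consequently no automorphism of `Γ_2(V)` restricts to `h` on `C(n,2)_2`. -/
theorem stmt_1 (n : ℕ) (hn : 4 ≤ n) :
    ∃ h : Submodule (ZMod 2) (Fin n → ZMod 2) → Submodule (ZMod 2) (Fin n → ZMod 2),
      (∀ X ∈ ndCodes (ZMod 2) n 2, h X ∈ grass (ZMod 2) n 2) ∧
      Set.InjOn h (ndCodes (ZMod 2) n 2) ∧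
      (∀ X ∈ ndCodes (ZMod 2) n 2, ∀ Y ∈ ndCodes (ZMod 2) n 2,
        adjSub (ZMod 2) n 2 X Y → adjSub (ZMod 2) n 2 (h X) (h Y)) ∧
      (∃ X ∈ ndCodes (ZMod 2) n 2, ∃ Y ∈ ndCodes (ZMod 2) n 2,
        ¬ adjSub (ZMod 2) n 2 X Y ∧ adjSub (ZMod 2) n 2 (h X) (h Y)) ∧
      (∀ g : Submodule (ZMod 2) (Fin n → ZMod 2) → Submodule (ZMod 2) (Fin n → ZMod 2),
        Set.BijOn g (grass (ZMod 2) n 2) (grass (ZMod 2) n 2) →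
        (∀ X ∈ grass (ZMod 2) n 2, ∀ Y ∈ grass (ZMod 2) n 2,
          (adjSub (ZMod 2) n 2 (g X) (g Y) ↔ adjSub (ZMod 2) n 2 X Y)) →
        ¬ Set.EqOn g h (ndCodes (ZMod 2) n 2)) := by
  have : NeZero n := ⟨by omega⟩
  have hL := isAtom_repetitionCode (F := ZMod 2) (n := n)
  have hLH := isCompl_repetitionCode_coordHyp (F := ZMod 2) (0 : Fin n)
  have hinj := injOn_projectFrom_repetitionCode (0 : Fin n)
  have hwit := exists_not_adjSub_adjSub_projectFrom hn 0
  refine ⟨projectFrom (repetitionCode (ZMod 2) n) (coordHyp (ZMod 2) n 0),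
    fun X hX ↦ projectFrom_mem_grass hL hLH hX.1, hinj, fun X hX Y hY hadj ↦ ?_, hwit, ?_⟩
  · have hne : X ≠ Y := ne_of_adjSub two_pos hX.1 hadj
    exact adjSub_projectFrom hL hLH hX.1 hY.1 (hinj.ne hX hY hne) hadj
  · intro g _ hg hgh
    obtain ⟨X, hX, Y, hY, hXY, hadj⟩ := hwit
    rw [← hgh hX, ← hgh hY, hg X hX.1 Y hY.1] at hadj
    exact hXY hadj
end

section
/- Let q ≥ 3 be a prime power and 1 < k < n−1. Then for every (k−1)-dimensional subspace X ⊂ V, the set S^c(X) is a maximal clique of the graph Γ(n,k)_q. -/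
/-!
If a code `Z` is adjacent to `Y ⊃ X` and does not contain `X`, then the distinct hyperplanes `X`
and `Y ∩ Z` of `Y` span `Y`, so `Y ⊆ X + Z`, and `X + Z = Y + Z` has dimension `k + 1 < n`.
Thus it suffices that the members of `S^c(X)` do not all lie in a proper subspace `W ⊇ X`.
Since `F` has at least three elements, every vector is a sum of two vectors without zero
coordinates; hence some such vector `v` lies outside `W`, and `⟨v⟩ + X` is the required code.
-/

open Module Submodule

theorem le_sup_of_inf_covBy {α : Type*} [Lattice α] {a b c : α} (h : b ⊓ c ⋖ b) (hab : a ≤ b)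
    (hac : ¬ a ≤ c) : b ≤ a ⊔ c := by
  have h_lt : b ⊓ c < b ⊓ c ⊔ a :=
    left_lt_sup.2 fun ha => hac (ha.trans inf_le_right)
  calc
    b = b ⊓ c ⊔ a := ((h.eq_or_eq h_lt.le (sup_le inf_le_left hab)).resolve_left h_lt.ne').symm
    _ ≤ a ⊔ c := sup_le (inf_le_right.trans le_sup_right) le_sup_left

theorem covBy_iff_le_and_finrank_eq_add_one {K V : Type*} [DivisionRing K] [AddCommGroup V]
    [Module K V] [FiniteDimensional K V] {A B : Submodule K V} :
    A ⋖ B ↔ A ≤ B ∧ finrank K B = finrank K A + 1 := by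
  constructor
  · intro h
    obtain ⟨v, hvB, hvA⟩ := SetLike.exists_of_lt h.lt
    have h_between : A ⋖ span K {v} ⊔ A := covBy_span_singleton_sup hvA
    have h_le : span K {v} ⊔ A ≤ B := sup_le ((span_singleton_le_iff_mem v B).2 hvB) h.le
    have hB : span K {v} ⊔ A = B :=
      (h.eq_or_eq h_between.le h_le).resolve_left h_between.ne'
    refine ⟨h.le, ?_⟩
    rw [← hB, sup_comm]
    exact finrank_sup_span_singleton hvA
  · rintro ⟨hAB, h_finrank⟩
    refine ⟨lt_of_le_of_finrank_lt_finrank hAB (by omega), fun C hAC hCB => ?_⟩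
    have := finrank_lt_finrank_of_lt hAC
    have := finrank_lt_finrank_of_lt hCB
    omega

theorem span_forall_ne_zero_eq_top (R : Type*) {ι M : Type*} [Semiring R] [AddCommGroup M]
    [Module R M] (hM : 3 ≤ ENat.card M) :
    span R {v : ι → M | ∀ i, v i ≠ 0} = ⊤ := by
  refine eq_top_iff'.2 fun v => ?_
  choose a ha_zero ha_v using fun i => ENat.exists_ne_ne_of_three_le hM 0 (v i)
  rw [← add_sub_cancel a v]
  exact add_mem (subset_span ha_zero) (subset_span fun i => sub_ne_zero.2 (ha_v i).symm)

theorem exists_forall_ne_zero_and_notMem {R ι M : Type*} [Semiring R] [AddCommGroup M]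
    [Module R M] (hM : 3 ≤ ENat.card M) {W : Submodule R (ι → M)} (hW : W ≠ ⊤) :
    ∃ v : ι → M, (∀ i, v i ≠ 0) ∧ v ∉ W := by
  by_contra! h
  exact hW (top_unique ((span_forall_ne_zero_eq_top R hM).ge.trans (span_le.2 h)))

section Codes

variable {F : Type*} [Field F] {n k : ℕ} {X Y Z W : Submodule F (Fin n → F)}

theorem inf_covBy_left_iff_adjSub (hk : 0 < k) (hY : finrank F Y = k) :
    Y ⊓ Z ⋖ Y ↔ adjSub F n k Y Z := by
  rw [covBy_iff_le_and_finrank_eq_add_one, and_iff_right inf_le_left, adjSub]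
  omega

theorem mem_starOf_iff_covBy (hX : finrank F X + 1 = k) : Y ∈ starOf F n k X ↔ X ⋖ Y := by
  rw [covBy_iff_le_and_finrank_eq_add_one, hX]
  exact and_comm

theorem pairwise_adjSub_starOf (hX : finrank F X + 1 = k) :
    (starOf F n k X).Pairwise (adjSub F n k) := by
  intro Y hY Z hZ hYZ
  have hXY : X ⋖ Y := (mem_starOf_iff_covBy hX).1 hY
  have hXZ : X ⋖ Z := (mem_starOf_iff_covBy hX).1 hZ
  have h_inf : Y ⊓ Z = X := hXY.wcovBy.inf_eq hXZ.wcovBy hYZ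
  exact (inf_covBy_left_iff_adjSub (by omega) hY.1).1 (h_inf ▸ hXY)

theorem isClique_scOf (hX : finrank F X + 1 = k) : isClique F n k (scOf F n k X) :=
  ⟨Set.inter_subset_right, (pairwise_adjSub_starOf hX).mono Set.inter_subset_left⟩

theorem exists_mem_scOf_not_le (hF : 3 ≤ ENat.card F) (hX : finrank F X + 1 = k) (hXW : X ≤ W)
    (hW : finrank F W < n) : ∃ Y ∈ scOf F n k X, ¬ Y ≤ W := by
  have hW_top : W < ⊤ := lt_top_of_finrank_lt_finrank (by rwa [finrank_fin_fun])
  obtain ⟨v, hv, hvW⟩ := exists_forall_ne_zero_and_notMem hF hW_top.ne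
  have hvY : v ∈ span F {v} ⊔ X := mem_sup_left (mem_span_singleton_self v)
  have h_star : span F {v} ⊔ X ∈ starOf F n k X :=
    (mem_starOf_iff_covBy hX).2 (covBy_span_singleton_sup fun hvX => hvW (hXW hvX))
  exact ⟨span F {v} ⊔ X, ⟨h_star, h_star.1, fun i hi => hv i (hi hvY)⟩,
    fun h => hvW (h hvY)⟩

theorem finrank_sup_of_adjSub (hk : 0 < k) (hY : finrank F Y = k) (hZ : finrank F Z = k)
    (hYZ : adjSub F n k Y Z) : finrank F ↥(Y ⊔ Z) = k + 1 := by
  have h_sum := finrank_sup_add_finrank_inf_eq Y Z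
  rw [hY, hZ, hYZ] at h_sum
  omega

theorem le_of_forall_mem_scOf_adjSub (hF : 3 ≤ ENat.card F) (hkn : k + 1 < n)
    (hX : finrank F X + 1 = k) (hZ : finrank F Z = k)
    (h_adj : ∀ Y ∈ scOf F n k X, Y ≠ Z → adjSub F n k Y Z) : X ≤ Z := by
  by_contra hXZ
  have hk : 0 < k := by omega
  have adj : ∀ Y ∈ scOf F n k X, adjSub F n k Y Z := fun Y hY =>
    h_adj Y hY fun hYZ => hXZ (hYZ ▸ hY.1.2)
  have le_sup : ∀ Y ∈ scOf F n k X, Y ≤ X ⊔ Z := fun Y hY =>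
    le_sup_of_inf_covBy ((inf_covBy_left_iff_adjSub hk hY.1.1).2 (adj Y hY)) hY.1.2 hXZ
  obtain ⟨Y₀, hY₀, -⟩ := exists_mem_scOf_not_le hF hX le_rfl (by omega)
  have h_sup : X ⊔ Z = Y₀ ⊔ Z :=
    le_antisymm (sup_le_sup_right hY₀.1.2 Z) (sup_le (le_sup Y₀ hY₀) le_sup_right)
  have h_finrank : finrank F ↥(X ⊔ Z) = k + 1 :=
    h_sup ▸ finrank_sup_of_adjSub hk hY₀.1.1 hZ (adj Y₀ hY₀)
  obtain ⟨Y, hY, hY_not_le⟩ := exists_mem_scOf_not_le hF hX le_sup_left (h_finrank.trans_lt hkn)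
  exact hY_not_le (le_sup Y hY)

theorem stmt_2_general (hF : 3 ≤ ENat.card F) (hkn : k + 1 < n) (hX : finrank F X + 1 = k) :
    isMaxClique F n k (scOf F n k X) := by
  refine ⟨isClique_scOf hX, fun T hT hST => Set.Subset.antisymm (fun Z hZ => ?_) hST⟩
  have hZ_code : Z ∈ ndCodes F n k := hT.1 hZ
  have hXZ : X ≤ Z := le_of_forall_mem_scOf_adjSub hF hkn hX hZ_code.1
    fun Y hY hYZ => hT.2 (hST hY) hZ hYZ
  exact ⟨⟨hZ_code.1, hXZ⟩, hZ_code⟩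

end Codes

/-- For `q ≥ 3` and `1 < k < n-1`, the set `S^c(X)` is a maximal clique
of `Γ(n,k)_q` for every `(k-1)`-dimensional subspace `X ⊂ V`. -/
theorem stmt_2 (q n k : ℕ) (F : Type*) [Field F] [Fintype F]
    (hF : Fintype.card F = q) (hq : 3 ≤ q) (hk : 1 < k) (hkn : k < n - 1)
    (X : Submodule F (Fin n → F)) (hX : Module.finrank F ↥X = k - 1) :
    isMaxClique F n k (scOf F n k X) := by
  have hF_card : 3 ≤ ENat.card F := by
    rw [ENat.card_eq_coe_fintype_card, hF]
    exact_mod_cast hq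
  exact stmt_2_general hF_card (by omega) (by omega)
end
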